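/- arXiv:2009.01097 — 2 statements merged into one kernel-verified Lean document; each statement's English description precedes it below -/
import Mathlib

section
/- Let φ : A → B and ψ : B → A be homomorphisms of commutative noetherian rings with ψ ∘ φ = id_A (a ring retraction). Assume that (i) B is flat as an A-module via φ, (ii) the surjection ψ is a local complete intersection, (iii) A is a perfect B-module via ψ, and (iv) A is nonzero and Spec(A) is connected. Then there exists an integer n ≥ 0 such that Ext^i_B(A, B) = 0 for all i ≠ n, and Ext^n_B(A, B) is an invertible A-module. -/
universe u

open CategoryTheory

/-- A module `M` over `R` is *perfect of length at most `n`*: this encodes the existence of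
a resolution `0 → P_n → ⋯ → P_0 → M → 0` by finitely generated projective `R`-modules,
via iterated kernels of surjections from finitely generated projective modules. -/
def Module.IsPerfectLE (R : Type u) [CommRing R] :
    ∀ (_n : ℕ) (M : Type u) [AddCommGroup M] [Module R M], Prop
  | 0, M, _, _ => Module.Finite R M ∧ Module.Projective R M
  | n + 1, M, _, _ => ∃ (P : Type u) (_ : AddCommGroup P) (_ : Module R P)
      (f : P →ₗ[R] M), Module.Finite R P ∧ Module.Projective R P ∧
        Function.Surjective f ∧ Module.IsPerfectLE R n (LinearMap.ker f)

/-- A module is *perfect* if it admits a finite length resolution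
`0 → P_n → ⋯ → P_0 → M → 0` by finitely generated projective modules. -/
def Module.IsPerfect (R : Type u) [CommRing R] (M : Type u) [AddCommGroup M] [Module R M] :
    Prop :=
  ∃ n : ℕ, Module.IsPerfectLE R n M

/-- An `R`-module `L` is *invertible* if there is an `R`-module `L'` with `L ⊗[R] L' ≅ R`. -/
def Module.IsInvertible (R : Type u) [CommRing R] (L : Type u) [AddCommGroup L] [Module R L] :
    Prop :=
  ∃ (L' : Type u) (_ : AddCommGroup L') (_ : Module R L'),
    Nonempty ((TensorProduct R L L') ≃ₗ[R] R)

/-- A surjective ring homomorphism `ψ : B →+* A` is a *local complete intersection* if for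
every prime `q` of `A`, with `p = ψ⁻¹(q)`, the kernel of the induced local homomorphism
`B_p →+* A_q` is generated by a `B_p`-regular sequence. -/
def RingHom.IsLocalCompleteIntersection {B A : Type u} [CommRing B] [CommRing A]
    (ψ : B →+* A) : Prop :=
  ∀ (q : Ideal A) (hq : q.IsPrime),
    haveI := hq
    haveI : (q.comap ψ).IsPrime := hq.comap ψ
    ∃ rs : List (Localization.AtPrime (q.comap ψ)),
      RingTheory.Sequence.IsRegular (Localization.AtPrime (q.comap ψ)) rs ∧
      RingHom.ker (Localization.localRingHom (q.comap ψ) q ψ rfl) = Ideal.ofList rs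

section
namespace VdB

theorem extMk_eq_zero_iff_zero {C : Type*} [Category* C] [Abelian C] [HasExt C]
    {X Y : C} (R : ProjectiveResolution X) (f : R.complex.X 0 ⟶ Y) 
    (hf : R.complex.d 1 0 ≫ f = 0) : R.extMk f 1 rfl hf = 0 ↔ f = 0 := by
  constructor
  · intro h
    simp only [← R.extEquivCohomologyClass.apply_eq_iff_eq,
      ProjectiveResolution.extEquivCohomologyClass_extMk, ProjectiveResolution.extEquivCohomologyClass_zero,
      CochainComplex.HomComplex.CohomologyClass.mk_eq_zero_iff] at h
    rw [CochainComplex.HomComplex.Cocycle.toSingleMk_mem_coboundaries_iff _ _ _ _ _ (1) (by simp)] at h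
    obtain ⟨g, hg⟩ := h
    have hz : Limits.IsZero (R.cochainComplex.X 1) :=
      CochainComplex.isZero_of_isStrictlyLE _ 0 _
    rw [hz.eq_of_src g 0, Limits.comp_zero] at hg
    rw [← cancel_epi (R.cochainComplexXIso (-(0 : ℕ)) 0 rfl).hom, ← hg, Limits.comp_zero]
  · rintro rfl
    simp

noncomputable def homologyEquivOfCycles {R : Type u} [CommRing R] (S : ShortComplex (ModuleCat.{u} R))
    {T : Type u} [AddCommGroup T] [Module R T] (Φ : LinearMap.ker S.g.hom →ₗ[R] T)
    (hs : Function.Surjective Φ) (hk : ∀ x, Φ x = 0 ↔ ∃ y, S.f.hom y = x.1) :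
    S.homology ≃ₗ[R] T :=
  S.moduleCatHomologyIso.toLinearEquiv ≪≫ₗ 
    (Submodule.quotEquivOfEq (LinearMap.range S.moduleCatToCycles) (LinearMap.ker Φ) (by
      ext x
      rw [LinearMap.mem_ker, hk, LinearMap.mem_range]
      refine exists_congr fun y => ?_
      rw [Subtype.ext_iff]; rfl)) ≪≫ₗ Φ.quotKerEquivOfSurjective hs

variable {B : Type u} [CommRing B]

theorem smul_extMk {X Y : ModuleCat.{u} B} (P : ProjectiveResolution X) {n : ℕ}
    (f : P.complex.X n ⟶ Y) (m : ℕ) (hm : n + 1 = m) (hf : P.complex.d m n ≫ f = 0) (r : B) :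
    r • P.extMk f m hm hf = P.extMk (r • f) m hm (by rw [Linear.comp_smul, hf, smul_zero]) := by
  rw [Abelian.Ext.smul_eq_comp_mk₀, P.extMk_comp_mk₀]
  congr 1

theorem extEquiv (X Y : ModuleCat.{u} B) (n : ℕ) :
    Nonempty ((((Ext B (ModuleCat.{u} B) n).obj (Opposite.op X)).obj Y) ≃ₗ[B] Abelian.Ext X Y n) := by
  let P := ProjectiveResolution.of X
  let K := P.complex.linearYonedaObj B Y
  refine ⟨(P.isoExt n Y).toLinearEquiv ≪≫ₗ (K.homologyIsoSc' ((ComplexShape.up ℕ).prev n) n (n+1) rfl (by simp)).toLinearEquiv ≪≫ₗ ?_⟩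
  have hc : ∀ f : LinearMap.ker (K.sc' ((ComplexShape.up ℕ).prev n) n (n+1)).g.hom, P.complex.d (n+1) n ≫ f.1 = 0 := fun f => f.2
  let Φ : LinearMap.ker (K.sc' ((ComplexShape.up ℕ).prev n) n (n+1)).g.hom →ₗ[B] Abelian.Ext X Y n :=
    { toFun := fun f => P.extMk f.1 (n+1) rfl (hc f)
      map_add' := fun f g => (P.add_extMk _ _ _ _ (hc f) (hc g)).symm
      map_smul' := fun r f => (smul_extMk P _ _ _ (hc f) r).symm }
  refine homologyEquivOfCycles _ Φ ?_ ?_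
  · intro α
    obtain ⟨f, hf, h⟩ := P.extMk_surjective α (n+1) rfl
    exact ⟨⟨f, hf⟩, h⟩
  · intro x
    cases n with
    | zero =>
      refine (extMk_eq_zero_iff_zero P _ (hc x)).trans ⟨fun h => ⟨0, by rw [map_zero]; exact h.symm⟩, fun ⟨y, hy⟩ => ?_⟩
      rw [← hy]
      have : (K.sc' ((ComplexShape.up ℕ).prev 0) 0 (0+1)).f = 0 := K.shape _ _ (by simp)
      rw [this]; rfl
    | succ n =>
      have : (ComplexShape.up ℕ).prev (n+1) = n := by simp
      generalize (ComplexShape.up ℕ).prev (n+1) = p at *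
      subst this
      exact P.extMk_eq_zero_iff _ _ rfl (hc x) p rfl

end VdB
end

section
namespace VdB

theorem isLocalized_of_rightExact {B : Type*} [CommRing B] (S : Submonoid B)
    {X1 X2 X3 Y1 Y2 Y3 : Type*} [AddCommGroup X1] [AddCommGroup X2] [AddCommGroup X3]
    [AddCommGroup Y1] [AddCommGroup Y2] [AddCommGroup Y3] [Module B X1] [Module B X2] [Module B X3]
    [Module B Y1] [Module B Y2] [Module B Y3] (a1 : X1 →ₗ[B] X2) (a2 : X2 →ₗ[B] X3)
    (b1 : Y1 →ₗ[B] Y2) (b2 : Y2 →ₗ[B] Y3) (f1 : X1 →ₗ[B] Y1) (f2 : X2 →ₗ[B] Y2) (f3 : X3 →ₗ[B] Y3)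
    (h12 : ∀ x, f2 (a1 x) = b1 (f1 x)) (h23 : ∀ x, f3 (a2 x) = b2 (f2 x))
    (ha : Function.Exact a1 a2) (hb : Function.Exact b1 b2)
    (sa : Function.Surjective a2) (sb : Function.Surjective b2)
    [IsLocalizedModule S f1] [IsLocalizedModule S f2] : IsLocalizedModule S f3 := by
  have u1 := fun s : S => (Module.End.isUnit_iff _).mp (IsLocalizedModule.map_units f1 s)
  have u2 := fun s : S => (Module.End.isUnit_iff _).mp (IsLocalizedModule.map_units f2 s)
  have key : ∀ x, f3 x = 0 → ∃ c : S, c • x = 0 := by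
    intro x hx
    obtain ⟨x, rfl⟩ := sa x
    rw [h23] at hx
    obtain ⟨y1, hy1⟩ := (hb _).mp hx
    obtain ⟨⟨x1, s⟩, hs⟩ := IsLocalizedModule.surj S f1 y1
    have : f2 (s • x) = f2 (a1 x1) := by
      rw [h12, ← hs]
      change f2 ((s:B) • x) = b1 ((s:B) • y1)
      rw [map_smul, map_smul, hy1]
    obtain ⟨c, hc⟩ := IsLocalizedModule.exists_of_eq (S := S) this
    refine ⟨c * s, ?_⟩
    rw [mul_smul]
    simp only [Submonoid.smul_def] at hc ⊢
    rw [← map_smul, ← map_smul, hc, map_smul, ha.apply_apply_eq_zero, smul_zero]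
  constructor
  · intro s
    rw [Module.End.isUnit_iff]
    constructor
    · rw [injective_iff_map_eq_zero]
      intro y hy
      obtain ⟨y, rfl⟩ := sb y
      rw [Module.algebraMap_end_apply, ← map_smul] at hy
      obtain ⟨y1, hy1⟩ := (hb _).mp hy
      obtain ⟨y1, rfl⟩ := (u1 s).2 y1
      rw [Module.algebraMap_end_apply, map_smul] at hy1
      have h3 : b1 y1 = y := (u2 s).1 hy1
      rw [← h3, hb.apply_apply_eq_zero]
    · intro y
      obtain ⟨y, rfl⟩ := sb y
      obtain ⟨y, rfl⟩ := (u2 s).2 y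
      exact ⟨b2 y, by simp⟩
  · intro y
    obtain ⟨y, rfl⟩ := sb y
    obtain ⟨⟨x, s⟩, hs⟩ := IsLocalizedModule.surj S f2 y
    refine ⟨⟨a2 x, s⟩, ?_⟩
    simp only [Submonoid.smul_def] at hs ⊢
    rw [h23, ← hs, map_smul]
  · intro x x' h
    obtain ⟨c, hc⟩ := key (x - x') (by rw [map_sub, h, sub_self])
    exact ⟨c, by rwa [smul_sub, sub_eq_zero] at hc⟩

theorem isLocalized_hom {B : Type*} [CommRing B] (S : Submonoid B)
    {M N N' : Type*} [AddCommGroup M] [AddCommGroup N] [AddCommGroup N']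
    [Module B M] [Module B N] [Module B N'] [Module.FinitePresentation B M]
    (g : N →ₗ[B] N') [IsLocalizedModule S g] :
    IsLocalizedModule S (g.compRight B : (M →ₗ[B] N) →ₗ[B] (M →ₗ[B] N')) := by
  constructor
  · intro s
    rw [Module.End.isUnit_iff]
    have := (Module.End.isUnit_iff _).mp (IsLocalizedModule.map_units (S := S) (f := g) s)
    constructor
    · exact fun _ _ e ↦ LinearMap.ext fun m ↦ this.left (LinearMap.congr_fun e m)
    · intro h
      use ((IsLocalizedModule.map_units (S := S) (f := g) s).unit⁻¹).1 ∘ₗ h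
      ext x
      exact Module.End.isUnit_apply_inv_apply_of_isUnit
        (IsLocalizedModule.map_units (S := S) (f := g) s) (h x)
  · intro h
    obtain ⟨h', s, e⟩ := Module.FinitePresentation.exists_lift_of_isLocalizedModule S g h
    exact ⟨⟨h', s⟩, e.symm⟩
  · intro h₁ h₂ e
    exact Module.Finite.exists_smul_of_comp_eq_of_isLocalizedModule S g h₁ h₂ e

variable {B : Type u} [CommRing B]

theorem isLocalized_ext [IsNoetherianRing B] (S : Submonoid B) {N N' : ModuleCat.{u} B}
    (g : N ⟶ N') [IsLocalizedModule S g.hom] (n : ℕ) (M : ModuleCat.{u} B) [Module.Finite B M] :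
    IsLocalizedModule S ((Abelian.Ext.mk₀ g).postcompOfLinear B M (add_zero n)) := by
  induction n generalizing M with
  | zero =>
    have : Module.FinitePresentation B M := Module.finitePresentation_of_finite B M
    let e (N : ModuleCat.{u} B) : Abelian.Ext M N 0 ≃ₗ[B] (M →ₗ[B] N) :=
      Abelian.Ext.linearEquiv₀.trans ModuleCat.homLinearEquiv
    have h := isLocalized_hom S (M := M) g.hom
    have h2 : IsLocalizedModule S ((e N').symm.toLinearMap ∘ₗ (g.hom.compRight B : (M →ₗ[B] N) →ₗ[B] (M →ₗ[B] N')) ∘ₗ (e N).toLinearMap) := inferInstance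
    convert h2
    ext x
    obtain ⟨f, rfl⟩ := (e N).symm.surjective x
    have h3 : e N ((e N).symm f) = f := (e N).apply_symm_apply f
    rw [LinearMap.comp_apply, LinearMap.comp_apply, LinearEquiv.coe_coe, LinearEquiv.coe_coe, h3]
    have h4 : ∀ (N : ModuleCat.{u} B) (f : M →ₗ[B] N), (e N).symm f = Abelian.Ext.mk₀ (ModuleCat.ofHom f) :=
      fun _ _ => rfl
    rw [h4, h4]
    exact Abelian.Ext.mk₀_comp_mk₀ _ _
  | succ n ih =>
    obtain ⟨P, _, _, _, _, f, surjf⟩ := Module.exists_finite_presentation B M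
    let T := f.shortComplexKer
    have hT : T.ShortExact := LinearMap.shortExact_shortComplexKer surjf
    have : Module.Finite B T.X₂ := ‹_›
    have : Module.Finite B T.X₁ := inferInstanceAs (Module.Finite B (LinearMap.ker f))
    have : Projective T.X₂ := inferInstance
    have i1 := ih T.X₁
    have i2 := ih T.X₂
    refine isLocalized_of_rightExact S ((Abelian.Ext.mk₀ T.f).precompOfLinear B N (zero_add n)) (hT.extClass.precompOfLinear B N (add_comm 1 n))
      ((Abelian.Ext.mk₀ T.f).precompOfLinear B N' (zero_add n)) (hT.extClass.precompOfLinear B N' (add_comm 1 n))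
      ((Abelian.Ext.mk₀ g).postcompOfLinear B T.X₂ (add_zero n)) ((Abelian.Ext.mk₀ g).postcompOfLinear B T.X₁ (add_zero n)) _ ?_ ?_ ?_ ?_ ?_ ?_
    · intro x; simp
    · intro x; simp
    · exact ((ShortComplex.ab_exact_iff_function_exact _).1
        (Abelian.Ext.contravariant_sequence_exact₁' hT N n (n + 1) (add_comm 1 n)))
    · exact ((ShortComplex.ab_exact_iff_function_exact _).1
        (Abelian.Ext.contravariant_sequence_exact₁' hT N' n (n + 1) (add_comm 1 n)))
    · exact precomp_extClass_surjective_of_projective_X₂ N hT n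
    · exact precomp_extClass_surjective_of_projective_X₂ N' hT n

end VdB
end

section
namespace VdB
variable {B : Type u} [CommRing B]

theorem ext_one_of_split (S : Submonoid B) (N : ModuleCat.{u} B)
    (hN : ∀ s : S, IsUnit (algebraMap B (Module.End B N) s))
    (T : ShortComplex (ModuleCat.{u} B)) (hT : T.ShortExact) (hp : Projective T.X₂)
    (hM : HasProjectiveDimensionLT (T.X₃.localizedModule S) 1) :
      Subsingleton (Abelian.Ext T.X₃ N (0 + 1)) := by
    let F := ModuleCat.localizedModuleFunctor S
    have hTS : (T.map F).ShortExact := hT.map_of_exact F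
    have : Projective (T.map F).X₃ := projective_iff_hasProjectiveDimensionLT_one.mpr hM
    let sp := hTS.splittingOfProjective
    have hr : F.map T.f ≫ sp.r = 𝟙 _ := sp.f_r
    refine subsingleton_of_forall_eq 0 fun x => ?_
    obtain ⟨y, rfl⟩ := precomp_extClass_surjective_of_projective_X₂ N hT 0 x
    obtain ⟨h, rfl⟩ := (Abelian.Ext.mk₀_bijective _ _).2 y
    let r : (T.X₂.localizedModule S) →ₗ[Localization S] (T.X₁.localizedModule S) := sp.r.hom
    let l : (T.X₁.localizedModule S) →ₗ[B] N := IsLocalizedModule.lift S (T.X₁.localizedModuleMkLinearMap S) h.hom hN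
    let h' : T.X₂ ⟶ N := ModuleCat.ofHom (l ∘ₗ r.restrictScalars B ∘ₗ T.X₂.localizedModuleMkLinearMap S)
    have e : h = T.f ≫ h' := by
      ext k
      have e1 : (F.map T.f).hom (T.X₁.localizedModuleMkLinearMap S k) = T.X₂.localizedModuleMkLinearMap S (T.f k) :=
        IsLocalizedModule.map_apply S (T.X₁.localizedModuleMkLinearMap S) (T.X₂.localizedModuleMkLinearMap S) T.f.hom k
      have e2 : r ((F.map T.f).hom (T.X₁.localizedModuleMkLinearMap S k)) = T.X₁.localizedModuleMkLinearMap S k :=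
        ConcreteCategory.congr_hom hr (T.X₁.localizedModuleMkLinearMap S k)
      change h.hom k = l (r (T.X₂.localizedModuleMkLinearMap S (T.f k)))
      rw [← e1, e2]
      exact (IsLocalizedModule.lift_apply S (T.X₁.localizedModuleMkLinearMap S) h.hom hN k).symm
    change hT.extClass.comp (Abelian.Ext.mk₀ h) (add_comm 1 0) = 0
    rw [e, ← Abelian.Ext.mk₀_comp_mk₀]
    exact hT.extClass_comp_assoc _

theorem pd_X₁ (S : Submonoid B) (i : ℕ)
    (T : ShortComplex (ModuleCat.{u} B)) (hT : T.ShortExact) (hp : Projective T.X₂)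
    (hM : HasProjectiveDimensionLT (T.X₃.localizedModule S) (i + 2)) :
    HasProjectiveDimensionLT (T.X₁.localizedModule S) (i + 1) := by
    let F := ModuleCat.localizedModuleFunctor S
    have hTS : (T.map F).ShortExact := hT.map_of_exact F
    have : Module.Projective B T.X₂ := (IsProjective.iff_projective _).mpr inferInstance
    have p2 : Projective (T.X₂.localizedModule S) := by
      rw [← IsProjective.iff_projective]
      exact Module.projective_of_isLocalizedModule S (T.X₂.localizedModuleMkLinearMap S)
    exact (hTS.hasProjectiveDimensionLT_X₃_iff i p2).mp hM

theorem subsingleton_ext_of_pd (S : Submonoid B) (N : ModuleCat.{u} B)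
    (hN : ∀ s : S, IsUnit (algebraMap B (Module.End B N) s)) (i : ℕ) :
    ∀ (M : ModuleCat.{u} B), HasProjectiveDimensionLT (M.localizedModule S) (i + 1) →
      Subsingleton (Abelian.Ext M N (i + 1)) := by
  induction i with
  | zero =>
    intro M hM
    exact ext_one_of_split S N hN M.projectiveShortComplex M.shortExact_projectiveShortComplex inferInstance hM
  | succ i ih =>
    intro M hM
    have hT := M.shortExact_projectiveShortComplex
    have := ih _ (pd_X₁ S i _ hT inferInstance hM)
    exact (precomp_extClass_surjective_of_projective_X₂ N hT (i+1)).subsingleton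

end VdB
end

section
namespace VdB
variable {B : Type u} [CommRing B]

theorem smul_ext_eq_zero {M N : ModuleCat.{u} B} {i : ℕ} (x : B) (hx : ∀ m : M, x • m = 0)
    (e : Abelian.Ext M N i) : x • e = 0 := by
  have h : x • 𝟙 M = 0 := by
    ext m; exact hx m
  rw [← Abelian.Ext.mk₀_id_comp e, ← Abelian.Ext.smul_comp, ← Abelian.Ext.mk₀_smul, h]
  simp

open RingTheory.Sequence in
theorem rees (M : ModuleCat.{u} B) (xs : List B) : ∀ (N : ModuleCat.{u} B), IsWeaklyRegular N xs →
    (∀ x ∈ xs, ∀ m : M, x • m = 0) →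
    (∀ i < xs.length, Subsingleton (Abelian.Ext M N i)) ∧
    Nonempty (Abelian.Ext M N xs.length ≃ₗ[B]
      (M →ₗ[B] (N ⧸ (Ideal.ofList xs • ⊤ : Submodule B N)))) := by
  induction xs with
  | nil =>
    intro N _ _
    refine ⟨by simp, ⟨?_⟩⟩
    let e : Abelian.Ext M N 0 ≃ₗ[B] (M →ₗ[B] N) :=
      Abelian.Ext.linearEquiv₀.trans ModuleCat.homLinearEquiv
    refine e.trans (LinearEquiv.congrRight (Submodule.quotEquivOfEqBot _ ?_).symm)
    simp
  | cons x xs ih =>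
    intro N hN hx
    rw [isWeaklyRegular_cons_iff] at hN
    obtain ⟨h1, h2⟩ := hN
    have hx0 := hx x (by simp)
    obtain ⟨ih1, ⟨ih2⟩⟩ := ih (ModuleCat.of B (QuotSMulTop x N)) h2 (fun y hy => hx y (by simp [hy]))
    have hS := h1.smulShortComplex_shortExact
    let δ (i : ℕ) : Abelian.Ext M (ModuleCat.of B (QuotSMulTop x N)) i →ₗ[B] Abelian.Ext M N (i + 1) :=
      hS.extClass.postcompOfLinear B M rfl
    have hf : ∀ i (e : Abelian.Ext M N i), e.comp (Abelian.Ext.mk₀ (N.smulShortComplex x).f) (add_zero i) = 0 := by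
      intro i e
      exact (Abelian.Ext.smul_eq_comp_mk₀ e x).symm.trans (smul_ext_eq_zero x hx0 e)
    have sδ : ∀ i, Function.Surjective (δ i) := fun i e =>
      Abelian.Ext.covariant_sequence_exact₁ M hS e (hf _ e) rfl
    have key : ∀ i < xs.length + 1, Subsingleton (Abelian.Ext M N i) := by
      intro i hi
      cases i with
      | zero =>
        let e : Abelian.Ext M N 0 ≃ₗ[B] (M →ₗ[B] N) :=
          Abelian.Ext.linearEquiv₀.trans ModuleCat.homLinearEquiv
        have : Subsingleton (M →ₗ[B] N) := by
          refine subsingleton_of_forall_eq 0 fun f => ?_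
          ext m
          apply h1
          simp only [← map_smul, hx0, LinearMap.zero_apply, smul_zero, map_zero]
        exact e.injective.subsingleton
      | succ i =>
        have := ih1 i (by omega)
        exact (sδ i).subsingleton
    refine ⟨key, ⟨?_⟩⟩
    have inj : Function.Injective (δ xs.length) := by
      rw [injective_iff_map_eq_zero]
      intro a ha
      obtain ⟨b, rfl⟩ := Abelian.Ext.covariant_sequence_exact₃ M hS a rfl ha
      have := key xs.length (by omega)
      have hb : b = 0 := Subsingleton.elim (α := Abelian.Ext M N xs.length) _ _
      rw [hb, Abelian.Ext.zero_comp]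
      rfl
    exact (LinearEquiv.ofBijective _ ⟨inj, sδ _⟩).symm.trans (ih2.trans
      (LinearEquiv.congrRight (Submodule.quotOfListConsSMulTopEquivQuotSMulTopInner N x xs).symm))

end VdB
end

section
namespace VdB

theorem ofList_assoc {R : Type*} [CommRing R] {rs rs' : List R}
    (h : List.Forall₂ Associated rs rs') : Ideal.ofList rs = Ideal.ofList rs' := by
  induction h with
  | nil => rfl
  | cons h _ ih => 
    obtain ⟨v, rfl⟩ := h
    rw [Ideal.ofList_cons, Ideal.ofList_cons, ih, Ideal.span_singleton_mul_right_unit v.isUnit]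

open RingTheory.Sequence Pointwise in
theorem weaklyRegular_assoc {R : Type*} [CommRing R] {rs rs' : List R}
    (h : List.Forall₂ Associated rs rs') : ∀ {M : Type u} [AddCommGroup M] [Module R M],
    IsWeaklyRegular M rs → IsWeaklyRegular M rs' := by
  induction h with
  | nil => intro M _ _ _; exact IsWeaklyRegular.nil R M
  | @cons r r' l l' h _ ih =>
    intro M _ _ hM
    obtain ⟨v, rfl⟩ := h
    rw [isWeaklyRegular_cons_iff] at hM ⊢
    refine ⟨?_, ?_⟩
    · exact hM.1.mul ((IsUnit.isSMulRegular M v.isUnit))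
    · have e : (r • ⊤ : Submodule R M) = (r * v) • ⊤ := by
        apply le_antisymm
        · rintro _ ⟨m, -, rfl⟩
          refine ⟨(↑v⁻¹ : R) • m, trivial, ?_⟩
          simp only [map_smul, DistribSMul.toLinearMap_apply, ← mul_smul]
          rw [mul_left_comm, Units.inv_mul, mul_one]
        · rintro _ ⟨m, -, rfl⟩
          refine ⟨(v : R) • m, trivial, ?_⟩
          simp [← mul_smul, mul_comm]
      exact ((Submodule.quotEquivOfEq _ _ e).isWeaklyRegular_congr l').mp (ih hM.2)

theorem exists_list {B : Type*} [CommRing B] (S : Submonoid B) (I : Ideal B) (rs : List (Localization S))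
    (h : ∀ r ∈ rs, r ∈ I.map (algebraMap B (Localization S))) :
    ∃ xs : List B, (∀ x ∈ xs, x ∈ I) ∧ List.Forall₂ Associated rs (xs.map (algebraMap B (Localization S))) := by
  induction rs with
  | nil => exact ⟨[], by simp, by simp⟩
  | cons r rs ih =>
    obtain ⟨xs, h1, h2⟩ := ih fun r hr => h r (by simp [hr])
    obtain ⟨⟨a, s⟩, e⟩ := (IsLocalization.mem_map_algebraMap_iff S _).mp (h r (by simp))
    refine ⟨a :: xs, ?_, ?_⟩
    · simpa using h1
    · simp only [List.map_cons, List.forall₂_cons]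
      exact ⟨⟨(IsLocalization.map_units (Localization S) s).unit, e⟩, h2⟩

theorem ker_local {A B : Type u} [CommRing A] [CommRing B] (ψ : B →+* A) (hs : Function.Surjective ψ)
    (q : Ideal A) [q.IsPrime] [(q.comap ψ).IsPrime] :
    RingHom.ker (Localization.localRingHom (q.comap ψ) q ψ rfl) =
      (RingHom.ker ψ).map (algebraMap B (Localization.AtPrime (q.comap ψ))) := by
  apply le_antisymm
  · intro z hz
    obtain ⟨b, s, rfl⟩ := IsLocalization.exists_mk'_eq (q.comap ψ).primeCompl z
    rw [RingHom.mem_ker, Localization.localRingHom_mk', IsLocalization.mk'_eq_zero_iff] at hz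
    obtain ⟨⟨t, ht⟩, h⟩ := hz
    obtain ⟨t, rfl⟩ := hs t
    rw [IsLocalization.mem_map_algebraMap_iff (q.comap ψ).primeCompl]
    refine ⟨⟨⟨t * b, ?_⟩, ⟨t, ht⟩ * s⟩, ?_⟩
    · rw [RingHom.mem_ker, map_mul]; exact h
    · simp only [Submonoid.coe_mul, map_mul]
      rw [mul_left_comm, IsLocalization.mk'_spec]
  · rw [Ideal.map_le_iff_le_comap]
    intro b hb
    rw [Ideal.mem_comap, RingHom.mem_ker, Localization.localRingHom_to_map, RingHom.mem_ker.mp hb, map_zero]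

theorem hom_cyclic {A B : Type u} [CommRing A] [CommRing B] (ψ : B →+* A) (hs : Function.Surjective ψ)
    [Module B A] (hmod : ∀ (b : B) (a : A), b • a = ψ b * a) (Q : Type u) [AddCommGroup Q] [Module B Q]
    (hQ : ∀ b ∈ RingHom.ker ψ, ∀ x : Q, b • x = 0) : Nonempty ((A →ₗ[B] Q) ≃ₗ[B] Q) := by
  refine ⟨LinearEquiv.ofBijective (LinearMap.applyₗ (1 : A)) ⟨?_, ?_⟩⟩
  · intro f g h
    ext a
    obtain ⟨b, rfl⟩ := hs a
    have : ψ b = b • 1 := by rw [hmod, mul_one]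
    rw [this, map_smul, map_smul]
    exact congrArg (b • ·) h
  · intro x
    let l : B →ₗ[B] A := LinearMap.toSpanSingleton B A 1
    have hl : ∀ b, l b = ψ b := fun b => by simp [l, hmod]
    have sl : Function.Surjective l := fun a => by
      obtain ⟨b, rfl⟩ := hs a; exact ⟨b, hl b⟩
    let e := l.quotKerEquivOfSurjective sl
    let m : (B ⧸ LinearMap.ker l) →ₗ[B] Q := (LinearMap.ker l).liftQ (LinearMap.toSpanSingleton B Q x) (by
      intro b hb
      rw [LinearMap.mem_ker, hl] at hb
      exact hQ b hb x)
    refine ⟨m ∘ₗ e.symm.toLinearMap, ?_⟩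
    have : (1 : A) = e (Submodule.Quotient.mk 1) := by
      change 1 = l 1
      rw [hl, map_one]
    simp only [LinearMap.applyₗ_apply_apply, LinearMap.comp_apply, LinearEquiv.coe_coe]
    rw [this, e.symm_apply_apply]
    change LinearMap.toSpanSingleton B Q x 1 = x
    simp

theorem exists_localized {A B : Type u} [CommRing A] [CommRing B] (ψ : B →+* A) (hs : Function.Surjective ψ)
    [Module B A] (hmod : ∀ (b : B) (a : A), b • a = ψ b * a) (S : Submonoid B) 
    (J : Ideal (Localization S)) (hJ : J = (RingHom.ker ψ).map (algebraMap B (Localization S))) :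
    ∃ f : A →ₗ[B] (Localization S ⧸ J), IsLocalizedModule S f := by
  have hJ' : J = Submodule.localized' (Localization S) S (Algebra.linearMap B (Localization S)) (RingHom.ker ψ) := by
    rw [hJ, Submodule.localized'_eq_span]; rfl
  subst hJ'
  let l : B →ₗ[B] A := LinearMap.toSpanSingleton B A 1
  have hl : ∀ b, l b = ψ b := fun b => by simp [l, hmod]
  have sl : Function.Surjective l := fun a => by
    obtain ⟨b, rfl⟩ := hs a; exact ⟨b, hl b⟩
  have hk : LinearMap.ker l = RingHom.ker ψ := by
    ext b; rw [LinearMap.mem_ker, hl, RingHom.mem_ker]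
  let e : (B ⧸ (RingHom.ker ψ : Submodule B B)) ≃ₗ[B] A := (Submodule.quotEquivOfEq _ _ hk.symm).trans (l.quotKerEquivOfSurjective sl)
  have := IsLocalizedModule.toLocalizedQuotient' (Localization S) S (Algebra.linearMap B (Localization S)) (RingHom.ker ψ : Submodule B B)
  exact ⟨_ ∘ₗ e.symm.toLinearMap, IsLocalizedModule.of_linearEquiv_right S (Submodule.toLocalizedQuotient' (Localization S) S (Algebra.linearMap B (Localization S)) (RingHom.ker ψ : Submodule B B)) e.symm⟩

end VdB
end

section
namespace VdB

noncomputable def localizedEquiv {B : Type u} [CommRing B] (M : ModuleCat.{u} B) (S : Submonoid B) {Q : Type u}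
    [AddCommGroup Q] [Module B Q] [Module (Localization S) Q] [IsScalarTower B (Localization S) Q]
    (f : M →ₗ[B] Q) (hf : IsLocalizedModule S f) : (M.localizedModule S) ≃ₗ[Localization S] Q :=
  (IsLocalizedModule.linearEquiv S (M.localizedModuleMkLinearMap S) f).extendScalarsOfIsLocalization S (Localization S)

open RingTheory.Sequence in
theorem local_structure {A B : Type u} [CommRing A] [CommRing B] [IsNoetherianRing B] (ψ : B →+* A)
    (hs : Function.Surjective ψ)
    [Module B A] (hmod : ∀ (b : B) (a : A), b • a = ψ b * a) (hlci : ψ.IsLocalCompleteIntersection)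
    (q : Ideal A) [hq : q.IsPrime] [(q.comap ψ).IsPrime] :
    ∃ n : ℕ, (∀ i, i ≠ n → Subsingleton (LocalizedModule (q.comap ψ).primeCompl
        (Abelian.Ext (ModuleCat.of B A) (ModuleCat.of B B) i))) ∧
      Nonempty (LocalizedModule (q.comap ψ).primeCompl
        (Abelian.Ext (ModuleCat.of B A) (ModuleCat.of B B) n) ≃ₗ[B]
        LocalizedModule (q.comap ψ).primeCompl A) := by
  obtain ⟨rs, hreg, hker⟩ := hlci q hq
  rw [ker_local ψ hs q] at hker
  set S : Submonoid B := (q.comap ψ).primeCompl with hS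
  obtain ⟨xs, hxI, hassoc⟩ := exists_list S (RingHom.ker ψ) rs (by
    intro r hr
    have := Ideal.subset_span (s := {r | r ∈ rs}) hr
    rwa [← Ideal.ofList, ← hker] at this)
  have hlen : xs.length = rs.length := by simpa using hassoc.length_eq.symm
  have hxreg : IsWeaklyRegular (Localization S) xs :=
    (isWeaklyRegular_map_algebraMap_iff (Localization S) (Localization S) xs).mp
      (weaklyRegular_assoc hassoc hreg.1)
  have hfin : Module.Finite B A := by
    refine Module.Finite.of_surjective (LinearMap.toSpanSingleton B A 1) fun a => ?_
    obtain ⟨b, rfl⟩ := hs a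
    exact ⟨b, by simp [hmod]⟩
  obtain ⟨f, hf⟩ := exists_localized ψ hs hmod S (Ideal.ofList rs) hker.symm
  let g : ModuleCat.of B B ⟶ ModuleCat.of B (Localization S) := ModuleCat.ofHom (Algebra.linearMap B (Localization S))
  have : IsLocalizedModule S g.hom := inferInstanceAs (IsLocalizedModule S (Algebra.linearMap B (Localization S)))
  have hloc := fun i => isLocalized_ext S g i (ModuleCat.of B A)
  obtain ⟨r1, ⟨r2⟩⟩ := rees (ModuleCat.of B A) xs (ModuleCat.of B (Localization S)) hxreg (by
    intro x hx m
    change x • (m : A) = 0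
    rw [hmod, RingHom.mem_ker.mp (hxI x hx), zero_mul])
  have hle : HasProjectiveDimensionLE ((ModuleCat.of B A).localizedModule S) rs.length := by
    let e' := localizedEquiv (ModuleCat.of B A) S (Q := Localization S ⧸ Ideal.ofList rs) f hf
    let e'' := (Shrink.linearEquiv.{u} (Localization S) (Localization S ⧸ Ideal.ofList rs)).trans e'.symm
    have h1 : projectiveDimension (ModuleCat.of (Localization.AtPrime (q.comap ψ))
        (Shrink.{u} (Localization.AtPrime (q.comap ψ) ⧸ Ideal.ofList rs))) = rs.length :=
      ModuleCat.projectiveDimension_quotient_eq_length rs hreg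
    have h2 : projectiveDimension ((ModuleCat.of B A).localizedModule S) = rs.length := by
      rw [← h1]
      exact (ModuleCat.projectiveDimension_eq_of_linearEquiv e'').symm
    exact (projectiveDimension_le_iff _ _).mp h2.le
  refine ⟨xs.length, ?_, ?_⟩
  · intro i hi
    have : Subsingleton (Abelian.Ext (ModuleCat.of B A) (ModuleCat.of B (Localization S)) i) := by
      rcases lt_or_gt_of_ne hi with hi | hi
      · exact r1 i hi
      · obtain ⟨j, rfl⟩ : ∃ j, i = j + 1 := ⟨i - 1, by omega⟩
        refine subsingleton_ext_of_pd S _ (IsLocalizedModule.map_units g.hom) j _ ?_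
        exact hasProjectiveDimensionLT_of_ge _ (rs.length + 1) _ (by omega)
    have := hloc i
    exact (IsLocalizedModule.iso S ((Abelian.Ext.mk₀ g).postcompOfLinear B (ModuleCat.of B A) (add_zero i))).injective.subsingleton
  · have := hloc xs.length
    have eI : (Ideal.ofList xs • ⊤ : Submodule B (Localization S)) = (Ideal.ofList rs).restrictScalars B := by
      rw [Ideal.smul_top_eq_map, Ideal.map_ofList, ofList_assoc hassoc]
    let e1 : ((Localization S) ⧸ (Ideal.ofList xs • ⊤ : Submodule B (Localization S))) ≃ₗ[B] (Localization S ⧸ Ideal.ofList rs) :=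
      (Submodule.quotEquivOfEq _ _ eI).trans (Submodule.Quotient.restrictScalarsEquiv B _)
    obtain ⟨e2⟩ := hom_cyclic ψ hs hmod (Localization S ⧸ Ideal.ofList rs) (by
      intro b hb x
      obtain ⟨x, rfl⟩ := Submodule.Quotient.mk_surjective _ x
      rw [← Submodule.Quotient.mk_smul, Submodule.Quotient.mk_eq_zero, ← hker, Algebra.smul_def]
      exact Ideal.mul_mem_right _ _ (Ideal.mem_map_of_mem _ hb))
    exact ⟨(IsLocalizedModule.iso S ((Abelian.Ext.mk₀ g).postcompOfLinear B (ModuleCat.of B A) (add_zero xs.length))).trans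
      (r2.trans ((LinearEquiv.congrRight e1).trans (e2.trans (IsLocalizedModule.iso S f).symm)))⟩

end VdB
end

section
namespace VdB

theorem cyclic_of_equiv {A E : Type u} [CommRing A] [AddCommGroup E] [Module A E]
    [Module.FinitePresentation A E] (m : Ideal A) [m.IsPrime]
    (θ : LocalizedModule m.primeCompl E ≃ₗ[A] LocalizedModule m.primeCompl A) :
    ∃ w : E, (∀ x : E, ∃ c : A, c ∉ m ∧ ∃ r : A, c • x = r • w) ∧ ∃ h : E →ₗ[A] A, h w ∉ m := by
  let S := m.primeCompl
  let k := LocalizedModule.mkLinearMap S E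
  let l := LocalizedModule.mkLinearMap S A
  obtain ⟨⟨w, t⟩, hw⟩ := IsLocalizedModule.surj S k (θ.symm (l 1))
  have hw' : θ (k w) = l t := by
    have : (t : A) • θ.symm (l 1) = k w := hw
    rw [← this, map_smul, θ.apply_symm_apply, ← map_smul, smul_eq_mul, mul_one]
  refine ⟨w, ?_, ?_⟩
  · intro x
    obtain ⟨⟨a, s⟩, hs⟩ := IsLocalizedModule.surj S l (θ (k x))
    have hs' : (s : A) • θ (k x) = l a := hs
    have : k ((t * s : A) • x) = k (a • w) := by
      apply θ.injective
      rw [map_smul, map_smul, map_smul, map_smul, mul_smul, hs', hw', ← map_smul, ← map_smul,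
        smul_eq_mul, smul_eq_mul, mul_comm]
    obtain ⟨c, hc⟩ := IsLocalizedModule.exists_of_eq (S := S) this
    refine ⟨c * (t * s), (c * (t * s)).2, c * a, ?_⟩
    rw [mul_smul (c : A), mul_smul (c : A) a]
    exact hc
  · obtain ⟨h, s, hh⟩ := Module.FinitePresentation.exists_lift_of_isLocalizedModule S l
      (θ.toLinearMap ∘ₗ k)
    refine ⟨h, ?_⟩
    have h1 : l (h w) = l (s * t : A) := by
      have := LinearMap.congr_fun hh w
      have h2 : l (h w) = (s : A) • θ (k w) := this
      rw [h2, hw', ← map_smul, smul_eq_mul]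
    obtain ⟨c, hc⟩ := IsLocalizedModule.exists_of_eq (S := S) h1
    have hc' : (c : A) * h w = c * (s * t) := hc
    intro hm
    have h3 : (c : A) * (s * t) ∈ m := hc' ▸ m.mul_mem_left _ hm
    exact (c * (s * t)).2 h3

open TensorProduct in
theorem invertible_of_local {A E : Type u} [CommRing A] [AddCommGroup E] [Module A E]
    [Module.FinitePresentation A E]
    (H : ∀ (m : Ideal A) [m.IsPrime], Nonempty
      (LocalizedModule m.primeCompl E ≃ₗ[A] LocalizedModule m.primeCompl A)) :
    Module.IsInvertible A E := by
  have key : ∀ (f : Module.Dual A E) (x y : E), f x • y = f y • x := by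
    intro f x y
    rw [← sub_eq_zero]
    let I : Ideal A := LinearMap.ker (LinearMap.toSpanSingleton A E (f x • y - f y • x))
    by_contra hne
    have hI : I ≠ ⊤ := by
      intro h
      have : (1 : A) ∈ I := h ▸ trivial
      simp only [I, LinearMap.mem_ker, LinearMap.toSpanSingleton_apply, one_smul] at this
      exact hne this
    obtain ⟨m, hm, hle⟩ := I.exists_le_maximal hI
    obtain ⟨θ⟩ := H m
    obtain ⟨w, hw, -⟩ := cyclic_of_equiv m θ
    obtain ⟨c, hc, r, hr⟩ := hw x
    obtain ⟨d, hd, s, hs⟩ := hw y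
    have : c * d ∈ I := by
      simp only [I, LinearMap.mem_ker, LinearMap.toSpanSingleton_apply]
      have e1 : (c * d) • (f x • y) = f (c • x) • (d • y) := by
        simp only [map_smul, smul_smul, smul_eq_mul]; congr 1; ring
      have e2 : (c * d) • (f y • x) = f (d • y) • (c • x) := by
        simp only [map_smul, smul_smul, smul_eq_mul]; congr 1; ring
      rw [smul_sub, e1, e2, hr, hs]
      simp only [map_smul, smul_smul, smul_eq_mul]
      rw [sub_eq_zero]; congr 1; ring
    exact (hm.isPrime.mem_or_mem (hle this)).elim hc hd
  let u := contractLeft A E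
  have hu : Function.Surjective u := by
    rw [← LinearMap.range_eq_top]
    by_contra hI
    obtain ⟨m, hm, hle⟩ := Ideal.exists_le_maximal (LinearMap.range u) hI
    obtain ⟨θ⟩ := H m
    obtain ⟨w, -, h, hh⟩ := cyclic_of_equiv m θ
    exact hh (hle ⟨h ⊗ₜ w, contractLeft_apply h w⟩)
  have k2 : ∀ (τ : Module.Dual A E ⊗[A] E) (g : Module.Dual A E) (y : E), u τ • (g ⊗ₜ[A] y) = g y • τ := by
    intro τ g y
    induction τ with
    | zero => simp
    | add a b ha hb => rw [map_add, add_smul, smul_add, ha, hb]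
    | tmul f x =>
      have e : f y • g = g y • f := by
        ext z
        have := congrArg f (key g z y)
        simp only [map_smul, smul_eq_mul, LinearMap.smul_apply] at this ⊢
        rw [mul_comm]; exact this
      rw [contractLeft_apply, ← TensorProduct.tmul_smul, key f x y, TensorProduct.tmul_smul, TensorProduct.smul_tmul', e, TensorProduct.smul_tmul']
  obtain ⟨τ, hτ⟩ := hu 1
  have k3 : ∀ z, z = u z • τ := by
    intro z
    induction z with
    | zero => simp
    | add a b ha hb => rw [map_add, add_smul, ← ha, ← hb]
    | tmul g y => rw [contractLeft_apply, ← k2, hτ, one_smul]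
  refine ⟨Module.Dual A E, inferInstance, inferInstance, ⟨(TensorProduct.comm A E (Module.Dual A E)).trans (LinearEquiv.ofBijective u ⟨?_, hu⟩)⟩⟩
  rw [injective_iff_map_eq_zero]
  intro z hz
  rw [k3 z, hz, zero_smul]

end VdB
end

section
namespace VdB

theorem localized_transfer {A B E : Type u} [CommRing A] [CommRing B] (ψ : B →+* A)
    (hs : Function.Surjective ψ) (q : Ideal A) [q.IsPrime] [(q.comap ψ).IsPrime]
    [AddCommGroup E] [Module A E] [Module B E] (hE : ∀ (b : B) (x : E), b • x = ψ b • x)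
    (E' : Type u) [AddCommGroup E'] [Module A E'] [Module B E'] (hE' : ∀ (b : B) (x : E'), b • x = ψ b • x)
    (f : E →ₗ[A] E') [IsLocalizedModule q.primeCompl f] (g : E →ₗ[B] E') (hfg : ∀ x, g x = f x) :
    IsLocalizedModule (q.comap ψ).primeCompl g := by
  constructor
  · rintro ⟨s, hs'⟩
    have := (Module.End.isUnit_iff _).mp (IsLocalizedModule.map_units (S := q.primeCompl) f ⟨ψ s, hs'⟩)
    rw [Module.End.isUnit_iff]
    convert this using 1
    ext x
    exact hE' s x
  · intro y
    obtain ⟨⟨x, ⟨s, hs'⟩⟩, h⟩ := IsLocalizedModule.surj q.primeCompl f y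
    obtain ⟨s, rfl⟩ := hs s
    refine ⟨⟨x, ⟨s, hs'⟩⟩, ?_⟩
    rw [hfg]
    exact (hE' s y).trans h
  · intro x y h
    rw [hfg, hfg] at h
    obtain ⟨⟨c, hc⟩, h⟩ := IsLocalizedModule.exists_of_eq (S := q.primeCompl) h
    obtain ⟨c, rfl⟩ := hs c
    refine ⟨⟨c, hc⟩, ?_⟩
    change c • x = c • y
    rw [hE, hE]
    exact h

theorem localized_equiv {A B E F : Type u} [CommRing A] [CommRing B] (ψ : B →+* A)
    (hs : Function.Surjective ψ) (q : Ideal A) [q.IsPrime] [(q.comap ψ).IsPrime]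
    [AddCommGroup E] [Module A E] [Module B E] (hE : ∀ (b : B) (x : E), b • x = ψ b • x)
    [AddCommGroup F] [Module A F] [Module B F] (hF : ∀ (b : B) (x : F), b • x = ψ b • x)
    (e : LocalizedModule (q.comap ψ).primeCompl E ≃ₗ[B] LocalizedModule (q.comap ψ).primeCompl F) :
    Nonempty (LocalizedModule q.primeCompl E ≃ₗ[A] LocalizedModule q.primeCompl F) := by
  letI : Module B (LocalizedModule q.primeCompl E) := Module.compHom _ ψ
  letI : Module B (LocalizedModule q.primeCompl F) := Module.compHom _ ψ
  let gE : E →ₗ[B] LocalizedModule q.primeCompl E :=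
    { toFun := LocalizedModule.mkLinearMap q.primeCompl E
      map_add' := by simp
      map_smul' := fun b x => by
        rw [hE, map_smul]; rfl }
  let gF : F →ₗ[B] LocalizedModule q.primeCompl F :=
    { toFun := LocalizedModule.mkLinearMap q.primeCompl F
      map_add' := by simp
      map_smul' := fun b x => by
        rw [hF, map_smul]; rfl }
  have h1 := localized_transfer ψ hs q hE _ (fun _ _ => rfl) (LocalizedModule.mkLinearMap q.primeCompl E) gE (fun _ => rfl)
  have h2 := localized_transfer ψ hs q hF _ (fun _ _ => rfl) (LocalizedModule.mkLinearMap q.primeCompl F) gF (fun _ => rfl)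
  let t := (IsLocalizedModule.iso (q.comap ψ).primeCompl gE).symm.trans (e.trans (IsLocalizedModule.iso (q.comap ψ).primeCompl gF))
  refine ⟨{ t with map_smul' := ?_ }⟩
  intro a x
  obtain ⟨b, rfl⟩ := hs a
  exact t.map_smul b x

theorem localized_subsingleton {A B E : Type u} [CommRing A] [CommRing B] (ψ : B →+* A)
    (q : Ideal A) [q.IsPrime] [(q.comap ψ).IsPrime]
    [AddCommGroup E] [Module A E] [Module B E] (hE : ∀ (b : B) (x : E), b • x = ψ b • x)
    (h : Subsingleton (LocalizedModule (q.comap ψ).primeCompl E)) :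
    Subsingleton (LocalizedModule q.primeCompl E) := by
  rw [LocalizedModule.subsingleton_iff] at h ⊢
  intro x
  obtain ⟨r, hr, h⟩ := h x
  exact ⟨ψ r, hr, by rw [← hE, h]⟩

theorem globalize {A : Type u} [CommRing A] [ConnectedSpace (PrimeSpectrum A)] [IsNoetherianRing A]
    (E : ℕ → Type u) [∀ i, AddCommGroup (E i)] [∀ i, Module A (E i)] [∀ i, Module.Finite A (E i)]
    (L : ℕ) (hL : ∀ i, L < i → Subsingleton (E i))
    (H : ∀ (q : Ideal A) [q.IsPrime], ∃ n, (∀ i, i ≠ n → Subsingleton (LocalizedModule q.primeCompl (E i))) ∧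
      Nonempty (LocalizedModule q.primeCompl (E n) ≃ₗ[A] LocalizedModule q.primeCompl A)) :
    ∃ n, (∀ i, i ≠ n → Subsingleton (E i)) ∧ Module.IsInvertible A (E n) := by
  obtain ⟨q0⟩ : Nonempty (PrimeSpectrum A) := inferInstance
  have nt : ∀ (q : PrimeSpectrum A) n, (LocalizedModule q.asIdeal.primeCompl (E n) ≃ₗ[A] LocalizedModule q.asIdeal.primeCompl A) →
      q ∈ Module.support A (E n) := by
    intro q n θ
    rw [Module.mem_support_iff]
    have : q ∈ Module.support A A := by
      have : Nontrivial A := q.nontrivial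
      rw [Module.mem_support_iff_exists_annihilator]
      refine ⟨1, fun r hr => ?_⟩
      rw [Submodule.mem_annihilator_span_singleton, smul_eq_mul, mul_one] at hr
      rw [hr]; exact q.asIdeal.zero_mem
    rw [Module.mem_support_iff] at this
    exact θ.toEquiv.nontrivial
  have ns : ∀ (q : PrimeSpectrum A) n, Subsingleton (LocalizedModule q.asIdeal.primeCompl (E n)) →
      q ∉ Module.support A (E n) := by
    intro q n h
    rwa [Module.notMem_support_iff]
  obtain ⟨n, hn, ⟨θ⟩⟩ := H q0.asIdeal
  have hc : ∀ i, IsClosed (Module.support A (E i)) := fun i => Module.isClosed_support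
  have hcompl : (Module.support A (E n))ᶜ = ⋃ i ∈ {i | i ≤ L ∧ i ≠ n}, Module.support A (E i) := by
    ext q
    simp only [Set.mem_compl_iff, Set.mem_iUnion, Set.mem_ofPred_eq, exists_prop]
    obtain ⟨m, hm, ⟨θ'⟩⟩ := H q.asIdeal
    have hqm := nt q m θ'
    constructor
    · intro h
      refine ⟨m, ⟨?_, ?_⟩, hqm⟩
      · by_contra hlt
        have := hL m (by omega)
        rw [Module.support_eq_empty] at hqm
        exact hqm
      · rintro rfl; exact h hqm
    · rintro ⟨i, ⟨-, hi⟩, hqi⟩ hqn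
      have h1 : i = m := by
        by_contra h; exact ns q i (hm i h) hqi
      have h2 : n = m := by
        by_contra h; exact ns q n (hm n h) hqn
      exact hi (h1.trans h2.symm)
  have hclopen : IsClopen (Module.support A (E n)) := by
    refine ⟨hc n, ?_⟩
    rw [← isClosed_compl_iff, hcompl]
    exact Set.Finite.isClosed_biUnion ((Set.finite_le_nat L).subset fun i hi => hi.1) (fun i _ => hc i)
  have huniv := hclopen.eq_univ ⟨q0, nt q0 n θ⟩
  have hall : ∀ (q : Ideal A) [hq : q.IsPrime], (∀ i, i ≠ n → Subsingleton (LocalizedModule q.primeCompl (E i))) ∧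
      Nonempty (LocalizedModule q.primeCompl (E n) ≃ₗ[A] LocalizedModule q.primeCompl A) := by
    intro q hq
    obtain ⟨m, hm, θ'⟩ := H q
    have h2 : n = m := by
      by_contra h
      exact ns ⟨q, hq⟩ n (hm n h) (huniv ▸ trivial)
    subst h2
    exact ⟨hm, θ'⟩
  refine ⟨n, ?_, ?_⟩
  · intro i hi
    rw [← Module.support_eq_empty_iff (R := A), Set.eq_empty_iff_forall_notMem]
    intro q
    exact ns q i ((hall q.asIdeal).1 i hi)
  · have := Module.finitePresentation_of_finite A (E n)
    exact invertible_of_local fun q hq => (hall q).2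

theorem pd_of_perfect {B : Type u} [CommRing B] (n : ℕ) : ∀ (M : Type u) [AddCommGroup M] [Module B M],
    Module.IsPerfectLE B n M → HasProjectiveDimensionLE (ModuleCat.of B M) n := by
  induction n with
  | zero =>
    intro M _ _ h
    have := h.2
    exact projective_iff_hasProjectiveDimensionLT_one.mp ((IsProjective.iff_projective M).mp h.2)
  | succ n ih =>
    intro M _ _ h
    obtain ⟨P, _, _, f, hfin, hproj, hsurj, hk⟩ := h
    have hT := LinearMap.shortExact_shortComplexKer hsurj
    have hp : Projective f.shortComplexKer.X₂ := (IsProjective.iff_projective P).mp hproj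
    exact (hT.hasProjectiveDimensionLT_X₃_iff n hp).mpr (ih _ hk)

end VdB
end

section
namespace VdB

theorem main_aux {A B : Type u} [CommRing A] [CommRing B]
    [IsNoetherianRing A] [IsNoetherianRing B] [ConnectedSpace (PrimeSpectrum A)]
    (φ : A →+* B) (ψ : B →+* A) (hretract : ψ.comp φ = RingHom.id A)
    (hs : Function.Surjective ψ) (hlci : ψ.IsLocalCompleteIntersection)
    [Module B A] (hmod : ∀ (b : B) (a : A), b • a = ψ b * a)
    (hperf : Module.IsPerfect B A)
    (E : ℕ → Type u) [∀ i, AddCommGroup (E i)] [∀ i, Module B (E i)] [∀ i, Module A (E i)]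
    (hA : ∀ i (a : A) (x : E i), a • x = φ a • x)
    (eqv : ∀ i, Nonempty (E i ≃ₗ[B] Abelian.Ext (ModuleCat.of B A) (ModuleCat.of B B) i)) :
    ∃ n, (∀ i, i ≠ n → Subsingleton (E i)) ∧ Module.IsInvertible A (E n) := by
  have eq : ∀ i, E i ≃ₗ[B] Abelian.Ext (ModuleCat.of B A) (ModuleCat.of B B) i :=
    fun i => (eqv i).some
  have hφ : ∀ a, ψ (φ a) = a := fun a => RingHom.congr_fun hretract a
  have hE : ∀ i (b : B) (x : E i), b • x = ψ b • x := by
    intro i b x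
    rw [hA, ← sub_eq_zero, ← sub_smul]
    apply (eq i).injective
    rw [map_smul, map_zero]
    apply smul_ext_eq_zero
    intro m
    refine (hmod _ m).trans ?_
    rw [map_sub, hφ, sub_self, zero_mul]
  have hfB : Module.Finite B A := by
    refine ⟨⟨{1}, ?_⟩⟩
    rw [eq_top_iff]
    intro a _
    obtain ⟨b, rfl⟩ := hs a
    rw [Finset.coe_singleton, Submodule.mem_span_singleton]
    exact ⟨b, by rw [hmod, mul_one]⟩
  have hfin : ∀ i, Module.Finite A (E i) := by
    intro i
    have : Module.Finite B (Abelian.Ext (ModuleCat.of B A) (ModuleCat.of B B) i) := by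
      have : Module.Finite B (ModuleCat.of B A) := hfB
      have : Module.Finite B (ModuleCat.of B B) := inferInstanceAs (Module.Finite B B)
      exact ModuleCat.finite_ext B (ModuleCat.of B A) (ModuleCat.of B B) i
    have : Module.Finite B (E i) := Module.Finite.equiv (eq i).symm
    obtain ⟨S, hS⟩ := this.1
    refine ⟨⟨S, ?_⟩⟩
    rw [eq_top_iff]
    intro x _
    have hx : x ∈ Submodule.span B (S : Set (E i)) := hS ▸ trivial
    induction hx using Submodule.span_induction with
    | mem x h => exact Submodule.subset_span h
    | zero => exact Submodule.zero_mem _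
    | add x y _ _ h1 h2 => exact Submodule.add_mem _ (h1 trivial) (h2 trivial)
    | smul b x _ h => rw [hE]; exact Submodule.smul_mem _ _ (h trivial)
  obtain ⟨L, hL⟩ := hperf
  have hpd := pd_of_perfect L A hL
  refine globalize E L (fun i hi => ?_) (fun q hq => ?_)
  · have := HasProjectiveDimensionLT.subsingleton (ModuleCat.of B A) (L + 1) i hi (ModuleCat.of B B)
    exact (eq i).toEquiv.subsingleton
  · haveI hp : (q.comap ψ).IsPrime := hq.comap ψ
    have key : ∀ i, Nonempty (LocalizedModule (q.comap ψ).primeCompl (E i) ≃ₗ[B]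
        LocalizedModule (q.comap ψ).primeCompl
          (Abelian.Ext (ModuleCat.of B A) (ModuleCat.of B B) i)) := fun i =>
      ⟨IsLocalizedModule.linearEquiv (q.comap ψ).primeCompl
        (LocalizedModule.mkLinearMap (q.comap ψ).primeCompl (E i))
        (LocalizedModule.mkLinearMap (q.comap ψ).primeCompl
          (Abelian.Ext (ModuleCat.of B A) (ModuleCat.of B B) i) ∘ₗ (eq i).toLinearMap)⟩
    obtain ⟨n, h1, ⟨h2⟩⟩ := local_structure ψ hs hmod hlci q
    refine ⟨n, fun i hi => ?_, ?_⟩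
    · obtain ⟨k⟩ := key i
      have := h1 i hi
      exact localized_subsingleton ψ q (hE i) k.toEquiv.subsingleton
    · obtain ⟨k⟩ := key n
      exact localized_equiv ψ hs q (hE n) hmod (k.trans h2)

end VdB
end


/-- **Van den Bergh duality for ring retractions, part 1.**
Let `φ : A →+* B`, `ψ : B →+* A` be homomorphisms of commutative noetherian rings with
`ψ ∘ φ = id` (a ring retraction).  Assume `B` is flat as an `A`-module via `φ`, the
surjection `ψ` is a local complete intersection, `A` is a perfect `B`-module via `ψ`, and
`A` is nonzero with connected spectrum.  Then there is an `n : ℕ` such that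
`Ext^i_B(A, B) = 0` for `i ≠ n` and `Ext^n_B(A, B)` is an invertible `A`-module (where the
`A`-module structure is the canonical one, obtained by restricting the `B`-module structure
along `φ`). -/
theorem vdb_duality_retraction_ext_concentrated_invertible
    {A B : Type u} [CommRing A] [CommRing B]
    [IsNoetherianRing A] [IsNoetherianRing B]
    (φ : A →+* B) (ψ : B →+* A) (hretract : ψ.comp φ = RingHom.id A)
    (hflat : letI := φ.toModule; Module.Flat A B)
    (hsurj : Function.Surjective ψ)
    (hlci : ψ.IsLocalCompleteIntersection)
    (hperf : letI := ψ.toModule; Module.IsPerfect B A)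
    (hnt : Nontrivial A)
    (hconn : ConnectedSpace (PrimeSpectrum A)) :
    ∃ n : ℕ,
      (∀ i : ℕ, i ≠ n →
        letI := ψ.toModule
        Subsingleton (((Ext B (ModuleCat.{u} B) i).obj
          (Opposite.op (ModuleCat.of B A))).obj (ModuleCat.of B B))) ∧
      (letI := ψ.toModule
       letI : Module A (((Ext B (ModuleCat.{u} B) n).obj
          (Opposite.op (ModuleCat.of B A))).obj (ModuleCat.of B B)) := Module.compHom _ φ
       Module.IsInvertible A (((Ext B (ModuleCat.{u} B) n).obj
          (Opposite.op (ModuleCat.of B A))).obj (ModuleCat.of B B))) := by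
  letI := ψ.toModule
  letI : ∀ n, Module A (((Ext B (ModuleCat.{u} B) n).obj
      (Opposite.op (ModuleCat.of B A))).obj (ModuleCat.of B B)) := fun n => Module.compHom _ φ
  exact VdB.main_aux φ ψ hretract hsurj hlci (fun _ _ => rfl) hperf
    (fun n => ((Ext B (ModuleCat.{u} B) n).obj
      (Opposite.op (ModuleCat.of B A))).obj (ModuleCat.of B B))
    (fun _ _ _ => rfl) (fun i => VdB.extEquiv _ _ i)
end

section
/- Let φ : A → B and ψ : B → A be homomorphisms of commutative noetherian rings with ψ ∘ φ = id_A (a ring retraction). Assume that (i) B is flat as an A-module via φ, (ii) the surjection ψ is a local complete intersection, (iii) A is a perfect B-module via ψ, and (iv) A is nonzero and Spec(A) is connected. Then there exist an integer n ≥ 0 and an invertible A-module N̄ such that for every B-module X and every integer i there is an isomorphism of A-modules, natural in X: Ext^i_B(A, X) ≅ N̄ ⊗_A Tor^B_{n−i}(A, X), where Tor in negative homological degrees is interpreted as zero. -/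
universe u

open CategoryTheory CategoryTheory.MonoidalCategory

/-- `Ext^i_B(A, -)` (with `A` a `B`-module via `ψ`), viewed as a functor from `B`-modules to
`A`-modules (the canonical `A`-module structure is restriction of scalars along `φ`, since
`ψ ∘ φ = id`), with the convention that it is the zero functor in negative degrees. -/
noncomputable def extRetractFunctor {A B : Type u} [CommRing A] [CommRing B]
    (φ : A →+* B) (ψ : B →+* A) (i : ℤ) : ModuleCat.{u} B ⥤ ModuleCat.{u} A :=
  letI := ψ.toModule
  if 0 ≤ i then
    ((Ext B (ModuleCat.{u} B) i.toNat).obj (Opposite.op (ModuleCat.of B A))) ⋙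
      ModuleCat.restrictScalars φ
  else (Functor.const _).obj (ModuleCat.of A PUnit)

/-- `Tor^B_j(A, -)` (with `A` a `B`-module via `ψ`), viewed as a functor from `B`-modules to
`A`-modules (the canonical `A`-module structure is restriction of scalars along `φ`, since
`ψ ∘ φ = id`), with the convention that it is the zero functor in negative degrees. -/
noncomputable def torRetractFunctor {A B : Type u} [CommRing A] [CommRing B]
    (φ : A →+* B) (ψ : B →+* A) (j : ℤ) : ModuleCat.{u} B ⥤ ModuleCat.{u} A :=
  letI := ψ.toModule
  if 0 ≤ j then
    ((Tor (ModuleCat.{u} B) j.toNat).obj (ModuleCat.of B A)) ⋙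
      ModuleCat.restrictScalars φ
  else (Functor.const _).obj (ModuleCat.of A PUnit)

namespace VdB
open CategoryTheory.Limits
section P1
variable {B : Type u} [CommRing B]

/-- `Ext^j(M,-)` as a functor to `B`-modules. -/
noncomputable def extFun (M : ModuleCat.{u} B) (j : ℕ) : ModuleCat.{u} B ⥤ ModuleCat.{u} B where
  obj X := ModuleCat.of B (Abelian.Ext.{u} M X j)
  map {X Y} g := ModuleCat.ofHom
    { toFun := fun x => x.comp (Abelian.Ext.mk₀ g) (add_zero j)
      map_add' := fun x y => by simp
      map_smul' := fun r x => by simp [Abelian.Ext.smul_comp] }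
  map_id X := by ext x; simp
  map_comp f g := by
    ext x
    simp [← Abelian.Ext.mk₀_comp_mk₀]

@[simp] lemma extFun_map_apply (M : ModuleCat.{u} B) (j : ℕ) {X Y : ModuleCat.{u} B} (g : X ⟶ Y)
    (x : Abelian.Ext.{u} M X j) : ((extFun M j).map g).hom x =
      x.comp (Abelian.Ext.mk₀ g) (add_zero j) := rfl

variable {M : ModuleCat.{u} B} (P : ProjectiveResolution M)

lemma extMk_zero_eq_zero {Y : ModuleCat.{u} B} (f : P.complex.X 0 ⟶ Y)
    (hf : P.complex.d 1 0 ≫ f = 0) (h : P.extMk f 1 rfl hf = 0) : f = 0 := by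
  rw [← P.extEquivCohomologyClass.apply_eq_iff_eq,
    P.extEquivCohomologyClass_extMk, P.extEquivCohomologyClass_zero,
    CochainComplex.HomComplex.CohomologyClass.mk_eq_zero_iff,
    CochainComplex.HomComplex.Cocycle.toSingleMk_mem_coboundaries_iff _ _ _ _ _ 1 (by simp)] at h
  obtain ⟨g, hg⟩ := h
  have hz : IsZero (P.cochainComplex.X 1) :=
    CochainComplex.isZero_of_isStrictlyLE _ 0 1 (by lia)
  have : (P.cochainComplexXIso (-((0:ℕ):ℤ)) 0 rfl).hom ≫ f = 0 := by
    rw [← hg, hz.eq_of_src g 0]; simp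
  rw [← cancel_epi (P.cochainComplexXIso (-((0:ℕ):ℤ)) 0 rfl).hom, this]; simp

lemma smul_extMk_s1 {Y : ModuleCat.{u} B} {j : ℕ} (f : P.complex.X j ⟶ Y)
    (hf : P.complex.d (j+1) j ≫ f = 0) (r : B) :
    r • P.extMk f (j+1) rfl hf = P.extMk (r • f) (j+1) rfl (by simp [hf]) := by
  rw [Abelian.Ext.smul_eq_comp_mk₀, P.extMk_comp_mk₀]
  congr 1

/-- complex of homs -/
noncomputable abbrev homCpx (X : ModuleCat.{u} B) : CochainComplex (ModuleCat.{u} B) ℕ :=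
  P.complex.linearYonedaObj B X

lemma homCpx_cocycle {X : ModuleCat.{u} B} {j : ℕ} (z : (homCpx P X).cycles j) :
    P.complex.d (j+1) j ≫ ((homCpx P X).iCycles j z : P.complex.X j ⟶ X) = 0 := by
  have := ConcreteCategory.congr_hom ((homCpx P X).iCycles_d j (j+1)) z
  exact this

noncomputable def cyclesToExt (X : ModuleCat.{u} B) (j : ℕ) :
    (homCpx P X).cycles j ⟶ (extFun M j).obj X := ModuleCat.ofHom
  { toFun := fun z => P.extMk ((homCpx P X).iCycles j z : P.complex.X j ⟶ X) (j+1) rfl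
      (homCpx_cocycle P z)
    map_add' := fun x y => by
      refine Eq.trans ?_ (P.add_extMk _ _ _ _ _ _).symm
      congr 1; exact map_add ((homCpx P X).iCycles j).hom x y
    map_smul' := fun r x => by
      refine Eq.trans ?_ (smul_extMk_s1 P _ _ r).symm
      congr 1; exact map_smul ((homCpx P X).iCycles j).hom r x }

lemma cyclesToExt_apply (X : ModuleCat.{u} B) (j : ℕ) (z : (homCpx P X).cycles j) :
    cyclesToExt P X j z = P.extMk ((homCpx P X).iCycles j z : P.complex.X j ⟶ X) (j+1) rfl
      (homCpx_cocycle P z) := rfl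

lemma toCycles_cyclesToExt (X : ModuleCat.{u} B) (i j : ℕ) :
    (homCpx P X).toCycles i j ≫ cyclesToExt P X j = 0 := by
  by_cases h : i + 1 = j
  · ext y
    simp only [ModuleCat.hom_comp, LinearMap.comp_apply]
    erw [cyclesToExt_apply]
    refine (P.extMk_eq_zero_iff _ _ _ _ i h).2 ⟨y, ?_⟩
    have := ConcreteCategory.congr_hom ((homCpx P X).toCycles_i i j) y
    exact this.symm
  · rw [(homCpx P X).toCycles_eq_zero (by simpa using h), zero_comp]

noncomputable def homologyToExt (X : ModuleCat.{u} B) (j : ℕ) :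
    (homCpx P X).homology j ⟶ (extFun M j).obj X :=
  ((homCpx P X).homologyIsCokernel _ j rfl).desc
    (CokernelCofork.ofπ (cyclesToExt P X j) (toCycles_cyclesToExt P X _ j))

lemma π_homologyToExt (X : ModuleCat.{u} B) (j : ℕ) :
    (homCpx P X).homologyπ j ≫ homologyToExt P X j = cyclesToExt P X j :=
  ((homCpx P X).homologyIsCokernel _ j rfl).fac
    (CokernelCofork.ofπ (cyclesToExt P X j) (toCycles_cyclesToExt P X _ j)) WalkingParallelPair.one

lemma homologyToExt_surjective (X : ModuleCat.{u} B) (j : ℕ) :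
    Function.Surjective (homologyToExt P X j) := by
  intro e
  obtain ⟨f, hf, rfl⟩ := P.extMk_surjective e (j+1) rfl
  let S := (homCpx P X).sc j
  have hz : (homCpx P X).d j (j+1) f = 0 := hf
  obtain ⟨z, hz⟩ : ∃ z : (homCpx P X).cycles j, (homCpx P X).iCycles j z = f := by
    have hex : (ShortComplex.mk _ _ ((homCpx P X).iCycles_d j (j+1))).Exact :=
      ShortComplex.exact_of_f_is_kernel _ ((homCpx P X).cyclesIsKernel j (j+1) (by simp))
    exact (ShortComplex.moduleCat_exact_iff _).1 hex f hz
  refine ⟨(homCpx P X).homologyπ j z, ?_⟩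
  have := ConcreteCategory.congr_hom (π_homologyToExt P X j) z
  refine this.trans ?_
  rw [cyclesToExt_apply]
  congr 1

lemma homologyToExt_injective (X : ModuleCat.{u} B) (j : ℕ) :
    Function.Injective (homologyToExt P X j) := by
  refine (injective_iff_map_eq_zero (homologyToExt P X j).hom).2 fun w hw => ?_
  obtain ⟨z, rfl⟩ := (ModuleCat.epi_iff_surjective ((homCpx P X).homologyπ j)).1 inferInstance w
  have h1 : cyclesToExt P X j z = 0 :=
    (ConcreteCategory.congr_hom (π_homologyToExt P X j) z).symm.trans hw
  rw [cyclesToExt_apply] at h1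
  obtain _ | i := j
  · have h2 := extMk_zero_eq_zero P _ _ h1
    have h3 : z = 0 := by
      have := (ModuleCat.mono_iff_injective ((homCpx P X).iCycles 0)).1 inferInstance
      apply this
      rw [map_zero]; exact h2
    rw [h3, map_zero]
  · obtain ⟨y, hy⟩ := (P.extMk_eq_zero_iff _ _ _ _ i rfl).1 h1
    have h3 : z = (homCpx P X).toCycles i (i+1) y := by
      have := (ModuleCat.mono_iff_injective ((homCpx P X).iCycles (i+1))).1 inferInstance
      apply this
      refine hy.symm.trans ?_
      exact (ConcreteCategory.congr_hom ((homCpx P X).toCycles_i i (i+1)) y).symm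
    rw [h3]
    exact ConcreteCategory.congr_hom ((homCpx P X).toCycles_comp_homologyπ i (i+1)) y

/-- map of hom complexes -/
noncomputable def homCpxMap {X Y : ModuleCat.{u} B} (g : X ⟶ Y) : homCpx P X ⟶ homCpx P Y :=
  (HomologicalComplex.unopFunctor _ _ ).map
    ((NatTrans.mapHomologicalComplex ((linearYoneda B (ModuleCat.{u} B)).map g).rightOp _).app
      P.complex).op

lemma homCpxMap_f {X Y : ModuleCat.{u} B} (g : X ⟶ Y) (j : ℕ) (f : P.complex.X j ⟶ X) :
    (homCpxMap P g).f j f = f ≫ g := rfl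

lemma iso_aux {V : Type*} [Category* V] {a b c d : V} (e : a ≅ b) (f : c ≅ d) (m : b ⟶ d) (k : a ⟶ c)
    (h : e.hom ≫ m = k ≫ f.hom) : m ≫ f.inv = e.inv ≫ k := by
  rw [Iso.comp_inv_eq, Category.assoc, ← h, Iso.inv_hom_id_assoc]

lemma homologyUnop_naturality {V : Type*} [Category* V] [Abelian V] {ι : Type*}
    {c : ComplexShape ι} {K L : HomologicalComplex Vᵒᵖ c} (β : K ⟶ L) (β' : L.unop ⟶ K.unop)
    (hβ : β' = (HomologicalComplex.unopFunctor _ _).map β.op) (i : ι) :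
    (HomologicalComplex.homologyMap β i).unop ≫ (K.homologyUnop i).inv =
    (L.homologyUnop i).inv ≫ HomologicalComplex.homologyMap β' i := by
  have h := HomologicalComplex.homologyOp_hom_naturality
    ((HomologicalComplex.unopFunctor V c).map β.op) i
  refine iso_aux _ _ _ _ ?_
  subst hβ
  exact (congrArg Quiver.Hom.unop h)

lemma op_aux {V : Type*} [Category* V] {LX LY KX KY : Vᵒᵖ} {hX hY : V} (eX : LX ≅ KX) (eY : LY ≅ KY)
    (β : KY ⟶ KX) (m : LY ⟶ LX) (hm : m = eY.hom ≫ β ≫ eX.inv) (pX : KX.unop ≅ hX)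
    (pY : KY.unop ≅ hY) (q : hX ⟶ hY) (hq : β.unop ≫ pY.hom = pX.hom ≫ q) :
    m.unop ≫ (eY.unop.symm ≪≫ pY).hom = (eX.unop.symm ≪≫ pX).hom ≫ q := by
  subst hm
  simp only [Iso.trans_hom, Iso.symm_hom, Category.assoc, ← hq, unop_comp, Iso.unop_inv]
  have h : eY.hom.unop ≫ eY.inv.unop = 𝟙 _ := by rw [← unop_comp, Iso.inv_hom_id, unop_id]
  rw [reassoc_of% h]

lemma isoExt_hom_naturality {X Y : ModuleCat.{u} B} (g : X ⟶ Y) (j : ℕ) :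
    ((Ext B (ModuleCat.{u} B) j).obj (Opposite.op M)).map g ≫ (P.isoExt j Y).hom =
    (P.isoExt j X).hom ≫ HomologicalComplex.homologyMap (homCpxMap P g) j :=
  op_aux _ _ _ _ (ProjectiveResolution.leftDerived_app_eq
    (NatTrans.rightOp ((linearYoneda B (ModuleCat.{u} B)).map g)) P j) _ _ _
    (homologyUnop_naturality ((NatTrans.mapHomologicalComplex
      (NatTrans.rightOp ((linearYoneda B (ModuleCat.{u} B)).map g)) _).app P.complex) _ rfl j)

lemma homologyToExt_naturality {X Y : ModuleCat.{u} B} (g : X ⟶ Y) (j : ℕ) :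
    HomologicalComplex.homologyMap (homCpxMap P g) j ≫ homologyToExt P Y j =
    homologyToExt P X j ≫ (extFun M j).map g := by
  rw [← cancel_epi ((homCpx P X).homologyπ j), HomologicalComplex.homologyπ_naturality_assoc,
    π_homologyToExt, ← Category.assoc, π_homologyToExt]
  ext z
  have h1 : (homCpx P Y).iCycles j (HomologicalComplex.cyclesMap (homCpxMap P g) j z) =
      (show P.complex.X j ⟶ X from (homCpx P X).iCycles j z) ≫ g :=
    ConcreteCategory.congr_hom (HomologicalComplex.cyclesMap_i (homCpxMap P g) j) z
  refine Eq.trans ?_ (P.extMk_comp_mk₀ _ (j+1) rfl (homCpx_cocycle P z) g).symm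
  refine (cyclesToExt_apply P Y j _).trans ?_
  congr 1

/-- comparison -/
noncomputable def extIso (M : ModuleCat.{u} B) (j : ℕ) :
    (Ext B (ModuleCat.{u} B) j).obj (Opposite.op M) ≅ extFun M j :=
  NatIso.ofComponents (fun X => (projectiveResolution M).isoExt j X ≪≫
    (LinearEquiv.ofBijective (homologyToExt (projectiveResolution M) X j).hom
      ⟨homologyToExt_injective _ X j, homologyToExt_surjective _ X j⟩).toModuleIso) (by
    intro X Y g
    have h1 := isoExt_hom_naturality (projectiveResolution M) g j
    have h2 := homologyToExt_naturality (projectiveResolution M) g j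
    simp only [Iso.trans_hom, Category.assoc]
    rw [reassoc_of% h1]
    congr 1)

end P1
end VdB

namespace VdB
open CategoryTheory.Limits
section P2
variable {B : Type u} [CommRing B] {A : Type u} [CommRing A]

variable (B) in
/-- free cover functor -/
noncomputable def ffun : ModuleCat.{u} B ⥤ ModuleCat.{u} B := forget _ ⋙ ModuleCat.free B

variable (B) in
/-- free cover -/
noncomputable def fpi : ffun B ⟶ 𝟭 _ := (ModuleCat.adj B).counit

lemma fpi_surj (X : ModuleCat.{u} B) : Function.Surjective ((fpi B).app X) := by
  intro x
  refine ⟨ModuleCat.freeMk x, ?_⟩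
  dsimp [fpi, ModuleCat.adj]
  erw [ModuleCat.freeDesc_apply]
  rfl

instance (X : ModuleCat.{u} B) : Epi ((fpi B).app X) :=
  (ModuleCat.epi_iff_surjective _).2 (fpi_surj X)

variable (B) in
/-- syzygy -/
noncomputable def omega : ModuleCat.{u} B ⥤ ModuleCat.{u} B where
  obj X := kernel ((fpi B).app X)
  map f := kernel.map _ _ ((ffun B).map f) f ((fpi B).naturality f).symm
  map_id X := by
    rw [← cancel_mono (kernel.ι ((fpi B).app X))]
    simp
  map_comp {X Y Z} f g := by
    rw [← cancel_mono (kernel.ι ((fpi B).app Z))]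
    simp

variable (B) in
noncomputable def omegaι : omega B ⟶ ffun B where
  app X := kernel.ι _
  naturality X Y f := by simp [omega]

/-- short complex -/
noncomputable def omegaSC (X : ModuleCat.{u} B) : ShortComplex (ModuleCat.{u} B) :=
  ShortComplex.mk ((omegaι B).app X) ((fpi B).app X) (kernel.condition _)

lemma omegaSC_shortExact (X : ModuleCat.{u} B) : (omegaSC X).ShortExact where
  exact := ShortComplex.exact_kernel _
  mono_f := inferInstanceAs (Mono (kernel.ι ((fpi B).app X)))
  epi_g := by dsimp [omegaSC]; infer_instance

noncomputable def omegaSCMap {X Y : ModuleCat.{u} B} (g : X ⟶ Y) : omegaSC X ⟶ omegaSC Y where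
  τ₁ := (omega B).map g
  τ₂ := (ffun B).map g
  τ₃ := g
  comm₁₂ := ((omegaι B).naturality g)
  comm₂₃ := ((fpi B).naturality g)

def KerStep (T1 T0 : ModuleCat.{u} B ⥤ ModuleCat.{u} A) : Prop :=
  ∃ δ : T1 ⟶ omega B ⋙ T0, (∀ X, Function.Injective (δ.app X)) ∧
    ∀ X, Function.Exact (δ.app X) (T0.map ((omegaι B).app X))

lemma inj_app {T1 T0 : ModuleCat.{u} B ⥤ ModuleCat.{u} A} (e : T1 ≅ T0) (X : ModuleCat.{u} B) :
    Function.Injective (e.hom.app X) := (e.app X).toLinearEquiv.injective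

lemma KerStep.unique {T1 T0 T1' T0' : ModuleCat.{u} B ⥤ ModuleCat.{u} A} (h : KerStep T1 T0)
    (h' : KerStep T1' T0') (e : T0 ≅ T0') : Nonempty (T1 ≅ T1') := by
  obtain ⟨δ, hi, hex⟩ := h
  obtain ⟨δ', hi', hex'⟩ := h'
  have key : ∀ X (x : T1.obj X), ∃ x' : T1'.obj X,
      δ'.app X x' = e.hom.app ((omega B).obj X) (δ.app X x) := by
    intro X x
    refine (hex' X _).1 ?_
    have := ConcreteCategory.congr_hom (e.hom.naturality ((omegaι B).app X)) (δ.app X x)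
    refine this.symm.trans ?_
    have h0 : T0.map ((omegaι B).app X) (δ.app X x) = 0 := (hex X _).2 ⟨x, rfl⟩
    have h1 := congrArg (e.hom.app _) h0
    exact h1.trans (map_zero _)
  choose L hL using key
  let lm : ∀ X, T1.obj X →ₗ[A] T1'.obj X := fun X =>
    { toFun := L X
      map_add' := fun x y => hi' X (by rw [hL, map_add, map_add, map_add, hL, hL])
      map_smul' := fun r x => hi' X (by
        rw [hL]
        refine Eq.trans ?_ ((δ'.app X).hom.map_smul _ _).symm
        refine (congrArg _ ((δ.app X).hom.map_smul _ _)).trans ?_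
        refine ((e.hom.app _).hom.map_smul _ _).trans ?_
        exact congrArg _ (hL X x).symm) }
  have inj : ∀ X, Function.Injective (lm X) := by
    intro X x y hxy
    have h1 : L X x = L X y := hxy
    have h2 := hL X x
    rw [h1, hL X y] at h2
    exact hi X ((inj_app e ((omega B).obj X)) h2.symm)
  have surj : ∀ X, Function.Surjective (lm X) := by
    intro X x'
    have : T0.map ((omegaι B).app X) (e.inv.app _ (δ'.app X x')) = 0 := by
      have := ConcreteCategory.congr_hom (e.inv.naturality ((omegaι B).app X)) (δ'.app X x')
      refine this.symm.trans ?_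
      have h0 : T0'.map ((omegaι B).app X) (δ'.app X x') = 0 := (hex' X _).2 ⟨x', rfl⟩
      have h1 := congrArg (e.inv.app _) h0
      exact h1.trans (map_zero _)
    obtain ⟨x, hx⟩ := (hex X _).1 this
    refine ⟨x, hi' X ?_⟩
    refine (hL X x).trans ?_
    refine (congrArg _ hx).trans ?_
    exact ConcreteCategory.congr_hom (e.inv_hom_id_app ((omega B).obj X)) (δ'.app X x')
  refine ⟨NatIso.ofComponents (fun X => (LinearEquiv.ofBijective (lm X)
    ⟨inj X, surj X⟩).toModuleIso) ?_⟩
  intro X Y g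
  ext x
  apply hi' Y
  refine (hL Y _).trans ?_
  have n1 := ConcreteCategory.congr_hom (δ.naturality g) x
  have n2 := ConcreteCategory.congr_hom (δ'.naturality g) (L X x)
  refine (congrArg _ n1).trans ?_
  refine Eq.trans ?_ n2.symm
  have n3 := ConcreteCategory.congr_hom (e.hom.naturality ((omega B).map g)) (δ.app X x)
  refine n3.trans ?_
  exact congrArg _ (hL X x).symm

lemma KerStep.of_iso {T1 T0 T1' T0' : ModuleCat.{u} B ⥤ ModuleCat.{u} A} (h : KerStep T1 T0)
    (e1 : T1 ≅ T1') (e0 : T0 ≅ T0') : KerStep T1' T0' := by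
  obtain ⟨δ, hi, hex⟩ := h
  refine ⟨e1.inv ≫ δ ≫ Functor.whiskerLeft _ e0.hom, fun X => ?_, fun X y => ?_⟩
  · have h1 : Function.Injective (e1.inv.app X) := inj_app e1.symm X
    have h2 : Function.Injective (e0.hom.app ((omega B).obj X)) := inj_app e0 _
    exact h2.comp ((hi X).comp h1)
  · have nat := ConcreteCategory.congr_hom (e0.inv.naturality ((omegaι B).app X)) y
    have h3 : Function.Injective (e0.inv.app ((ffun B).obj X)) := inj_app e0.symm _
    have h4 : T0'.map ((omegaι B).app X) y = 0 ↔
        T0.map ((omegaι B).app X) (e0.inv.app _ y) = 0 := by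
      rw [← map_eq_zero_iff (e0.inv.app ((ffun B).obj X)).hom h3]
      exact Eq.congr_left nat
    rw [h4, hex X]
    constructor
    · rintro ⟨x, hx⟩
      refine ⟨e1.hom.app X x, ?_⟩
      have a1 := ConcreteCategory.congr_hom (e1.hom_inv_id_app X) x
      have a2 := ConcreteCategory.congr_hom (e0.inv_hom_id_app ((omega B).obj X)) y
      refine Eq.trans ?_ a2
      refine Eq.trans ?_ (congrArg (e0.hom.app _) hx)
      exact congrArg (e0.hom.app _) (congrArg (δ.app X) a1)
    · rintro ⟨x, rfl⟩
      refine ⟨e1.inv.app X x, ?_⟩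
      have a2 := ConcreteCategory.congr_hom (e0.hom_inv_id_app ((omega B).obj X))
        (δ.app X (e1.inv.app X x))
      exact a2.symm

lemma KerStep.restrict {A' : Type u} [CommRing A'] (φ : A' →+* A)
    {T1 T0 : ModuleCat.{u} B ⥤ ModuleCat.{u} A} (h : KerStep T1 T0) :
    KerStep (T1 ⋙ ModuleCat.restrictScalars φ) (T0 ⋙ ModuleCat.restrictScalars φ) := by
  obtain ⟨δ, hi, hex⟩ := h
  exact ⟨Functor.whiskerRight δ _, hi, hex⟩

lemma KerStep.tensor (N : ModuleCat.{u} A) [Module.Flat A N]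
    {T1 T0 : ModuleCat.{u} B ⥤ ModuleCat.{u} A} (h : KerStep T1 T0) :
    KerStep (T1 ⋙ tensorLeft N) (T0 ⋙ tensorLeft N) := by
  obtain ⟨δ, hi, hex⟩ := h
  refine ⟨Functor.whiskerRight δ _, fun X => ?_, fun X => ?_⟩
  · exact Module.Flat.lTensor_preserves_injective_linearMap (δ.app X).hom (hi X)
  · exact Module.Flat.lTensor_exact N (hex X)

lemma KerStep.of_zero {T1 T0 : ModuleCat.{u} B ⥤ ModuleCat.{u} A}
    (h : ∀ X, Subsingleton (T1.obj X))
    (h0 : ∀ X, Function.Injective (T0.map ((omegaι B).app X))) : KerStep T1 T0 := by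
  refine ⟨{ app := fun X => 0, naturality := fun X Y f => by simp }, fun X x y _ => Subsingleton.elim _ _, fun X y => ?_⟩
  constructor
  · intro hy
    exact ⟨0, (map_zero _).trans ((map_eq_zero_iff (T0.map ((omegaι B).app X)).hom (h0 X)).1 hy).symm⟩
  · rintro ⟨x, rfl⟩
    exact map_zero _

lemma iso_of_zero {T1 T0 : ModuleCat.{u} B ⥤ ModuleCat.{u} A}
    (h : ∀ X, Subsingleton (T1.obj X)) (h0 : ∀ X, Subsingleton (T0.obj X)) :
    Nonempty (T1 ≅ T0) :=
  ⟨NatIso.ofComponents (fun X => Iso.mk 0 0 (by ext x; exact (h X).elim _ _)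
      (by ext x; exact (h0 X).elim _ _))
    (fun {X Y} f => by ext x; exact (h0 Y).elim _ _)⟩

lemma subsingleton_of_iso {T1 T0 : ModuleCat.{u} B ⥤ ModuleCat.{u} A} (e : T1 ≅ T0) (X)
    (h : Subsingleton (T0.obj X)) : Subsingleton (T1.obj X) :=
  (e.app X).toLinearEquiv.injective.subsingleton

end P2
end VdB

namespace VdB
open CategoryTheory.Limits
section P2b
variable {B : Type u} [CommRing B]

noncomputable def omegaCls (X : ModuleCat.{u} B) : Abelian.Ext.{u} X ((omega B).obj X) 1 :=
  (omegaSC_shortExact X).extClass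

lemma omegaCls_naturality {X Y : ModuleCat.{u} B} (g : X ⟶ Y) :
    (omegaCls X).comp (Abelian.Ext.mk₀ ((omega B).map g)) (add_zero 1) =
      (Abelian.Ext.mk₀ g).comp (omegaCls Y) (zero_add 1) :=
  ShortComplex.ShortExact.extClass_naturality (omegaSC_shortExact X) (omegaSC_shortExact Y)
    (omegaSCMap g)

lemma kerStep_ext (M : ModuleCat.{u} B) (j : ℕ)
    (h : ∀ X : ModuleCat.{u} B, Subsingleton (Abelian.Ext.{u} M ((ffun B).obj X) j)) :
    KerStep (extFun M j) (extFun M (j+1)) := by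
  refine ⟨{ app := fun X => ModuleCat.ofHom
              { toFun := fun x => x.comp (omegaCls X) rfl
                map_add' := fun x y => by simp
                map_smul' := fun r x => by simp [Abelian.Ext.smul_comp] }
            naturality := fun X Y g => ?_ }, fun X => ?_, fun X y => ?_⟩
  · ext x
    have h1 := omegaCls_naturality g
    change (x.comp (Abelian.Ext.mk₀ g) (add_zero j)).comp (omegaCls Y) rfl =
      (x.comp (omegaCls X) rfl).comp (Abelian.Ext.mk₀ ((omega B).map g)) (add_zero (j+1))
    generalize (show Abelian.Ext.{u} M X j from x) = x
    rw [Abelian.Ext.comp_assoc_of_third_deg_zero, h1, Abelian.Ext.comp_assoc_of_second_deg_zero]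
  · refine (injective_iff_map_eq_zero (ModuleCat.Hom.hom _)).2 fun x hx => ?_
    obtain ⟨y, rfl⟩ := Abelian.Ext.covariant_sequence_exact₃ M (omegaSC_shortExact X) x rfl hx
    rw [(h X).elim y 0]; exact Abelian.Ext.zero_comp _ _ _ _ _
  · constructor
    · intro hy
      exact Abelian.Ext.covariant_sequence_exact₁ M (omegaSC_shortExact X) y hy rfl
    · rintro ⟨x, rfl⟩
      have h1 : (omegaCls X).comp (Abelian.Ext.mk₀ ((omegaι B).app X)) (add_zero 1) = 0 :=
        (omegaSC_shortExact X).extClass_comp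
      refine (Abelian.Ext.comp_assoc _ _ _ rfl (add_zero 1) rfl).trans ?_
      rw [h1]; exact Abelian.Ext.comp_zero _ _ _ _ _

lemma kerStep_ext_zero (M : ModuleCat.{u} B) {T : ModuleCat.{u} B ⥤ ModuleCat.{u} B}
    (hT : ∀ X, Subsingleton (T.obj X)) : KerStep T (extFun M 0) := by
  refine KerStep.of_zero hT fun X => ?_
  have := (omegaSC_shortExact X).mono_f
  exact Abelian.Ext.postcomp_mk₀_injective_of_mono M (omegaSC X).f

end P2b
end VdB

namespace VdB
open CategoryTheory.Limits
section P3
variable {B : Type u} [CommRing B]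

section elements
variable {ι : Type*} {c : ComplexShape ι} (K : HomologicalComplex (ModuleCat.{u} B) c)

lemma exists_cycle {i j : ι} (hij : c.next i = j) (x : K.X i) (hx : K.d i j x = 0) :
    ∃ z : K.cycles i, K.iCycles i z = x := by
  have hex : (ShortComplex.mk _ _ (K.iCycles_d i j)).Exact :=
    ShortComplex.exact_of_f_is_kernel _ (K.cyclesIsKernel i j hij)
  exact (ShortComplex.moduleCat_exact_iff _).1 hex x hx

lemma homologyπ_eq_zero_iff {i j : ι} (hij : c.prev j = i) (z : K.cycles j) :
    K.homologyπ j z = 0 ↔ ∃ y : K.X i, K.d i j y = K.iCycles j z := by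
  have hex : (ShortComplex.mk _ _ (K.toCycles_comp_homologyπ i j)).Exact :=
    ShortComplex.exact_of_g_is_cokernel _ (K.homologyIsCokernel i j hij)
  have hi : Function.Injective (K.iCycles j) := (ModuleCat.mono_iff_injective _).1 inferInstance
  constructor
  · intro h
    obtain ⟨y, hy⟩ := (ShortComplex.moduleCat_exact_iff _).1 hex z h
    refine ⟨y, ?_⟩
    rw [← hy]
    exact (ConcreteCategory.congr_hom (K.toCycles_i i j) y).symm
  · rintro ⟨y, hy⟩
    have : z = K.toCycles i j y := hi (hy.symm.trans (ConcreteCategory.congr_hom (K.toCycles_i i j) y).symm)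
    rw [this]
    exact ConcreteCategory.congr_hom (K.toCycles_comp_homologyπ i j) y

lemma homologyπ_surj (j : ι) : Function.Surjective (K.homologyπ j) :=
  (ModuleCat.epi_iff_surjective _).1 inferInstance

lemma d_iCycles (i j : ι) (z : K.cycles i) : K.d i j (K.iCycles i z) = 0 :=
  ConcreteCategory.congr_hom (K.iCycles_d i j) z

lemma cyclesMap_i_apply {K L : HomologicalComplex (ModuleCat.{u} B) c} (f : K ⟶ L) (i : ι) (z : K.cycles i) :
    L.iCycles i (HomologicalComplex.cyclesMap f i z) = f.f i (K.iCycles i z) :=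
  ConcreteCategory.congr_hom (HomologicalComplex.cyclesMap_i f i) z

lemma homologyMap_π_apply {K L : HomologicalComplex (ModuleCat.{u} B) c} (f : K ⟶ L) (i : ι) (z : K.cycles i) :
    HomologicalComplex.homologyMap f i (K.homologyπ i z) =
      L.homologyπ i (HomologicalComplex.cyclesMap f i z) :=
  ConcreteCategory.congr_hom (HomologicalComplex.homologyπ_naturality f i) z

lemma iCycles_inj (i : ι) : Function.Injective (K.iCycles i) :=
  (ModuleCat.mono_iff_injective _).1 inferInstance

end elements

section shift
/-- `K` is `L` shifted with an extra term in degree 0 -/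
structure Aug (K L : ChainComplex (ModuleCat.{u} B) ℕ) where
  e : ∀ i, K.X (i+1) ≅ L.X i
  comm : ∀ i j, K.d (i+1) (j+1) ≫ (e j).hom = (e i).hom ≫ L.d i j

variable {K L : ChainComplex (ModuleCat.{u} B) ℕ} (a : Aug K L)

/-- cycles map -/
noncomputable def Aug.cyc (i : ℕ) : K.cycles (i+1) ⟶ L.cycles i :=
  L.liftCycles (K.iCycles (i+1) ≫ (a.e i).hom) (i-1) (by cases i <;> simp) (by
    obtain _ | i := i
    · rw [L.shape 0 (0-1) (by simp), comp_zero]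
    · rw [Category.assoc, ← a.comm, ← Category.assoc, K.iCycles_d, zero_comp])

lemma Aug.cyc_i (i : ℕ) : a.cyc i ≫ L.iCycles i = K.iCycles (i+1) ≫ (a.e i).hom := by
  simp [Aug.cyc]

lemma Aug.cyc_i_apply (i : ℕ) (z : K.cycles (i+1)) :
    L.iCycles i (a.cyc i z) = (a.e i).hom (K.iCycles (i+1) z) :=
  ConcreteCategory.congr_hom (a.cyc_i i) z

lemma Aug.cyc_cond (i : ℕ) : K.toCycles (i+2) (i+1) ≫ a.cyc i ≫ L.homologyπ i = 0 := by
  ext y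
  refine (homologyπ_eq_zero_iff L (i := i+1) (by simp) _).2 ⟨(a.e _).hom y, ?_⟩
  refine Eq.trans ?_ (a.cyc_i_apply i _).symm
  have h1 := ConcreteCategory.congr_hom (K.toCycles_i (i+2) (i+1)) y
  have h2 := ConcreteCategory.congr_hom (a.comm (i+1) i) y
  exact h2.symm.trans (congrArg _ h1.symm)

/-- homology map -/
noncomputable def Aug.hom (i : ℕ) : K.homology (i+1) ⟶ L.homology i :=
  (K.homologyIsCokernel (i+2) (i+1) (by simp)).desc (CokernelCofork.ofπ _ (a.cyc_cond i))

lemma Aug.hom_π (i : ℕ) : K.homologyπ (i+1) ≫ a.hom i = a.cyc i ≫ L.homologyπ i :=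
  (K.homologyIsCokernel (i+2) (i+1) (by simp)).fac (CokernelCofork.ofπ _ (a.cyc_cond i))
    WalkingParallelPair.one

lemma Aug.hom_π_apply (i : ℕ) (z : K.cycles (i+1)) :
    a.hom i (K.homologyπ (i+1) z) = L.homologyπ i (a.cyc i z) :=
  ConcreteCategory.congr_hom (a.hom_π i) z

lemma Aug.inj (i : ℕ) : Function.Injective (a.hom i) := by
  refine (injective_iff_map_eq_zero (a.hom i).hom).2 fun w hw => ?_
  obtain ⟨z, rfl⟩ := homologyπ_surj K (i+1) w
  have hw' := (a.hom_π_apply i z).symm.trans hw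
  obtain ⟨y, hy⟩ := (homologyπ_eq_zero_iff L (i := i+1) (by simp) _).1 hw'
  refine (homologyπ_eq_zero_iff K (i := i+2) (by simp) _).2 ⟨(a.e _).inv y, ?_⟩
  apply (a.e i).toLinearEquiv.injective
  have h2 := ConcreteCategory.congr_hom (a.comm (i+1) i) ((a.e _).inv y)
  refine h2.trans ?_
  refine Eq.trans ?_ (hy.trans (a.cyc_i_apply i z))
  exact congrArg _ (ConcreteCategory.congr_hom (a.e (i+1)).inv_hom_id y)

lemma Aug.surj_iff (i : ℕ) (z : L.cycles i) :
    (∃ w, a.hom i w = L.homologyπ i z) ↔ K.d (i+1) i ((a.e i).inv (L.iCycles i z)) = 0 := by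
  constructor
  · rintro ⟨w, hw⟩
    obtain ⟨x, rfl⟩ := homologyπ_surj K (i+1) w
    rw [a.hom_π_apply, ← sub_eq_zero, ← map_sub, homologyπ_eq_zero_iff L (i := i+1) (by simp)] at hw
    obtain ⟨y, hy⟩ := hw
    rw [map_sub, a.cyc_i_apply] at hy
    have hz : L.iCycles i z = (a.e i).hom (K.iCycles (i+1) x) - L.d (i+1) i y := by
      rw [hy]; abel
    rw [hz, map_sub, map_sub]
    have e1 : (a.e i).inv ((a.e i).hom (K.iCycles (i+1) x)) = K.iCycles (i+1) x :=
      ConcreteCategory.congr_hom (a.e i).hom_inv_id _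
    have e2 : (a.e i).inv (L.d (i+1) i y) = K.d (i+2) (i+1) ((a.e (i+1)).inv y) := by
      apply (a.e i).toLinearEquiv.injective
      have h2 := ConcreteCategory.congr_hom (a.comm (i+1) i) ((a.e _).inv y)
      refine Eq.trans ?_ h2.symm
      refine (ConcreteCategory.congr_hom (a.e i).inv_hom_id _).trans ?_
      exact (congrArg (L.d (i+1) i) (ConcreteCategory.congr_hom (a.e (i+1)).inv_hom_id y)).symm
    rw [e1, e2, d_iCycles]
    have := ConcreteCategory.congr_hom (K.d_comp_d (i+2) (i+1) i) ((a.e (i+1)).inv y)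
    rw [zero_sub, neg_eq_zero]
    exact this
  · intro h
    obtain ⟨x, hx⟩ := exists_cycle K (i := i+1) (j := i) (by simp) _ h
    refine ⟨K.homologyπ _ x, ?_⟩
    rw [a.hom_π_apply]
    congr 1
    apply iCycles_inj
    rw [a.cyc_i_apply, hx]
    exact ConcreteCategory.congr_hom (a.e i).inv_hom_id _

lemma Aug.surj_succ (i : ℕ) : Function.Surjective (a.hom (i+1)) := by
  intro w
  obtain ⟨z, rfl⟩ := homologyπ_surj L (i+1) w
  refine (a.surj_iff _ z).2 ?_
  apply (a.e i).toLinearEquiv.injective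
  rw [map_zero]
  have h2 := ConcreteCategory.congr_hom (a.comm (i+1) i) ((a.e _).inv (L.iCycles (i+1) z))
  refine h2.trans ?_
  refine (congrArg _ (ConcreteCategory.congr_hom (a.e (i+1)).inv_hom_id _)).trans ?_
  exact d_iCycles L _ _ z

lemma Aug.nat {K' L' : ChainComplex (ModuleCat.{u} B) ℕ} (a' : Aug K' L') (f : K ⟶ K') (g : L ⟶ L')
    (h : ∀ i, f.f (i+1) ≫ (a'.e i).hom = (a.e i).hom ≫ g.f i) (i : ℕ) :
    HomologicalComplex.homologyMap f (i+1) ≫ a'.hom i =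
      a.hom i ≫ HomologicalComplex.homologyMap g i := by
  rw [← cancel_epi (K.homologyπ (i+1)), HomologicalComplex.homologyπ_naturality_assoc, a'.hom_π,
    ← Category.assoc (K.homologyπ (i+1)), a.hom_π, Category.assoc,
    HomologicalComplex.homologyπ_naturality, ← Category.assoc, ← Category.assoc]
  congr 1
  rw [← cancel_mono (L'.iCycles i)]
  simp only [Category.assoc, HomologicalComplex.cyclesMap_i, Aug.cyc_i]
  rw [← Category.assoc (a.cyc i), a.cyc_i, Category.assoc, ← h,
    ← Category.assoc, HomologicalComplex.cyclesMap_i, Category.assoc]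

end shift
end P3
end VdB

namespace VdB
open CategoryTheory.Limits
section P3b
variable {B : Type u} [CommRing B]

instance (X : ModuleCat.{u} B) : Projective ((ffun B).obj X) := by
  dsimp [ffun]; infer_instance

noncomputable abbrev resQ (X : ModuleCat.{u} B) : ProjectiveResolution ((omega B).obj X) :=
  projectiveResolution ((omega B).obj X)

noncomputable def resS (X : ModuleCat.{u} B) : ChainComplex (ModuleCat.{u} B) ℕ :=
  ChainComplex.augment (resQ X).complex (X := (ffun B).obj X)
    ((show (resQ X).complex.X 0 ⟶ (omega B).obj X from (resQ X).π.f 0) ≫ (omegaι B).app X)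
    (by
      have := (resQ X).complex_d_comp_π_f_zero
      erw [← Category.assoc, this, zero_comp])

lemma resS_d10 (X : ModuleCat.{u} B) : (resS X).d 1 0 = 
    (show (resQ X).complex.X 0 ⟶ (omega B).obj X from (resQ X).π.f 0) ≫ (omegaι B).app X := rfl

lemma resS_d (X : ModuleCat.{u} B) (i j : ℕ) : (resS X).d (i+1) (j+1) = (resQ X).complex.d i j :=
  ChainComplex.augment_d_succ_succ _ _ _ _ _

lemma omegaι_inj (X : ModuleCat.{u} B) : Function.Injective ((omegaι B).app X) :=
  (ModuleCat.mono_iff_injective _).1 (omegaSC_shortExact X).mono_f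

lemma omega_exact (X : ModuleCat.{u} B) (y : (ffun B).obj X) (hy : (fpi B).app X y = 0) :
    ∃ w, (omegaι B).app X w = y :=
  (ShortComplex.moduleCat_exact_iff _).1 (omegaSC_shortExact X).exact y hy

lemma resQ_surj (X : ModuleCat.{u} B) : Function.Surjective
    (show (resQ X).complex.X 0 ⟶ (omega B).obj X from (resQ X).π.f 0) :=
  (ModuleCat.epi_iff_surjective _).1 (inferInstanceAs (Epi ((resQ X).π.f 0)))

lemma resS_exactAt_succ (X : ModuleCat.{u} B) (n : ℕ) : (resS X).ExactAt (n+1) := by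
  rw [HomologicalComplex.exactAt_iff' _ (n + 1 + 1) (n + 1) n (by simp) (by simp)]
  rw [ShortComplex.moduleCat_exact_iff]
  intro x hx
  obtain _ | n := n
  · have hx' : (omegaι B).app X
      ((show (resQ X).complex.X 0 ⟶ (omega B).obj X from (resQ X).π.f 0) x) = 0 := hx
    have h2 := omegaι_inj X (hx'.trans (map_zero _).symm)
    exact (ShortComplex.moduleCat_exact_iff _).1 (resQ X).exact₀ x h2
  · have := (ShortComplex.moduleCat_exact_iff _).1 ((resQ X).exact_succ n) x (by
      have h3 := resS_d X (n+1) n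
      exact hx)
    exact this

noncomputable def resP (X : ModuleCat.{u} B) : ProjectiveResolution X where
  complex := resS X
  projective n := by
    obtain _ | n := n
    · exact inferInstanceAs (Projective ((ffun B).obj X))
    · exact inferInstanceAs (Projective ((resQ X).complex.X n))
  π := (ChainComplex.toSingle₀Equiv _ _).symm ⟨(fpi B).app X, by
    rw [resS_d10]
    erw [Category.assoc, (omegaSC X).zero, comp_zero]⟩
  quasiIso := ⟨fun n => by
    cases n
    · rw [ChainComplex.quasiIsoAt₀_iff, ShortComplex.quasiIso_iff_of_zeros']
      · constructor
        · rw [ShortComplex.moduleCat_exact_iff]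
          intro y hy
          obtain ⟨w, rfl⟩ := omega_exact X y hy
          obtain ⟨z, rfl⟩ := resQ_surj X w
          exact ⟨z, rfl⟩
        · exact inferInstanceAs (Epi ((fpi B).app X))
      all_goals rfl
    · rw [quasiIsoAt_iff_exactAt']
      · apply resS_exactAt_succ
      · apply ChainComplex.exactAt_succ_single_obj⟩

lemma resP_π (X : ModuleCat.{u} B) : (resP X).π.f 0 = (fpi B).app X := rfl

noncomputable def resQMap {X Y : ModuleCat.{u} B} (g : X ⟶ Y) : (resQ X).complex ⟶ (resQ Y).complex :=
  ProjectiveResolution.lift ((omega B).map g) (resQ X) (resQ Y)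

lemma resQMap_comm {X Y : ModuleCat.{u} B} (g : X ⟶ Y) :
    (resQMap g).f 0 ≫ (resQ Y).π.f 0 = (resQ X).π.f 0 ≫ (omega B).map g := by
  have := HomologicalComplex.congr_hom
    (ProjectiveResolution.lift_commutes ((omega B).map g) (resQ X) (resQ Y)) 0
  refine Eq.trans this ?_
  exact congrArg (fun t => (resQ X).π.f 0 ≫ t) (ChainComplex.single₀_map_f_zero _)

lemma cat_lem1 {C : Type*} [Category C] {a a' b b' c c' d d' : C} {p : a ⟶ a'} {q' : a' ⟶ b'}
    {q : a ⟶ b} {m : b ⟶ b'} {r : b ⟶ c} {r' : b' ⟶ c'} {n : c ⟶ c'} {s : c ⟶ d} {s' : c' ⟶ d'}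
    {t : d ⟶ d'} (h1 : p ≫ q' = q ≫ m) (h2 : s ≫ t = n ≫ s') (h3 : m ≫ r' = r ≫ n) :
    p ≫ q' ≫ r' ≫ s' = (q ≫ r ≫ s) ≫ t := by
  rw [reassoc_of% h1, reassoc_of% h3]
  simp [h2]

lemma cat_lem2 {C : Type*} [Category C] {a b c d e f : C} {p : a ⟶ b} (i : c ≅ b) {q : c ⟶ e}
    {r : b ⟶ d} {s : d ⟶ e} {t : a ⟶ f} {u : f ⟶ d} {v : f ⟶ e} 
    (h1 : q = i.hom ≫ r ≫ s) (h2 : p ≫ r = t ≫ u) (h3 : u ≫ s = v) :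
    p ≫ i.inv ≫ q = t ≫ v := by
  rw [h1, Iso.inv_hom_id_assoc, reassoc_of% h2, h3]

noncomputable def resSMap {X Y : ModuleCat.{u} B} (g : X ⟶ Y) : resS X ⟶ resS Y where
  f | 0 => (ffun B).map g
    | i+1 => (resQMap g).f i
  comm' i j hij := by
    obtain rfl : j + 1 = i := hij
    obtain _ | j := j
    · have h1 := resQMap_comm g
      have h2 := (omegaι B).naturality g
      change (resQMap g).f 0 ≫ (resQ Y).π.f 0 ≫ (omegaι B).app Y =
        ((resQ X).π.f 0 ≫ (omegaι B).app X) ≫ (ffun B).map g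
      erw [← Category.assoc, h1, Category.assoc, Category.assoc, h2]
      exact (Category.assoc _ _ _).symm
    · have := (resQMap g).comm (j+1) j
      exact this

/-- the augmentation structure after applying a functor -/
noncomputable def augG (G : ModuleCat.{u} B ⥤ ModuleCat.{u} B) [G.Additive] (X : ModuleCat.{u} B) :
    Aug ((G.mapHomologicalComplex _).obj (resP X).complex)
      ((G.mapHomologicalComplex _).obj (resQ X).complex) where
  e i := Iso.refl (G.obj ((resQ X).complex.X i))
  comm i j := by
    refine (Category.comp_id _).trans (Eq.trans ?_ (Category.id_comp _).symm)
    exact congrArg G.map (resS_d X i j)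

lemma augG_nat (G : ModuleCat.{u} B ⥤ ModuleCat.{u} B) [G.Additive] {X Y : ModuleCat.{u} B}
    (g : X ⟶ Y) (i : ℕ) :
    HomologicalComplex.homologyMap
      ((G.mapHomologicalComplex (ComplexShape.down ℕ)).map
        (show (resP X).complex ⟶ (resP Y).complex from resSMap g)) (i+1) ≫ (augG G Y).hom i =
      (augG G X).hom i ≫ HomologicalComplex.homologyMap
        ((G.mapHomologicalComplex (ComplexShape.down ℕ)).map (resQMap g)) i := by
  refine Aug.nat _ _ _ _ (fun i => ?_) i
  exact (Category.comp_id _).trans (Category.id_comp _).symm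

noncomputable def derδ (G : ModuleCat.{u} B ⥤ ModuleCat.{u} B) [G.Additive] (i : ℕ) :
    G.leftDerived (i+1) ⟶ omega B ⋙ G.leftDerived i where
  app X := ((resP X).isoLeftDerivedObj G (i+1)).hom ≫ (augG G X).hom i ≫
    ((resQ X).isoLeftDerivedObj G i).inv
  naturality X Y g := by
    have h1 := ProjectiveResolution.isoLeftDerivedObj_hom_naturality g (resP X) (resP Y)
      (resSMap g) (by exact ((fpi B).naturality g)) G (i+1)
    have h2 := ProjectiveResolution.isoLeftDerivedObj_inv_naturality ((omega B).map g)
      (resQ X) (resQ Y) (resQMap g) (resQMap_comm g) G i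
    have h3 := augG_nat G g i
    exact cat_lem1 h1 h2 h3

lemma der_zero_iff (G : ModuleCat.{u} B ⥤ ModuleCat.{u} B) [G.Additive] [PreservesFiniteColimits G]
    {Z : ModuleCat.{u} B} (Q : ProjectiveResolution Z)
    (z : ((G.mapHomologicalComplex _).obj Q.complex).cycles 0) :
    G.fromLeftDerivedZero.app Z ((Q.isoLeftDerivedObj G 0).inv
      (((G.mapHomologicalComplex _).obj Q.complex).homologyπ 0 z)) =
    G.map (show Q.complex.X 0 ⟶ Z from Q.π.f 0)
      (((G.mapHomologicalComplex _).obj Q.complex).iCycles 0 z) := by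
  have h : ((G.mapHomologicalComplex _).obj Q.complex).homologyπ 0 ≫ (Q.isoLeftDerivedObj G 0).inv ≫
      G.fromLeftDerivedZero.app Z = ((G.mapHomologicalComplex _).obj Q.complex).iCycles 0 ≫
      G.map (show Q.complex.X 0 ⟶ Z from Q.π.f 0) := by
    have := Q.fromLeftDerivedZero_eq G
    refine cat_lem2 (Q.isoLeftDerivedObj G 0) this
      (HomologicalComplex.homology_π_ι _) ?_
    exact ProjectiveResolution.pOpcycles_comp_fromLeftDerivedZero' Q G
  exact ConcreteCategory.congr_hom h z

lemma kerStep_der (G : ModuleCat.{u} B ⥤ ModuleCat.{u} B) [G.Additive] [PreservesFiniteColimits G]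
    (i : ℕ) : KerStep (G.leftDerived (i+1)) (G.leftDerived i) := by
  refine ⟨derδ G i, fun X => ?_, fun X y => ?_⟩
  · have h1 := ((resP X).isoLeftDerivedObj G (i+1)).toLinearEquiv.injective
    have h2 := ((resQ X).isoLeftDerivedObj G i).symm.toLinearEquiv.injective
    exact h2.comp (((augG G X).inj i).comp h1)
  · have h1 : (∃ x, (derδ G i).app X x = y) ↔
      ∃ w, (augG G X).hom i w = ((resQ X).isoLeftDerivedObj G i).hom y := by
      constructor
      · rintro ⟨x, rfl⟩
        refine ⟨((resP X).isoLeftDerivedObj G (i+1)).hom x, ?_⟩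
        exact (ConcreteCategory.congr_hom ((resQ X).isoLeftDerivedObj G i).inv_hom_id _).symm
      · rintro ⟨w, hw⟩
        refine ⟨((resP X).isoLeftDerivedObj G (i+1)).inv w, ?_⟩
        have a1 := ConcreteCategory.congr_hom ((resP X).isoLeftDerivedObj G (i+1)).inv_hom_id w
        have a2 := ConcreteCategory.congr_hom ((resQ X).isoLeftDerivedObj G i).hom_inv_id y
        refine Eq.trans ?_ a2
        exact congrArg ((resQ X).isoLeftDerivedObj G i).inv
          ((congrArg ((augG G X).hom i) a1).trans hw)
    refine Iff.trans ?_ h1.symm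
    obtain _ | i := i
    · obtain ⟨z, hz⟩ := homologyπ_surj _ 0 (((resQ X).isoLeftDerivedObj G 0).hom y)
      rw [← hz, Aug.surj_iff]
      have hy : y = ((resQ X).isoLeftDerivedObj G 0).inv
          (((G.mapHomologicalComplex _).obj (resQ X).complex).homologyπ 0 z) := by
        rw [hz]
        exact (ConcreteCategory.congr_hom ((resQ X).isoLeftDerivedObj G 0).hom_inv_id y).symm
      have h3 : Function.Injective (G.fromLeftDerivedZero.app ((ffun B).obj X)) :=
        inj_app G.leftDerivedZeroIsoSelf ((ffun B).obj X)
      rw [← map_eq_zero_iff (G.fromLeftDerivedZero.app ((ffun B).obj X)).hom h3]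
      have n1 := ConcreteCategory.congr_hom (G.fromLeftDerivedZero.naturality ((omegaι B).app X)) y
      have n2 := der_zero_iff G (resQ X) z
      rw [← hy] at n2
      have n3 : (G.fromLeftDerivedZero.app ((ffun B).obj X)).hom
        ((G.leftDerived 0).map ((omegaι B).app X) y) = _ :=
        n1.trans (congrArg (G.map ((omegaι B).app X)) n2)
      refine (Eq.congr_left n3).trans (Eq.congr_left ?_)
      exact (ConcreteCategory.congr_hom (G.map_comp
        (show (resQ X).complex.X 0 ⟶ (omega B).obj X from (resQ X).π.f 0)
        ((omegaι B).app X)) _).symm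
    · refine iff_of_true ?_ ((augG G X).surj_succ i _)
      have := G.isZero_leftDerived_obj_projective_succ i ((ffun B).obj X)
      exact (ModuleCat.subsingleton_of_isZero this).elim _ _

end P3b
end VdB

namespace VdB
open CategoryTheory.Limits
section P3c
variable {B : Type u} [CommRing B]

instance tl_colim (M : ModuleCat.{u} B) : PreservesFiniteColimits ((tensoringLeft (ModuleCat.{u} B)).obj M) :=
  inferInstanceAs (PreservesFiniteColimits (tensorLeft M))

lemma kerStep_tor (M : ModuleCat.{u} B) (i : ℕ) :
    KerStep ((Tor (ModuleCat.{u} B) (i+1)).obj M) ((Tor (ModuleCat.{u} B) i).obj M) :=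
  kerStep_der ((tensoringLeft (ModuleCat.{u} B)).obj M) i

noncomputable def torZeroIso (M : ModuleCat.{u} B) : (Tor (ModuleCat.{u} B) 0).obj M ≅ tensorLeft M :=
  Functor.leftDerivedZeroIsoSelf ((tensoringLeft (ModuleCat.{u} B)).obj M)

end P3c
end VdB

namespace VdB
open CategoryTheory.Limits
open scoped TensorProduct
section P4
variable {B : Type u} [CommRing B]

/-- precomposition -/
noncomputable def pre {M' M : ModuleCat.{u} B} {a : ℕ} (α : Abelian.Ext.{u} M' M a)
    (X : ModuleCat.{u} B) {b c : ℕ} (h : a + b = c) :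
    Abelian.Ext.{u} M X b →ₗ[B] Abelian.Ext.{u} M' X c := α.precompOfLinear B X h

lemma pre_apply {M' M : ModuleCat.{u} B} {a : ℕ} (α : Abelian.Ext.{u} M' M a)
    (X : ModuleCat.{u} B) {b c : ℕ} (h : a + b = c) (x : Abelian.Ext.{u} M X b) :
    pre α X h x = α.comp x h := rfl

/-- postcomposition -/
noncomputable def post (M : ModuleCat.{u} B) (j : ℕ) {X Y : ModuleCat.{u} B} (g : X ⟶ Y) :
    Abelian.Ext.{u} M X j →ₗ[B] Abelian.Ext.{u} M Y j := ((extFun M j).map g).hom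

lemma post_apply (M : ModuleCat.{u} B) (j : ℕ) {X Y : ModuleCat.{u} B} (g : X ⟶ Y)
    (x : Abelian.Ext.{u} M X j) : post M j g x = x.comp (Abelian.Ext.mk₀ g) (add_zero j) := rfl

/-- element as a morphism -/
abbrev spn {X : ModuleCat.{u} B} (x : X) : ModuleCat.of B B ⟶ X :=
  ModuleCat.ofHom (LinearMap.toSpanSingleton B X x)

/-- evaluation map -/
noncomputable def ev (M : ModuleCat.{u} B) (j : ℕ) (X : ModuleCat.{u} B) :
    Abelian.Ext.{u} M (ModuleCat.of B B) j ⊗[B] X →ₗ[B] Abelian.Ext.{u} M X j :=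
  TensorProduct.lift (LinearMap.mk₂ B (fun e x => post M j (spn x) e)
    (fun e e' x => map_add _ _ _)
    (fun r e x => map_smul _ _ _)
    (fun e x x' => by
      have : spn (x + x') = spn x + spn x' := by
        ext; simp [spn]
      rw [this, post_apply, Abelian.Ext.mk₀_add, Abelian.Ext.comp_add]; rfl)
    (fun r e x => by
      have : spn (r • x) = r • spn x := by
        ext; simp [spn]
      rw [this, post_apply, Abelian.Ext.mk₀_smul, Abelian.Ext.comp_smul]; rfl))

lemma ev_tmul (M : ModuleCat.{u} B) (j : ℕ) (X : ModuleCat.{u} B)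
    (e : Abelian.Ext.{u} M (ModuleCat.of B B) j) (x : X) :
    ev M j X (e ⊗ₜ x) = post M j (spn x) e := rfl

lemma post_post (M : ModuleCat.{u} B) (j : ℕ) {X Y Z : ModuleCat.{u} B} (g : X ⟶ Y) (h : Y ⟶ Z)
    (x : Abelian.Ext.{u} M X j) : post M j h (post M j g x) = post M j (g ≫ h) x := by
  simp only [post, Functor.map_comp]
  rfl

lemma ev_post (M : ModuleCat.{u} B) (j : ℕ) {X Y : ModuleCat.{u} B} (g : X ⟶ Y) :
    post M j g ∘ₗ ev M j X = ev M j Y ∘ₗ LinearMap.lTensor _ g.hom := by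
  apply TensorProduct.ext'
  intro e x
  simp only [LinearMap.comp_apply, LinearMap.lTensor_tmul, ev_tmul, post_post]
  have : spn x ≫ g = spn (g.hom x) := by
    ext
    simp [spn]
  rw [this]

lemma ev_pre {M' M : ModuleCat.{u} B} {a : ℕ} (α : Abelian.Ext.{u} M' M a)
    (X : ModuleCat.{u} B) {b c : ℕ} (h : a + b = c) :
    pre α X h ∘ₗ ev M b X = ev M' c X ∘ₗ LinearMap.rTensor _ (pre α _ h) := by
  apply TensorProduct.ext'
  intro e x
  simp only [LinearMap.comp_apply, LinearMap.rTensor_tmul, ev_tmul, post_apply, pre_apply]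
  exact (Abelian.Ext.comp_assoc_of_third_deg_zero _ _ _ _).symm

/-- Ext zero as hom -/
noncomputable def ext0 (M X : ModuleCat.{u} B) : Abelian.Ext.{u} M X 0 ≃ₗ[B] (M →ₗ[B] X) :=
  (Abelian.Ext.linearEquiv₀ (R := B)).trans ModuleCat.homLinearEquiv

lemma ext0_mk₀ {M X : ModuleCat.{u} B} (f : M ⟶ X) : ext0 M X (Abelian.Ext.mk₀ f) = f.hom := by
  have : Abelian.Ext.linearEquiv₀ (R := B) (Abelian.Ext.mk₀ f) = f :=
    Abelian.Ext.homEquiv₀.apply_symm_apply f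
  exact congrArg ModuleCat.Hom.hom this

lemma ev_zero (M X : ModuleCat.{u} B) :
    (ext0 M X).toLinearMap ∘ₗ ev M 0 X = dualTensorHom B M X ∘ₗ
      LinearMap.rTensor X (ext0 M (ModuleCat.of B B)).toLinearMap := by
  apply TensorProduct.ext'
  intro e x
  obtain ⟨f, rfl⟩ := (Abelian.Ext.mk₀_bijective _ _).2 e
  simp only [LinearMap.comp_apply, LinearMap.rTensor_tmul, ev_tmul, post_apply,
    Abelian.Ext.mk₀_comp_mk₀, LinearEquiv.coe_coe, ext0_mk₀]
  ext m
  have := ext0_mk₀ f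
  simp only [dualTensorHom_apply]
  rw [this]
  simp [spn]

lemma ev_zero_bij (M X : ModuleCat.{u} B) [Module.Finite B M] [Module.Projective B M] :
    Function.Bijective (ev M 0 X) := by
  have h1 : Function.Bijective ((ext0 M X).toLinearMap ∘ₗ ev M 0 X) := by
    rw [ev_zero]
    have h2 : Function.Bijective (LinearMap.rTensor X (ext0 M (ModuleCat.of B B)).toLinearMap) :=
      (LinearEquiv.rTensor X (ext0 M (ModuleCat.of B B))).bijective
    have h3 : Function.Bijective (dualTensorHom B M X) := dualTensorHom_bijective
    exact h3.comp h2
  exact (Function.Bijective.of_comp_iff' (ext0 M X).bijective _).1 h1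

lemma pre_inj0 {M' M : ModuleCat.{u} B} (f : M' ⟶ M) (hf : Function.Surjective f) 
    (X : ModuleCat.{u} B) : Function.Injective (pre (Abelian.Ext.mk₀ f) X (zero_add 0)) := by
  have : Epi f := (ModuleCat.epi_iff_surjective _).2 hf
  intro x y h
  obtain ⟨x, rfl⟩ := (Abelian.Ext.mk₀_bijective _ _).2 x
  obtain ⟨y, rfl⟩ := (Abelian.Ext.mk₀_bijective _ _).2 y
  simp only [pre_apply, Abelian.Ext.mk₀_comp_mk₀] at h
  rw [(cancel_epi f).1 ((Abelian.Ext.mk₀_bijective _ _).1 h)]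

lemma ev_zero_inj (M X : ModuleCat.{u} B) [Module.Finite B M] [Module.Flat B X] :
    Function.Injective (ev M 0 X) := by
  obtain ⟨n, f, hf⟩ := Module.Finite.exists_fin' B M
  have h := ev_pre (Abelian.Ext.mk₀ (ModuleCat.ofHom f)) X (zero_add 0)
  have h1 : Function.Injective (pre (Abelian.Ext.mk₀ (ModuleCat.ofHom f)) X (zero_add 0) ∘ₗ
      ev M 0 X) := by
    rw [h]
    refine (ev_zero_bij (ModuleCat.of B (Fin n → B)) X).1.comp ?_
    exact Module.Flat.rTensor_preserves_injective_linearMap _ (pre_inj0 _ hf _)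
  exact Function.Injective.of_comp (f := pre (Abelian.Ext.mk₀ (ModuleCat.ofHom f)) X (zero_add 0)) h1

lemma pre_exact₂ {S : ShortComplex (ModuleCat.{u} B)} (hS : S.ShortExact) (X : ModuleCat.{u} B)
    (j : ℕ) : Function.Exact (pre (Abelian.Ext.mk₀ S.g) X (zero_add j))
      (pre (Abelian.Ext.mk₀ S.f) X (zero_add j)) := by
  intro y
  constructor
  · intro h
    exact Abelian.Ext.contravariant_sequence_exact₂ hS X y h
  · rintro ⟨x, rfl⟩
    simp [pre_apply]

lemma pre_exact₁ {S : ShortComplex (ModuleCat.{u} B)} (hS : S.ShortExact) (X : ModuleCat.{u} B)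
    (j : ℕ) : Function.Exact (pre (Abelian.Ext.mk₀ S.f) X (zero_add j))
      (pre hS.extClass X (add_comm 1 j)) := by
  intro y
  constructor
  · intro h
    exact Abelian.Ext.contravariant_sequence_exact₁ hS X y (add_comm 1 j) h
  · rintro ⟨x, rfl⟩
    simp only [pre_apply]
    rw [← Abelian.Ext.comp_assoc (a₁₂ := 1) _ _ _ (add_zero 1) (zero_add j) (by omega)]
    simp

lemma ev_bij [IsNoetherianRing B] (X : ModuleCat.{u} B) [Module.Flat B X] (j : ℕ)
    (M : ModuleCat.{u} B) [Module.Finite B M] : Function.Bijective (ev M j X) := by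
  induction j generalizing M with
  | zero =>
    obtain ⟨n, f, hf⟩ := Module.Finite.exists_fin' B M
    have hS := LinearMap.shortExact_shortComplexKer hf
    refine LinearMap.bijective_of_bijective_of_injective_of_left_exact 
      (LinearMap.rTensor X (pre (Abelian.Ext.mk₀ f.shortComplexKer.g) (ModuleCat.of B B) (zero_add 0)))
      (LinearMap.rTensor X (pre (Abelian.Ext.mk₀ f.shortComplexKer.f) (ModuleCat.of B B) (zero_add 0)))
      (pre (Abelian.Ext.mk₀ f.shortComplexKer.g) X (zero_add 0))
      (pre (Abelian.Ext.mk₀ f.shortComplexKer.f) X (zero_add 0))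
      (ev M 0 X) (ev _ 0 X) (ev _ 0 X) (ev_pre _ _ _) (ev_pre _ _ _) ?_ ?_ ?_ ?_ ?_ ?_
    · exact Module.Flat.rTensor_exact X (pre_exact₂ hS _ 0)
    · exact pre_exact₂ hS _ 0
    · exact ev_zero_bij (ModuleCat.of B (Fin n → B)) X
    · exact ev_zero_inj (ModuleCat.of B (LinearMap.ker f)) X
    · exact Module.Flat.rTensor_preserves_injective_linearMap _ (pre_inj0 _ hf _)
    · exact pre_inj0 _ hf _
  | succ j ih =>
    obtain ⟨n, f, hf⟩ := Module.Finite.exists_fin' B M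
    have hS := LinearMap.shortExact_shortComplexKer hf
    have hP : Projective f.shortComplexKer.X₂ := 
      inferInstanceAs (Projective (ModuleCat.of B (Fin n → B)))
    have hsurj : ∀ Y, Function.Surjective (pre hS.extClass Y (add_comm 1 j)) := fun Y => 
      precomp_extClass_surjective_of_projective_X₂ Y hS j
    refine LinearMap.bijective_of_surjective_of_bijective_of_right_exact
      (LinearMap.rTensor X (pre (Abelian.Ext.mk₀ f.shortComplexKer.f) (ModuleCat.of B B) (zero_add j)))
      (LinearMap.rTensor X (pre hS.extClass (ModuleCat.of B B) (add_comm 1 j)))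
      (pre (Abelian.Ext.mk₀ f.shortComplexKer.f) X (zero_add j))
      (pre hS.extClass X (add_comm 1 j))
      (ev _ j X) (ev _ j X) (ev M (j+1) X) (ev_pre _ _ _) (ev_pre _ _ _) ?_ ?_ ?_ ?_ ?_ ?_
    · exact rTensor_exact X (pre_exact₁ hS _ j) (hsurj _)
    · exact pre_exact₁ hS _ j
    · exact (ih (ModuleCat.of B (Fin n → B))).2
    · exact ih (ModuleCat.of B (LinearMap.ker f))
    · exact LinearMap.rTensor_surjective _ (hsurj _)
    · exact hsurj _

end P4
end VdB

namespace VdB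
open CategoryTheory.Limits
open scoped TensorProduct
section P4b
variable {B : Type u} [CommRing B]

lemma perfect_vanish (n : ℕ) : ∀ (M : Type u) [AddCommGroup M] [Module B M]
    (_ : Module.IsPerfectLE B n M) (j : ℕ) (_ : n < j) (X : ModuleCat.{u} B),
    Subsingleton (Abelian.Ext.{u} (ModuleCat.of B M) X j) := by
  induction n with
  | zero =>
    intro M _ _ h j hj X
    obtain ⟨_, _⟩ := h
    obtain _ | j := j
    · omega
    · exact subsingleton_of_forall_eq 0 fun x => Abelian.Ext.eq_zero_of_projective x
  | succ n ih =>
    intro M _ _ h j hj X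
    obtain ⟨P, _, _, f, _, _, hf, h⟩ := h
    obtain _ | j := j
    · omega
    have hS := LinearMap.shortExact_shortComplexKer hf
    have hP : Projective f.shortComplexKer.X₂ := 
      inferInstanceAs (Projective (ModuleCat.of B P))
    have hsurj : Function.Surjective (pre hS.extClass X (add_comm 1 j)) := 
      precomp_extClass_surjective_of_projective_X₂ X hS j
    have := ih _ h j (by omega) X
    have h2 : Subsingleton (Abelian.Ext.{u} f.shortComplexKer.X₁ X j) := this
    exact hsurj.subsingleton

instance ffun_flat (X : ModuleCat.{u} B) : Module.Flat B ((ffun B).obj X) :=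
  inferInstanceAs (Module.Flat B (X →₀ B))

lemma ext_flat_vanish [IsNoetherianRing B] (M : ModuleCat.{u} B) [Module.Finite B M] (j : ℕ)
    (h : Subsingleton (Abelian.Ext.{u} M (ModuleCat.of B B) j)) (X : ModuleCat.{u} B) [Module.Flat B X] :
    Subsingleton (Abelian.Ext.{u} M X j) := by
  have := (ev_bij X j M).2
  exact this.subsingleton

lemma vanish_above [IsNoetherianRing B] (M : ModuleCat.{u} B) [Module.Finite B M] (n d : ℕ)
    (hd : ∀ j, d < j → ∀ X, Subsingleton (Abelian.Ext.{u} M X j))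
    (h : ∀ j, n < j → Subsingleton (Abelian.Ext.{u} M (ModuleCat.of B B) j)) (j : ℕ) (hj : n < j)
    (X : ModuleCat.{u} B) : Subsingleton (Abelian.Ext.{u} M X j) := by
  have key : ∀ k j, d < j + k → n < j → ∀ X, Subsingleton (Abelian.Ext.{u} M X j) := by
    intro k
    induction k with
    | zero => intro j h1 _ X; exact hd j h1 X
    | succ k ih =>
      intro j h1 h2 X
      obtain ⟨δ, hi, -⟩ := kerStep_ext M j (fun X => ext_flat_vanish M j (h j h2) _)
      have : Subsingleton (Abelian.Ext.{u} M ((omega B).obj X) (j+1)) := 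
        ih (j+1) (by omega) (by omega) _
      have h3 : Subsingleton ((omega B ⋙ extFun M (j + 1)).obj X) := this
      exact (hi X).subsingleton
  exact key (d+1) j (by omega) hj X

lemma post_exact₂ (M : ModuleCat.{u} B) {S : ShortComplex (ModuleCat.{u} B)} (hS : S.ShortExact) 
    (j : ℕ) : Function.Exact (post M j S.f) (post M j S.g) := by
  intro y
  constructor
  · intro h
    exact Abelian.Ext.covariant_sequence_exact₂ M hS y h
  · rintro ⟨x, rfl⟩
    simp only [post_post, S.zero, post_apply]
    simp

lemma post_surj (M : ModuleCat.{u} B) {S : ShortComplex (ModuleCat.{u} B)} (hS : S.ShortExact) 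
    (j : ℕ) (h : Subsingleton (Abelian.Ext.{u} M S.X₁ (j+1))) : Function.Surjective (post M j S.g) := by
  intro y
  exact Abelian.Ext.covariant_sequence_exact₃ M hS y rfl (h.elim _ _)

lemma ev_bij_top [IsNoetherianRing B] (M : ModuleCat.{u} B) [Module.Finite B M] (n : ℕ)
    (h : ∀ X, Subsingleton (Abelian.Ext.{u} M X (n+1))) (X : ModuleCat.{u} B) :
    Function.Bijective (ev M n X) := by
  have surj : ∀ X, Function.Surjective (ev M n X) := by
    intro X y
    obtain ⟨z, rfl⟩ := post_surj M (omegaSC_shortExact X) n (h _) y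
    obtain ⟨w, rfl⟩ := (ev_bij ((ffun B).obj X) n M).2 z
    exact ⟨_, (LinearMap.congr_fun (ev_post M n (omegaSC X).g) w).symm⟩
  refine LinearMap.bijective_of_surjective_of_bijective_of_right_exact
    (LinearMap.lTensor _ (omegaSC X).f.hom) (LinearMap.lTensor _ (omegaSC X).g.hom)
    (post M n (omegaSC X).f) (post M n (omegaSC X).g)
    (ev M n _) (ev M n _) (ev M n X) (ev_post _ _ _) (ev_post _ _ _) ?_ ?_ ?_ ?_ ?_ ?_
  · refine lTensor_exact _ ?_ (fpi_surj X)
    exact (ShortComplex.ShortExact.moduleCat_exact_iff_function_exact _).1 (omegaSC_shortExact X).exact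
  · exact post_exact₂ M (omegaSC_shortExact X) n
  · exact surj _
  · exact ev_bij ((ffun B).obj X) n M
  · exact LinearMap.lTensor_surjective _ (fpi_surj X)
  · exact post_surj M (omegaSC_shortExact X) n (h _)

/-- Eilenberg-Watts -/
noncomputable def ewIso [IsNoetherianRing B] (M : ModuleCat.{u} B) [Module.Finite B M] (n : ℕ)
    (h : ∀ X, Subsingleton (Abelian.Ext.{u} M X (n+1))) : 
    tensorLeft (ModuleCat.of B (Abelian.Ext.{u} M (ModuleCat.of B B) n)) ≅ extFun M n :=
  NatIso.ofComponents (fun X => (LinearEquiv.ofBijective (ev M n X) (ev_bij_top M n h X)).toModuleIso)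
    (fun {X Y} g => by
      ext x
      exact (LinearMap.congr_fun (ev_post M n g) x).symm)

end P4b
end VdB

namespace VdB
open CategoryTheory.Limits
open scoped TensorProduct
section P4c
variable {A B : Type u} [CommRing A] [CommRing B] (φ : A →+* B) (ψ : B →+* A)
variable [Module B A]

section
variable (hψ : ∀ (b : B) (a : A), b • a = ψ b * a)
variable {E X T U : Type u} [AddCommGroup E] [AddCommGroup X] [AddCommGroup T] [AddCommGroup U]
  [Module B E] [Module A E] [Module B X] [Module B T] [Module A T] [Module B U] [Module A U]
variable (hE : ∀ (a : A) (e : E), a • e = φ a • e) (hT : ∀ (a : A) (e : T), a • e = φ a • e)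
  (hU : ∀ (a : A) (e : U), a • e = φ a • e)
  (hEψ : ∀ (b : B) (e : E), b • e = φ (ψ b) • e)
variable (τ : A ⊗[B] X ≃ₗ[B] T) (υ : E ⊗[B] X ≃ₗ[B] U)

/-- a ↦ φ a • n -/
def actMap : E →ₗ[B] A →ₗ[B] E := LinearMap.mk₂ B (fun n a => φ a • n)
  (fun n n' a => smul_add _ _ _) (fun b n a => smul_comm _ _ _)
  (fun n a a' => by rw [map_add, add_smul])
  (fun b n a => by rw [hψ, map_mul, mul_smul, ← hEψ])

noncomputable def fwd : E ⊗[A] T →ₗ[A] U := TensorProduct.lift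
  (LinearMap.mk₂ A (fun n t => υ ((actMap φ ψ hψ hEψ n).rTensor X (τ.symm t)))
    (fun n n' t => by simp)
    (fun a n t => by
      rw [hE, map_smul, LinearMap.rTensor_smul, LinearMap.smul_apply, map_smul, hU])
    (fun n t t' => by simp)
    (fun a n t => by rw [hT, map_smul, map_smul, map_smul, hU]))

lemma fwd_tmul (n : E) (a : A) (x : X) : fwd φ ψ hψ hE hT hU hEψ τ υ (n ⊗ₜ τ (a ⊗ₜ x)) =
    υ ((φ a • n) ⊗ₜ x) := by
  simp [fwd, actMap]

lemma fwd_bij (hr : ∀ a, ψ (φ a) = a) : Function.Bijective (fwd φ ψ hψ hE hT hU hEψ τ υ) := by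
  let G : E ⊗[B] X →+ E ⊗[A] T := TensorProduct.liftAddHom
    { toFun := fun n => 
        { toFun := fun x => n ⊗ₜ τ (1 ⊗ₜ x)
          map_zero' := by simp
          map_add' := fun x y => by simp [TensorProduct.tmul_add] }
      map_zero' := by ext; simp
      map_add' := fun x y => by ext; simp [TensorProduct.add_tmul] }
    (fun b n x => by
      change (b • n) ⊗ₜ[A] τ (1 ⊗ₜ x) = n ⊗ₜ[A] τ (1 ⊗ₜ (b • x))
      rw [hEψ, ← hE, TensorProduct.smul_tmul, hT, ← map_smul, ← TensorProduct.smul_tmul,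
        ← TensorProduct.smul_tmul']
      rw [TensorProduct.smul_tmul', TensorProduct.smul_tmul', hψ, hψ, hr])
  have hG : ∀ n x, G (n ⊗ₜ x) = n ⊗ₜ τ (1 ⊗ₜ x) := fun n x => rfl
  refine Function.bijective_iff_has_inverse.2 ⟨fun u => G (υ.symm u), ?_, ?_⟩
  · intro z
    induction z with
    | zero => simp
    | add x y hx hy => dsimp only at hx hy; simp only [map_add]; rw [hx, hy]
    | tmul n t =>
      obtain ⟨w, rfl⟩ := τ.surjective t
      induction w with
      | zero => simp
      | add x y hx hy => dsimp only at hx hy; simp only [map_add, TensorProduct.tmul_add]; rw [hx, hy]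
      | tmul a x =>
        dsimp only
        rw [fwd_tmul, LinearEquiv.symm_apply_apply, hG, ← hE, TensorProduct.smul_tmul, hT, ← map_smul,
          TensorProduct.smul_tmul', hψ, hr, mul_one]
  · intro z
    obtain ⟨w, rfl⟩ := υ.surjective z
    dsimp only
    rw [LinearEquiv.symm_apply_apply]
    induction w with
    | zero => simp
    | add x y hx hy => simp only [map_add]; rw [hx, hy]
    | tmul a x => rw [hG, fwd_tmul, map_one, one_smul]

lemma fwd_nat {X' T' U' : Type u} [AddCommGroup X'] [AddCommGroup T'] [AddCommGroup U']
    [Module B X'] [Module B T'] [Module A T'] [Module B U'] [Module A U']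
    (hT' : ∀ (a : A) (e : T'), a • e = φ a • e)
    (hU' : ∀ (a : A) (e : U'), a • e = φ a • e)
    (τ' : A ⊗[B] X' ≃ₗ[B] T') (υ' : E ⊗[B] X' ≃ₗ[B] U') (g : X →ₗ[B] X')
    (t : T →ₗ[A] T') (ht : ∀ z, t (τ z) = τ' (g.lTensor A z))
    (v : U →ₗ[A] U') (hv : ∀ z, v (υ z) = υ' (g.lTensor E z)) (z : E ⊗[A] T) :
    fwd φ ψ hψ hE hT' hU' hEψ τ' υ' (t.lTensor E z) = v (fwd φ ψ hψ hE hT hU hEψ τ υ z) := by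
  induction z with
  | zero => simp
  | add x y hx hy => simp only [map_add]; rw [hx, hy]
  | tmul n t =>
    obtain ⟨w, rfl⟩ := τ.surjective t
    induction w with
    | zero => simp
    | add x y hx hy => simp only [map_add, TensorProduct.tmul_add] at *; rw [hx, hy]
    | tmul a x =>
      rw [fwd_tmul, LinearMap.lTensor_tmul, ht, LinearMap.lTensor_tmul, fwd_tmul, hv,
        LinearMap.lTensor_tmul]

end

/-- base change iso -/
noncomputable def tIso (hψ : ∀ (b : B) (a : A), b • a = ψ b * a) (hr : ∀ a, ψ (φ a) = a)
    (E : ModuleCat.{u} B) (hEψ : ∀ (b : B) (e : E), b • e = φ (ψ b) • e) :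
    (tensorLeft (ModuleCat.of B A) ⋙ ModuleCat.restrictScalars φ) ⋙
      tensorLeft ((ModuleCat.restrictScalars φ).obj E) ≅ 
    tensorLeft E ⋙ ModuleCat.restrictScalars φ :=
  NatIso.ofComponents (fun X => (LinearEquiv.ofBijective
    (fwd φ ψ (E := (ModuleCat.restrictScalars φ).obj E) (X := X)
      (T := ((ModuleCat.restrictScalars φ).obj ((ModuleCat.of B A) ⊗ X)))
      (U := ((ModuleCat.restrictScalars φ).obj (E ⊗ X)))
      hψ (fun a e => rfl) (fun a e => rfl) (fun a e => rfl) hEψ (LinearEquiv.refl B (A ⊗[B] X)) (LinearEquiv.refl B (E ⊗[B] X)))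
    (fwd_bij φ ψ hψ _ _ _ _ _ _ hr)).toModuleIso)
    (fun {X Y} g => by
      ext z
      exact fwd_nat φ ψ (E := (ModuleCat.restrictScalars φ).obj E) (X := X)
        (T := ((ModuleCat.restrictScalars φ).obj ((ModuleCat.of B A) ⊗ X)))
        (U := ((ModuleCat.restrictScalars φ).obj (E ⊗ X))) (X' := Y)
        (T' := ((ModuleCat.restrictScalars φ).obj ((ModuleCat.of B A) ⊗ Y)))
        (U' := ((ModuleCat.restrictScalars φ).obj (E ⊗ Y))) hψ
        (fun a e => rfl) (fun a e => rfl) (fun a e => rfl) hEψ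
        (LinearEquiv.refl B (A ⊗[B] X)) (LinearEquiv.refl B (E ⊗[B] X))
        (fun a e => rfl) (fun a e => rfl)
        (LinearEquiv.refl B (A ⊗[B] Y)) (LinearEquiv.refl B (E ⊗[B] Y)) g.hom
        (((tensorLeft (ModuleCat.of B A) ⋙ ModuleCat.restrictScalars φ).map g).hom) (fun z => rfl)
        ((tensorLeft E ⋙ ModuleCat.restrictScalars φ).map g).hom (fun z => rfl) z)

end P4c
end VdB

namespace VdB
open CategoryTheory.Limits
open scoped TensorProduct
section P5a
open Abelian

lemma transfer_vanish {B C : Type u} [CommRing B] [CommRing C] (f : B →+* C) (hf : f.Flat)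
    (Y : ModuleCat.{u} C) (j : ℕ) : ∀ (M : ModuleCat.{u} B)
    (_ : HasProjectiveDimensionLT ((ModuleCat.extendScalars.{u,u,u} f).obj M) j),
    Subsingleton (Ext.{u} M ((ModuleCat.restrictScalars f).obj Y) j) := by
  have adj := ModuleCat.extendRestrictScalarsAdj.{u,u,u} f
  have := ModuleCat.preservesFiniteLimits_extendScalars_of_flat.{u} hf
  have := adj.leftAdjoint_preservesColimits
  induction j with
  | zero =>
    intro M h
    have hz := isZero_of_hasProjectiveDimensionLT_zero ((ModuleCat.extendScalars.{u,u,u} f).obj M)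
    have : Subsingleton (M ⟶ (ModuleCat.restrictScalars f).obj Y) :=
      (adj.homEquiv M Y).symm.subsingleton_congr.2 ⟨fun a b => hz.eq_of_src a b⟩
    exact Ext.homEquiv₀.subsingleton_congr.2 this
  | succ j ih =>
    intro M h
    let S : ShortComplex (ModuleCat.{u} B) := ModuleCat.projectiveShortComplex M
    have hS : S.ShortExact := ModuleCat.shortExact_projectiveShortComplex M
    have hP : Projective S.X₂ := inferInstance
    have hS' := hS.map_of_exact (ModuleCat.extendScalars.{u,u,u} f)
    have hP' : Projective ((ModuleCat.extendScalars.{u,u,u} f).obj S.X₂) := adj.map_projective _ hP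
    refine ⟨fun a b => ?_⟩
    suffices ∀ a : Ext.{u} M ((ModuleCat.restrictScalars f).obj Y) (j+1), a = 0 by
      rw [this a, this b]
    intro a
    obtain ⟨y, hy⟩ := Ext.contravariant_sequence_exact₃ hS ((ModuleCat.restrictScalars f).obj Y) a
      (Ext.eq_zero_of_projective _) (add_comm 1 j)
    cases j with
    | succ j =>
      have h1 := (hS'.hasProjectiveDimensionLT_X₃_iff j hP').1 h
      have := ih S.X₁ h1
      rw [← hy, Subsingleton.elim y 0, Ext.comp_zero]
    | zero =>
      obtain ⟨y, rfl⟩ := (Ext.mk₀_bijective _ _).2 y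
      have h1 : Projective (S.map (ModuleCat.extendScalars.{u,u,u} f)).X₃ :=
        projective_iff_hasProjectiveDimensionLT_one.2 h
      let σ := hS'.splittingOfProjective
      let r : (ModuleCat.extendScalars.{u,u,u} f).obj S.X₂ ⟶ (ModuleCat.extendScalars.{u,u,u} f).obj S.X₁ := σ.r
      have hr : (ModuleCat.extendScalars.{u,u,u} f).map S.f ≫ r = 𝟙 _ := σ.f_r
      let y' : (ModuleCat.extendScalars.{u,u,u} f).obj S.X₁ ⟶ Y := (adj.homEquiv _ _).symm y
      let w : S.X₂ ⟶ (ModuleCat.restrictScalars f).obj Y := adj.homEquiv _ _ (r ≫ y')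
      have : S.f ≫ w = y := by
        rw [← adj.homEquiv_naturality_left]
        rw [reassoc_of% hr]
        simp [y']
      rw [← hy, ← this, ← Ext.mk₀_comp_mk₀, ← Ext.comp_assoc_of_second_deg_zero,
        ShortComplex.ShortExact.extClass_comp, Ext.zero_comp]

end P5a
end VdB

namespace VdB
open CategoryTheory.Limits
open scoped TensorProduct
section P5b
open Abelian
variable {B : Type u} [CommRing B]

/-- connecting map -/
noncomputable def dlt (M : ModuleCat.{u} B) {S : ShortComplex (ModuleCat.{u} B)} (hS : S.ShortExact)
    (j : ℕ) : Ext.{u} M S.X₃ j →ₗ[B] Ext.{u} M S.X₁ (j+1) where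
  toFun x := x.comp hS.extClass rfl
  map_add' _ _ := Ext.add_comp _ _ _ _
  map_smul' _ _ := Ext.smul_comp _ _ _ _

lemma rees_step0 (M : ModuleCat.{u} B) {S : ShortComplex (ModuleCat.{u} B)} (hS : S.ShortExact)
    (h0 : ∀ j (x : Ext.{u} M S.X₁ j), post M j S.f x = 0) : Subsingleton (Ext.{u} M S.X₁ 0) := by
  refine subsingleton_of_forall_eq 0 (fun x => ?_)
  obtain ⟨x, rfl⟩ := (Ext.mk₀_bijective _ _).2 x
  have := h0 0 (Ext.mk₀ x)
  rw [post_apply, Ext.mk₀_comp_mk₀, ← Ext.mk₀_zero] at this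
  have := (Ext.mk₀_bijective _ _).1 this
  have hm := hS.mono_f
  rw [zero_of_comp_mono S.f this, Ext.mk₀_zero]

lemma rees_step1 (M : ModuleCat.{u} B) {S : ShortComplex (ModuleCat.{u} B)} (hS : S.ShortExact)
    (h0 : ∀ j (x : Ext.{u} M S.X₁ j), post M j S.f x = 0) (j : ℕ)
    (h : Subsingleton (Ext.{u} M S.X₃ j)) : Subsingleton (Ext.{u} M S.X₁ (j+1)) := by
  refine subsingleton_of_forall_eq 0 (fun x => ?_)
  obtain ⟨y, rfl⟩ := Ext.covariant_sequence_exact₁ M hS x (h0 _ _) rfl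
  rw [h.elim y 0, Ext.zero_comp]

lemma rees_step2 (M : ModuleCat.{u} B) {S : ShortComplex (ModuleCat.{u} B)} (hS : S.ShortExact)
    (h0 : ∀ j (x : Ext.{u} M S.X₁ j), post M j S.f x = 0) (j : ℕ)
    (h : Subsingleton (Ext.{u} M S.X₂ j)) :
    Nonempty (Ext.{u} M S.X₁ (j+1) ≃ₗ[B] Ext.{u} M S.X₃ j) := by
  refine ⟨(LinearEquiv.ofBijective (dlt M hS j) ⟨?_, ?_⟩).symm⟩
  · rw [injective_iff_map_eq_zero]
    intro y hy
    obtain ⟨z, rfl⟩ := Ext.covariant_sequence_exact₃ M hS y rfl hy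
    rw [h.elim z 0, Ext.zero_comp]
  · intro x
    exact Ext.covariant_sequence_exact₁ M hS x (h0 _ _) rfl

lemma rees_s1 {C : Type u} [CommRing C] (f : B →+* C) (M : ModuleCat.{u} B) (rs : List C) :
    ∀ (Y : ModuleCat.{u} C) (_ : RingTheory.Sequence.IsWeaklyRegular Y rs)
    (_ : ∀ c ∈ rs, ∀ (Y : ModuleCat.{u} C) (j : ℕ) (x : Ext.{u} M ((ModuleCat.restrictScalars f).obj Y) j),
      post M j ((ModuleCat.restrictScalars f).map (c • 𝟙 Y)) x = 0),
    (∀ j < rs.length, Subsingleton (Ext.{u} M ((ModuleCat.restrictScalars f).obj Y) j)) ∧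
    Nonempty (Ext.{u} M ((ModuleCat.restrictScalars f).obj Y) rs.length ≃ₗ[B]
      Ext.{u} M ((ModuleCat.restrictScalars f).obj (ModuleCat.of C
        (Y ⧸ (Ideal.ofList rs • ⊤ : Submodule C Y)))) 0) := by
  induction rs with
  | nil =>
    intro Y _ _
    refine ⟨fun j h => absurd h (Nat.not_lt_zero _), ?_⟩
    let e : Y ≅ ModuleCat.of C (Y ⧸ (Ideal.ofList ([] : List C) • ⊤ : Submodule C Y)) :=
      (Submodule.quotEquivOfEqBot (Ideal.ofList ([] : List C) • ⊤ : Submodule C Y) (by rw [Ideal.ofList_nil, Submodule.bot_smul])).symm.toModuleIso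
    exact ⟨((extFun M 0).mapIso ((ModuleCat.restrictScalars f).mapIso e)).toLinearEquiv⟩
  | cons c rs ih =>
    intro Y hreg h0
    rw [RingTheory.Sequence.isWeaklyRegular_cons_iff] at hreg
    have hS := hreg.1.smulShortComplex_shortExact.map_of_exact (ModuleCat.restrictScalars f)
    have h0' : ∀ j (x : Ext.{u} M ((ModuleCat.restrictScalars f).obj Y) j), post M j ((ModuleCat.restrictScalars f).map (c • 𝟙 Y)) x = 0 :=
      h0 c (by simp) Y
    obtain ⟨h1, ⟨e⟩⟩ := ih (ModuleCat.of C (QuotSMulTop c Y)) hreg.2 (fun c' hc' => h0 c' (by simp [hc']))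
    have hlt : ∀ j < (c :: rs).length, Subsingleton (Ext.{u} M ((ModuleCat.restrictScalars f).obj Y) j) := by
      intro j hj
      cases j with
      | zero => exact rees_step0 M hS h0'
      | succ j => exact rees_step1 M hS h0' j (h1 j (by simpa using hj))
    refine ⟨hlt, ?_⟩
    obtain ⟨e'⟩ := rees_step2 M hS h0' rs.length (hlt _ (by simp))
    let e2 : ModuleCat.of C (QuotSMulTop c Y ⧸ (Ideal.ofList rs • ⊤ : Submodule C (QuotSMulTop c Y))) ≅
       ModuleCat.of C (Y ⧸ (Ideal.ofList (c :: rs) • ⊤ : Submodule C Y)) :=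
      (Submodule.quotOfListConsSMulTopEquivQuotSMulTopInner Y c rs).symm.toModuleIso
    exact ⟨(e'.trans e).trans ((extFun M 0).mapIso ((ModuleCat.restrictScalars f).mapIso e2)).toLinearEquiv⟩

end P5b
end VdB

namespace VdB
open CategoryTheory.Limits
open scoped TensorProduct
section P5c
open Abelian

lemma smul_ext_zero {B : Type u} [CommRing B] {M X : ModuleCat.{u} B} (b : B)
    (hb : ∀ m : M, b • m = 0) (j : ℕ) (x : Ext.{u} M X j) : b • x = 0 := by
  have h : b • 𝟙 M = 0 := by ext m; exact hb m
  have h2 : (Ext.mk₀ (b • 𝟙 M)).comp x (zero_add j) = b • x := by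
    rw [Ext.mk₀_smul, Ext.smul_comp, Ext.mk₀_id_comp]
  rw [← h2, h, Ext.mk₀_zero, Ext.zero_comp]

lemma post_unit_smul {B C : Type u} [CommRing B] [CommRing C] (f : B →+* C) (M : ModuleCat.{u} B)
    (c t : C) (b : B) (hc : c = t * f b) (hb : ∀ m : M, b • m = 0)
    (Y : ModuleCat.{u} C) (j : ℕ) (x : Ext.{u} M ((ModuleCat.restrictScalars f).obj Y) j) :
      post M j ((ModuleCat.restrictScalars f).map (c • 𝟙 Y)) x = 0 := by
  have h1 : (ModuleCat.restrictScalars f).map (c • 𝟙 Y) = 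
      (b • 𝟙 ((ModuleCat.restrictScalars f).obj Y)) ≫ (ModuleCat.restrictScalars f).map (t • 𝟙 Y) := by
    ext y
    subst hc
    exact mul_smul t (f b) (y : Y)
  have h2 : post M j (b • 𝟙 ((ModuleCat.restrictScalars f).obj Y)) x = 0 := by
    rw [post_apply, Ext.mk₀_smul, Ext.comp_smul, Ext.comp_mk₀_id, smul_ext_zero b hb]
  rw [h1, ← post_post, h2, map_zero]

/-- Hom from a cyclic algebra -/
lemma hom_equiv {A B Q : Type u} [CommRing A] [CommRing B] [CommRing Q] [Algebra B A]
    (hs : Function.Surjective (algebraMap B A)) (k : B →+* Q) (a : A →+* Q)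
    (hk : ∀ b, a (algebraMap B A b) = k b) :
    Nonempty ((A →ₗ[B] (ModuleCat.restrictScalars k).obj (ModuleCat.of Q Q)) ≃ₗ[B]
      (ModuleCat.restrictScalars k).obj (ModuleCat.of Q Q)) := by
  let ev1 : (A →ₗ[B] (ModuleCat.restrictScalars k).obj (ModuleCat.of Q Q)) →ₗ[B]
      (ModuleCat.restrictScalars k).obj (ModuleCat.of Q Q) :=
    LinearMap.applyₗ (1 : A)
  refine ⟨LinearEquiv.ofBijective ev1 ⟨?_, ?_⟩⟩
  · intro x y hxy
    ext z
    obtain ⟨b, rfl⟩ := hs z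
    rw [Algebra.algebraMap_eq_smul_one, map_smul, map_smul]
    exact congrArg _ hxy
  · intro x
    let x' : Q := x
    refine ⟨{ toFun := fun z => (a z * x' : Q), map_add' := ?_, map_smul' := ?_ }, ?_⟩
    · intro y z
      change a (y + z) * x' = a y * x' + a z * x'
      rw [map_add, add_mul]
    · intro b z
      change a (b • z) * x' = k b * (a z * x')
      rw [Algebra.smul_def, map_mul, hk, mul_assoc]
    · change a 1 * x' = x'
      rw [map_one, one_mul]

lemma quot_iso {C Q : Type u} [CommRing C] [CommRing Q] (g : C →+* Q)
    (hg : Function.Surjective g) (I : Ideal C) (hker : RingHom.ker g = I) :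
    Nonempty (ModuleCat.of C (C ⧸ (I • ⊤ : Submodule C C)) ≅ 
      (ModuleCat.restrictScalars g).obj (ModuleCat.of Q Q)) := by
  let l : C →ₗ[C] (ModuleCat.restrictScalars g).obj (ModuleCat.of Q Q) :=
    { toFun := fun c => (g c : Q), map_add' := map_add g, map_smul' := map_mul g }
  have hl : Function.Surjective l := hg
  have hk : (I • ⊤ : Submodule C C) = LinearMap.ker l := by
    rw [← hker]
    simp only [smul_eq_mul, Ideal.mul_top]
    rfl
  exact ⟨((Submodule.quotEquivOfEq _ _ hk).trans (l.quotKerEquivOfSurjective hl)).toModuleIso⟩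

lemma restr_comp {B C Q : Type u} [CommRing B] [CommRing C] [CommRing Q] (f : B →+* C) (g : C →+* Q) :
    Nonempty ((ModuleCat.restrictScalars f).obj ((ModuleCat.restrictScalars g).obj (ModuleCat.of Q Q)) ≅
      (ModuleCat.restrictScalars (g.comp f)).obj (ModuleCat.of Q Q)) :=
  ⟨(ModuleCat.restrictScalarsComp.{u} f g).symm.app (ModuleCat.of Q Q)⟩

end P5c
end VdB

namespace VdB
open CategoryTheory.Limits
open scoped TensorProduct
section P5d
open Abelian

lemma base_iso {A B C Q : Type u} [CommRing A] [CommRing B] [CommRing C] [CommRing Q] [Algebra B A]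
    (S : Submonoid B) (f : B →+* C) (g : C →+* Q) (a : A →+* Q)
    (hk : ∀ b, a (algebraMap B A b) = g (f b))
    (hC : @IsLocalization _ _ S C _ f.toAlgebra)
    (hQ : @IsLocalization _ _ (Algebra.algebraMapSubmonoid A S) Q _ a.toAlgebra) :
    Nonempty ((ModuleCat.extendScalars.{u,u,u} f).obj (ModuleCat.of B A) ≅
      (ModuleCat.restrictScalars g).obj (ModuleCat.of Q Q)) := by
  letI := f.toAlgebra
  letI := a.toAlgebra
  letI := g.toAlgebra
  letI : Algebra B Q := (g.comp f).toAlgebra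
  have : IsScalarTower B C Q := IsScalarTower.of_algebraMap_eq fun _ => rfl
  have : IsScalarTower B A Q := IsScalarTower.of_algebraMap_eq fun b => (hk b).symm
  have h1 : IsLocalizedModule S (IsScalarTower.toAlgHom B A Q).toLinearMap :=
    isLocalizedModule_iff_isLocalization.2 hQ
  have h2 : IsBaseChange C (IsScalarTower.toAlgHom B A Q).toLinearMap :=
    (isLocalizedModule_iff_isBaseChange S C _).1 h1
  exact ⟨h2.equiv.toModuleIso⟩

lemma local_ext {A B C Q : Type u} [CommRing A] [CommRing B] [CommRing C] [CommRing Q] [Algebra B A]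
    [IsNoetherianRing C] [IsLocalRing C] (hs : Function.Surjective (algebraMap B A))
    (S : Submonoid B) (f : B →+* C) (g : C →+* Q) (a : A →+* Q)
    (hk : ∀ b, a (algebraMap B A b) = g (f b))
    (hC : @IsLocalization _ _ S C _ f.toAlgebra)
    (hQ : @IsLocalization _ _ (Algebra.algebraMapSubmonoid A S) Q _ a.toAlgebra)
    (hg : Function.Surjective g) (rs : List C) (reg : RingTheory.Sequence.IsRegular C rs)
    (hker : RingHom.ker g = Ideal.ofList rs) :
    (∀ j ≠ rs.length, Subsingleton (Ext.{u} (ModuleCat.of B A) 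
        ((ModuleCat.restrictScalars f).obj (ModuleCat.of C C)) j)) ∧
    Nonempty (Ext.{u} (ModuleCat.of B A) 
        ((ModuleCat.restrictScalars f).obj (ModuleCat.of C C)) rs.length ≃ₗ[B]
      (ModuleCat.restrictScalars (g.comp f)).obj (ModuleCat.of Q Q)) := by
  have h0 : ∀ c ∈ rs, ∀ (Y : ModuleCat.{u} C) (j : ℕ) (x : Ext.{u} (ModuleCat.of B A)
      ((ModuleCat.restrictScalars f).obj Y) j),
      post (ModuleCat.of B A) j ((ModuleCat.restrictScalars f).map (c • 𝟙 Y)) x = 0 := by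
    intro c hc
    have hc' : g c = 0 := by
      rw [← RingHom.mem_ker, hker]
      exact Ideal.subset_span hc
    letI := f.toAlgebra
    letI := a.toAlgebra
    obtain ⟨⟨b, s⟩, hbs⟩ := IsLocalization.surj S c
    have hbs' : c * f s = f b := hbs
    have h1 : a (algebraMap B A b) = 0 := by rw [hk, ← hbs', map_mul, hc', zero_mul]
    obtain ⟨⟨t, ht⟩, h2⟩ := (IsLocalization.map_eq_zero_iff (Algebra.algebraMapSubmonoid A S) Q _).1 h1
    obtain ⟨t, ht', rfl⟩ := ht
    obtain ⟨v, hv⟩ := (IsLocalization.map_units C (⟨t, ht'⟩ * s : S)).exists_left_inv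
    have hv' : v * f (t * s) = 1 := hv
    refine post_unit_smul f _ c v (t * b) ?_ ?_
    · rw [map_mul, ← hbs']
      calc c = (v * f (t * s)) * c := by rw [hv', one_mul]
        _ = _ := by rw [map_mul]; ring
    · intro m
      change (t * b) • (m : A) = 0
      rw [Algebra.smul_def, map_mul]
      rw [show algebraMap B A t * algebraMap B A b = 0 from h2, zero_mul]
  obtain ⟨h1, ⟨e⟩⟩ := rees_s1 f (ModuleCat.of B A) rs (ModuleCat.of C C) reg.toIsWeaklyRegular h0
  obtain ⟨e1⟩ := quot_iso g hg (Ideal.ofList rs) hker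
  constructor
  · intro j hj
    rcases lt_or_gt_of_ne hj with hj | hj
    · exact h1 j hj
    · apply transfer_vanish
      · letI := f.toAlgebra
        exact IsLocalization.flat C S
      · obtain ⟨e2⟩ := base_iso S f g a hk hC hQ
        have hpd := ModuleCat.projectiveDimension_quotient_eq_length rs reg
        have e3 : ModuleCat.of C (C ⧸ (Ideal.ofList rs • ⊤ : Submodule C C)) ≅ 
           ModuleCat.of C (Shrink.{u} (C ⧸ Ideal.ofList rs)) :=
          ((Submodule.quotEquivOfEq _ _ (by simp)).trans (Shrink.linearEquiv.{u} C _).symm).toModuleIso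
        have : HasProjectiveDimensionLT (ModuleCat.of C (Shrink.{u} (C ⧸ Ideal.ofList rs))) j := by
          rw [← projectiveDimension_lt_iff]
          rw [hpd]
          exact_mod_cast hj
        exact hasProjectiveDimensionLT_of_iso ((e3.symm.trans e1).trans e2.symm) j
  · obtain ⟨e2⟩ := restr_comp f g
    obtain ⟨e3⟩ := hom_equiv hs (g.comp f) a hk
    exact ⟨(e.trans ((extFun (ModuleCat.of B A) 0).mapIso
      (((ModuleCat.restrictScalars f).mapIso e1).trans e2)).toLinearEquiv).trans
        ((ext0 (ModuleCat.of B A) _).trans e3)⟩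

end P5d
end VdB

namespace VdB
open CategoryTheory.Limits
open scoped TensorProduct
section P5e

lemma rank_one {A P : Type u} [CommRing A] [AddCommGroup P] [Module A P] (q : PrimeSpectrum A)
    (l : P →ₗ[A] Localization.AtPrime q.asIdeal) [IsLocalizedModule q.asIdeal.primeCompl l] :
    Module.rankAtStalk P q = 1 := by
  have e := IsLocalizedModule.mapEquiv q.asIdeal.primeCompl 
    (LocalizedModule.mkLinearMap q.asIdeal.primeCompl P) l (Localization.AtPrime q.asIdeal)
    (LinearEquiv.refl A P)
  rw [Module.rankAtStalk, e.finrank_eq, Module.finrank_self]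

lemma dual_stalk {A P : Type u} [CommRing A] [AddCommGroup P] [Module A P] 
    [Module.FinitePresentation A P] (q : PrimeSpectrum A)
    (l : P →ₗ[A] Localization.AtPrime q.asIdeal) [IsLocalizedModule q.asIdeal.primeCompl l] :
    ∃ l' : Module.Dual A P →ₗ[A] Localization.AtPrime q.asIdeal, 
      IsLocalizedModule q.asIdeal.primeCompl l' := by
  let S := q.asIdeal.primeCompl
  let k := IsLocalizedModule.map S l (Algebra.linearMap A (Localization.AtPrime q.asIdeal))
  have hk : IsLocalizedModule S k := inferInstance
  let e1 := LinearMap.extendScalarsOfIsLocalizationEquiv S (Localization.AtPrime q.asIdeal)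
    (M := Localization.AtPrime q.asIdeal) (N := Localization.AtPrime q.asIdeal)
  let e2 := LinearMap.ringLmapEquivSelf (Localization.AtPrime q.asIdeal) (Localization.AtPrime q.asIdeal) (Localization.AtPrime q.asIdeal)
  let e := (e1.trans e2).restrictScalars A
  exact ⟨e.toLinearMap ∘ₗ k, IsLocalizedModule.of_linearEquiv S k e⟩

lemma contract_unit {A P : Type u} [CommRing A] [AddCommGroup P] [Module A P] 
    [Module.FinitePresentation A P] (q : PrimeSpectrum A)
    (l : P →ₗ[A] Localization.AtPrime q.asIdeal) [IsLocalizedModule q.asIdeal.primeCompl l] :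
    ∃ (f : Module.Dual A P) (x : P), f x ∉ q.asIdeal := by
  let S := q.asIdeal.primeCompl
  let k := IsLocalizedModule.map S l (Algebra.linearMap A (Localization.AtPrime q.asIdeal))
  have hk : IsLocalizedModule S k := inferInstance
  obtain ⟨⟨f, s⟩, hf⟩ := IsLocalizedModule.surj S k LinearMap.id
  obtain ⟨⟨x, t⟩, hx⟩ := IsLocalizedModule.surj S l 1
  refine ⟨f, x, ?_⟩
  have h1 : algebraMap A (Localization.AtPrime q.asIdeal) (f x) = s • l x := by
    have := IsLocalizedModule.map_apply S l (Algebra.linearMap A (Localization.AtPrime q.asIdeal)) f x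
    refine Eq.trans this.symm ?_
    exact (LinearMap.congr_fun hf (l x)).symm
  dsimp only at hx
  rw [← hx, Submonoid.smul_def, Submonoid.smul_def, smul_smul, Algebra.smul_def, mul_one] at h1
  intro hmem
  have hu : IsUnit (algebraMap A (Localization.AtPrime q.asIdeal) (s * t)) :=
    IsLocalization.map_units _ (s * t : S)
  rw [← h1] at hu
  exact (IsLocalization.AtPrime.isUnit_to_map_iff _ q.asIdeal _).1 hu hmem

lemma invertible_of_stalk {A P : Type u} [CommRing A] [Nontrivial A] [AddCommGroup P] [Module A P] 
    [Module.FinitePresentation A P]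
    (h : ∀ q : PrimeSpectrum A, ∃ l : P →ₗ[A] Localization.AtPrime q.asIdeal,
      IsLocalizedModule q.asIdeal.primeCompl l) : Module.Invertible A P := by
  have proj : Module.Projective A P := by
    rw [← Module.freeLocus_eq_univ_iff, Set.eq_univ_iff_forall]
    intro q
    obtain ⟨l, hl⟩ := h q
    rw [Module.mem_freeLocus_of_isLocalization q (Localization.AtPrime q.asIdeal) _ l]
    infer_instance
  refine ⟨?_⟩
  have hsurj : Function.Surjective (contractLeft A P) := by
    rw [← LinearMap.range_eq_top]
    by_contra hne
    obtain ⟨m, hm, hle⟩ := Ideal.exists_le_maximal (LinearMap.range (contractLeft A P)) hne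
    obtain ⟨l, hl⟩ := h ⟨m, hm.isPrime⟩
    obtain ⟨f, x, hfx⟩ := contract_unit _ l
    exact hfx (hle ⟨f ⊗ₜ x, by simp⟩)
  have hf1 : Module.Finite A (Module.Dual A P) := inferInstance
  have hf2 : Module.Flat A (Module.Dual A P) := inferInstance
  refine Module.bijective_of_surjective_of_rankAtStalk_eq (R := A) (M := Module.Dual A P ⊗[A] P)
    (N := A) (φ := contractLeft A P) hsurj ?_
  intro m hm
  rw [Module.rankAtStalk_self, Module.rankAtStalk_tensorProduct]
  obtain ⟨l, hl⟩ := h ⟨m, hm.isPrime⟩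
  obtain ⟨l', hl'⟩ := dual_stalk _ l
  simp [rank_one _ l, rank_one _ l']

end P5e
end VdB

namespace VdB
open CategoryTheory.Limits
open scoped TensorProduct
section P5f

lemma global_abs {A : Type u} [CommRing A] [Nontrivial A] [IsNoetherianRing A]
    [ConnectedSpace (PrimeSpectrum A)] (N : ℕ → Type u) [∀ j, AddCommGroup (N j)]
    [∀ j, Module A (N j)] [∀ j, Module.Finite A (N j)] (d : ℕ) (hd : ∀ j, d < j → Subsingleton (N j))
    (h : ∀ q : PrimeSpectrum A, ∃ r, (∀ j ≠ r, ∀ e : N j, ∃ s ∉ q.asIdeal, s • e = 0) ∧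
      ∃ l : N r →ₗ[A] Localization.AtPrime q.asIdeal, IsLocalizedModule q.asIdeal.primeCompl l) :
    ∃ n, (∀ j ≠ n, Subsingleton (N j)) ∧ Module.Invertible A (N n) := by
  choose r h1 h2 using h
  have hns : ∀ q j, j ≠ r q → q ∉ Module.support A (N j) := by
    intro q j hj
    rw [Module.notMem_support_iff']
    exact h1 q j hj
  have hs : ∀ q, q ∈ Module.support A (N (r q)) := by
    intro q
    by_contra hq
    rw [Module.notMem_support_iff'] at hq
    obtain ⟨l, hl⟩ := h2 q
    obtain ⟨⟨x, s⟩, hx⟩ := IsLocalizedModule.surj q.asIdeal.primeCompl l 1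
    obtain ⟨t, ht, htx⟩ := hq x
    have h3 : (t * s : A) • (1 : Localization.AtPrime q.asIdeal) = 0 := by
      rw [mul_smul]
      change t • (s • (1 : Localization.AtPrime q.asIdeal)) = 0
      rw [hx, ← map_smul]
      dsimp only
      rw [htx, map_zero]
    rw [Algebra.smul_def, mul_one] at h3
    have hu : IsUnit (algebraMap A (Localization.AtPrime q.asIdeal) (t * s)) :=
      IsLocalization.map_units (M := q.asIdeal.primeCompl) _ (⟨t, ht⟩ * s)
    rw [h3] at hu
    exact not_isUnit_zero hu
  obtain ⟨q0⟩ : Nonempty (PrimeSpectrum A) := inferInstance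
  have hcl : ∀ j, IsClosed (Module.support A (N j)) := fun j => Module.isClosed_support
  have hclopen : IsClopen (Module.support A (N (r q0))) := by
    refine ⟨hcl _, ?_⟩
    have : (Module.support A (N (r q0)))ᶜ = ⋃ j ∈ (Finset.range (d+1)).erase (r q0), Module.support A (N j) := by
      ext q
      simp only [Set.mem_compl_iff, Set.mem_iUnion, Finset.mem_erase, Finset.mem_range, exists_prop]
      constructor
      · intro hq
        refine ⟨r q, ⟨?_, ?_⟩, hs q⟩
        · intro he
          rw [← he] at hq
          exact hq (hs q)
        · by_contra hlt
          have := hd (r q) (by omega)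
          have h5 := hs q
          rw [Module.support_eq_empty] at h5
          exact h5
      · rintro ⟨j, ⟨hj, -⟩, hq⟩ hq'
        have e1 : j = r q := by
          by_contra hh
          exact hns q j hh hq
        have e2 : r q0 = r q := by
          by_contra hh
          exact hns q _ hh hq'
        exact hj (e1.trans e2.symm)
    rw [← isClosed_compl_iff, this]
    exact Set.Finite.isClosed_biUnion (Finset.finite_toSet _) (fun j _ => hcl j)
  have huniv := hclopen.eq_univ ⟨q0, hs q0⟩
  have hr : ∀ q, r q = r q0 := by
    intro q
    by_contra hh
    exact hns q (r q0) (Ne.symm hh) (huniv ▸ Set.mem_univ q)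
  refine ⟨r q0, ?_, ?_⟩
  · intro j hj
    rw [← Module.support_eq_empty_iff (R := A), Set.eq_empty_iff_forall_notMem]
    intro q
    exact hns q j (by rw [hr]; exact hj)
  · have : Module.FinitePresentation A (N (r q0)) := Module.finitePresentation_of_finite _ _
    apply invertible_of_stalk
    intro q
    have := h2 q
    rw [hr q] at this
    exact this

lemma loc_tensor {B C : Type u} [CommRing B] [CommRing C] (S : Submonoid B) (f : B →+* C)
    (hC : @IsLocalization _ _ S C _ f.toAlgebra) (E : Type u) [AddCommGroup E] [Module B E] :
    ∃ l : E →ₗ[B] E ⊗[B] ((ModuleCat.restrictScalars f).obj (ModuleCat.of C C)), 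
      IsLocalizedModule S l := by
  let _ := f.toAlgebra
  have h1 : IsLocalizedModule S (TensorProduct.mk B C E 1) :=
    (isLocalizedModule_iff_isBaseChange S C _).2 (TensorProduct.isBaseChange B E C)
  exact ⟨_, IsLocalizedModule.of_linearEquiv S (TensorProduct.mk B C E 1) (TensorProduct.comm B C E)⟩

lemma loc_descend {A B E : Type u} [CommRing A] [CommRing B] [AddCommGroup E]
    [Module B E] [Module A E] (ψ : B →+* A) (hs : Function.Surjective ψ)
    (hE : ∀ (b : B) (e : E), b • e = ψ b • e) (q : Ideal A) [q.IsPrime]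
    (k : B →+* Localization.AtPrime q) (hk : ∀ b, algebraMap A (Localization.AtPrime q) (ψ b) = k b)
    (S : Submonoid B) (hS : ∀ b, b ∈ S ↔ ψ b ∉ q)
    (l : E →ₗ[B] (ModuleCat.restrictScalars k).obj (ModuleCat.of _ (Localization.AtPrime q)))
    (hl : IsLocalizedModule S l) :
    ∃ l' : E →ₗ[A] Localization.AtPrime q, IsLocalizedModule q.primeCompl l' := by
  let l0 : E → Localization.AtPrime q := l
  have hl0 : ∀ b e, l0 (b • e) = k b * l0 e := fun b e => map_smul l b e
  let l' : E →ₗ[A] Localization.AtPrime q := 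
    { toFun := l0
      map_add' := fun x y => map_add l x y
      map_smul' := fun a e => by
        obtain ⟨b, rfl⟩ := hs a
        rw [← hE, hl0, ← hk, RingHom.id_apply, Algebra.smul_def] }
  refine ⟨l', ⟨?_, ?_, ?_⟩⟩
  · intro x
    exact (IsLocalization.map_units (Localization.AtPrime q) x).map
      (Algebra.lmul A (Localization.AtPrime q)) |> fun h => by
        convert h using 1
        ext z
        simp [Algebra.smul_def]
  · intro y
    obtain ⟨⟨x, s⟩, hx⟩ := hl.surj y
    refine ⟨⟨x, ⟨ψ s, (hS _).1 s.2⟩⟩, ?_⟩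
    change ψ s • y = l0 x
    rw [Algebra.smul_def, hk]
    exact hx
  · intro x y hxy
    obtain ⟨c, hc⟩ := hl.exists_of_eq (x₁ := x) (x₂ := y) hxy
    refine ⟨⟨ψ c, (hS _).1 c.2⟩, ?_⟩
    change ψ c • x = ψ c • y
    rw [← hE, ← hE]
    exact hc

end P5f
end VdB

namespace VdB
open CategoryTheory.Limits
open scoped TensorProduct
section P5g
open Abelian

lemma flat_restr {B C : Type u} [CommRing B] [CommRing C] (S : Submonoid B) (f : B →+* C)
    (hC : @IsLocalization _ _ S C _ f.toAlgebra) :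
    Module.Flat B ((ModuleCat.restrictScalars f).obj (ModuleCat.of C C)) := by
  let _ := f.toAlgebra
  have := IsLocalization.flat C S
  exact this

lemma stalk_glue {A B C Q : Type u} [CommRing A] [CommRing B] [CommRing C] [CommRing Q] [Algebra B A]
    [IsNoetherianRing B] [IsNoetherianRing C] [IsLocalRing C]
    (hs : Function.Surjective (algebraMap B A))
    (S : Submonoid B) (f : B →+* C) (g : C →+* Q) (a : A →+* Q)
    (hk : ∀ b, a (algebraMap B A b) = g (f b))
    (hC : @IsLocalization _ _ S C _ f.toAlgebra)
    (hQ : @IsLocalization _ _ (Algebra.algebraMapSubmonoid A S) Q _ a.toAlgebra)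
    (hg : Function.Surjective g) (rs : List C) (reg : RingTheory.Sequence.IsRegular C rs)
    (hker : RingHom.ker g = Ideal.ofList rs) :
    (∀ j ≠ rs.length, ∀ e : Ext.{u} (ModuleCat.of B A) (ModuleCat.of B B) j, ∃ s ∈ S, s • e = 0) ∧
    ∃ l : Ext.{u} (ModuleCat.of B A) (ModuleCat.of B B) rs.length →ₗ[B] 
      (ModuleCat.restrictScalars (g.comp f)).obj (ModuleCat.of Q Q), IsLocalizedModule S l := by
  have hfin : Module.Finite B (ModuleCat.of B A) := Module.Finite.of_surjective (Algebra.linearMap B A) hs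
  obtain ⟨h1, ⟨h2⟩⟩ := local_ext hs S f g a hk hC hQ hg rs reg hker
  have hfl := flat_restr S f hC
  have key : ∀ j, ∃ l : Ext.{u} (ModuleCat.of B A) (ModuleCat.of B B) j →ₗ[B] 
      Ext.{u} (ModuleCat.of B A) ((ModuleCat.restrictScalars f).obj (ModuleCat.of C C)) j,
      IsLocalizedModule S l := by
    intro j
    obtain ⟨l, hl⟩ := loc_tensor S f hC (Ext.{u} (ModuleCat.of B A) (ModuleCat.of B B) j)
    exact ⟨_, IsLocalizedModule.of_linearEquiv S l (LinearEquiv.ofBijective _ 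
      (ev_bij ((ModuleCat.restrictScalars f).obj (ModuleCat.of C C)) j (ModuleCat.of B A)))⟩
  constructor
  · intro j hj e
    obtain ⟨l, hl⟩ := key j
    have := h1 j hj
    obtain ⟨c, hc⟩ := IsLocalizedModule.exists_of_eq (S := S) (f := l) (x₁ := e) (x₂ := 0) (Subsingleton.elim _ _)
    exact ⟨c, c.2, hc.trans (smul_zero _)⟩
  · obtain ⟨l, hl⟩ := key rs.length
    exact ⟨_, IsLocalizedModule.of_linearEquiv S l h2⟩

lemma loc_self {B C : Type u} [CommRing B] [CommRing C] [Algebra B C] (S : Submonoid B)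
    [h : IsLocalization S C] : @IsLocalization _ _ S C _ (algebraMap B C).toAlgebra := by
  have e : (algebraMap B C).toAlgebra = ‹Algebra B C› := by
    apply Algebra.algebra_ext
    intro r
    rfl
  rw [e]
  exact h

lemma stalk {A B : Type u} [CommRing A] [CommRing B] [Algebra B A]
    [IsNoetherianRing B] (hs : Function.Surjective (algebraMap B A))
    (q : Ideal A) [q.IsPrime] (p : Ideal B) [p.IsPrime] (hp : p = q.comap (algebraMap B A))
    (hlci : ∃ rs : List (Localization.AtPrime p),
      RingTheory.Sequence.IsRegular (Localization.AtPrime p) rs ∧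
      RingHom.ker (Localization.localRingHom p q (algebraMap B A) hp) = Ideal.ofList rs)
    (N : ℕ → Type u) [∀ j, AddCommGroup (N j)] [∀ j, Module A (N j)] 
    (eqv : ∀ j, Ext.{u} (ModuleCat.of B A) (ModuleCat.of B B) j ≃+ N j)
    (he : ∀ j (b : B) e, eqv j (b • e) = algebraMap B A b • eqv j e) :
    ∃ r, (∀ j ≠ r, ∀ e : N j, ∃ s ∉ q, s • e = 0) ∧
      ∃ l : N r →ₗ[A] Localization.AtPrime q, IsLocalizedModule q.primeCompl l := by
  obtain ⟨rs, reg, hker⟩ := hlci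
  have hS : ∀ b, b ∈ p.primeCompl ↔ algebraMap B A b ∉ q := by
    intro b; subst hp; rfl
  have hsub : Algebra.algebraMapSubmonoid A p.primeCompl = q.primeCompl := by
    ext x
    constructor
    · rintro ⟨b, hb, rfl⟩
      exact (hS b).1 hb
    · intro hx
      obtain ⟨b, rfl⟩ := hs x
      exact ⟨b, (hS b).2 hx, rfl⟩
  have hQ : @IsLocalization _ _ (Algebra.algebraMapSubmonoid A p.primeCompl) (Localization.AtPrime q) _
      (algebraMap A (Localization.AtPrime q)).toAlgebra := by
    rw [hsub]; exact loc_self _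
  have hg : Function.Surjective (Localization.localRingHom p q (algebraMap B A) hp) := by
    subst hp
    exact RingHom.surjective_localRingHom_of_surjective _ hs q
  have : IsNoetherianRing (Localization.AtPrime p) := IsLocalization.isNoetherianRing p.primeCompl _ inferInstance
  have hk : ∀ b, algebraMap A (Localization.AtPrime q) (algebraMap B A b) =
      Localization.localRingHom p q (algebraMap B A) hp (algebraMap B (Localization.AtPrime p) b) := fun b =>
    (Localization.localRingHom_to_map _ _ _ _ _).symm
  obtain ⟨h1, l, hl⟩ := stalk_glue hs p.primeCompl (algebraMap B (Localization.AtPrime p))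
    (Localization.localRingHom p q (algebraMap B A) hp) (algebraMap A (Localization.AtPrime q)) hk
    (loc_self _) hQ hg rs reg hker
  refine ⟨rs.length, ?_, ?_⟩
  · intro j hj e
    obtain ⟨s, hs1, hs2⟩ := h1 j hj ((eqv j).symm e)
    refine ⟨algebraMap B A s, (hS s).1 hs1, ?_⟩
    have := he j s ((eqv j).symm e)
    rw [hs2, map_zero, AddEquiv.apply_symm_apply] at this
    exact this.symm
  · let _ : ∀ j, Module B (N j) := fun j => Module.compHom (N j) (algebraMap B A)
    let el : Ext.{u} (ModuleCat.of B A) (ModuleCat.of B B) rs.length ≃ₗ[B] N rs.length :=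
      { eqv rs.length with map_smul' := fun b e => he _ b e }
    refine loc_descend (algebraMap B A) hs (fun b e => rfl) q _ hk p.primeCompl hS (l ∘ₗ el.symm.toLinearMap) ?_
    exact IsLocalizedModule.of_linearEquiv_right p.primeCompl l el.symm

lemma ext_glob {A B : Type u} [CommRing A] [CommRing B] [Algebra B A] [IsNoetherianRing A]
    [IsNoetherianRing B] [Nontrivial A] [ConnectedSpace (PrimeSpectrum A)]
    (hs : Function.Surjective (algebraMap B A)) (φ : A →+* B) (hr : ∀ a, algebraMap B A (φ a) = a)
    (hlci : ∀ (q : Ideal A) (hq : q.IsPrime), 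
      haveI : (q.comap (algebraMap B A)).IsPrime := hq.comap _
      ∃ rs : List (Localization.AtPrime (q.comap (algebraMap B A))),
      RingTheory.Sequence.IsRegular (Localization.AtPrime (q.comap (algebraMap B A))) rs ∧
      RingHom.ker (Localization.localRingHom (q.comap (algebraMap B A)) q (algebraMap B A) rfl) = Ideal.ofList rs)
    (d : ℕ) (hd : ∀ j, d < j → ∀ X, Subsingleton (Ext.{u} (ModuleCat.of B A) X j)) :
    (∀ j (b : B) (e : Ext.{u} (ModuleCat.of B A) (ModuleCat.of B B) j),
      b • e = φ (algebraMap B A b) • e) ∧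
    ∃ n, (∀ j ≠ n, Subsingleton (Ext.{u} (ModuleCat.of B A) (ModuleCat.of B B) j)) ∧
      Module.Invertible A ((ModuleCat.restrictScalars φ).obj
        (ModuleCat.of B (Ext.{u} (ModuleCat.of B A) (ModuleCat.of B B) n))) := by
  have hE : ∀ j (b : B) (e : Ext.{u} (ModuleCat.of B A) (ModuleCat.of B B) j),
      b • e = φ (algebraMap B A b) • e := by
    intro j b e
    rw [← sub_eq_zero, ← sub_smul]
    apply smul_ext_zero
    intro m
    change (b - φ (algebraMap B A b)) • (m : A) = 0
    rw [Algebra.smul_def, map_sub, hr, sub_self, zero_mul]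
  refine ⟨hE, ?_⟩
  have hfin : Module.Finite B (ModuleCat.of B A) := Module.Finite.of_surjective (Algebra.linearMap B A) hs
  have hfB : ∀ j, Module.Finite B (Ext.{u} (ModuleCat.of B A) (ModuleCat.of B B) j) := fun j => inferInstance
  let N : ℕ → Type u := fun j => (ModuleCat.restrictScalars φ).obj
        (ModuleCat.of B (Ext.{u} (ModuleCat.of B A) (ModuleCat.of B B) j))
  let _ : ∀ j, AddCommGroup (N j) := fun j => inferInstanceAs (AddCommGroup ((ModuleCat.restrictScalars φ).obj
        (ModuleCat.of B (Ext.{u} (ModuleCat.of B A) (ModuleCat.of B B) j))))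
  let _ : ∀ j, Module A (N j) := fun j => inferInstanceAs (Module A ((ModuleCat.restrictScalars φ).obj
        (ModuleCat.of B (Ext.{u} (ModuleCat.of B A) (ModuleCat.of B B) j))))
  have hfA : ∀ j, Module.Finite A (N j) := by
    intro j
    let _ : Module B (N j) := inferInstanceAs (Module B (Ext.{u} (ModuleCat.of B A) (ModuleCat.of B B) j))
    have : IsScalarTower B A (N j) := ⟨fun b a e => by
      change φ (b • a) • (show Ext.{u} (ModuleCat.of B A) (ModuleCat.of B B) j from e) = b • φ a • (show Ext.{u} (ModuleCat.of B A) (ModuleCat.of B B) j from e)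
      rw [Algebra.smul_def, map_mul, mul_smul, ← hE]⟩
    have : Module.Finite B (N j) := hfB j
    exact Module.Finite.of_restrictScalars_finite B A (N j)
  obtain ⟨n, h1, h2⟩ := global_abs N d (fun j hj => hd j hj _) (fun q =>
    haveI : (q.asIdeal.comap (algebraMap B A)).IsPrime := q.2.comap _
    stalk hs q.asIdeal (q.asIdeal.comap (algebraMap B A)) rfl (hlci q.asIdeal q.2) N
      (fun j => AddEquiv.refl _) (fun j b e => hE j b e))
  exact ⟨n, h1, h2⟩

end P5g
end VdB

namespace VdB
open CategoryTheory.Limits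
open scoped TensorProduct
section P6

lemma assemble {A B : Type u} [CommRing A] [CommRing B] [IsNoetherianRing B] [Algebra B A]
    (hs : Function.Surjective (algebraMap B A)) (φ : A →+* B) (hr : ∀ a, algebraMap B A (φ a) = a)
    (d : ℕ) (hd : ∀ j, d < j → ∀ X, Subsingleton (Abelian.Ext.{u} (ModuleCat.of B A) X j)) (n : ℕ)
    (hE : ∀ (b : B) (e : Abelian.Ext.{u} (ModuleCat.of B A) (ModuleCat.of B B) n),
      b • e = φ (algebraMap B A b) • e)
    (hv : ∀ j ≠ n, Subsingleton (Abelian.Ext.{u} (ModuleCat.of B A) (ModuleCat.of B B) j))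
    (N : ModuleCat.{u} A) (hN : N = (ModuleCat.restrictScalars φ).obj
        (ModuleCat.of B (Abelian.Ext.{u} (ModuleCat.of B A) (ModuleCat.of B B) n)))
    [Module.Flat A N] :
    (∀ k m, m + k = n → Nonempty (((Ext B (ModuleCat.{u} B) m).obj (Opposite.op (ModuleCat.of B A))) ⋙
      ModuleCat.restrictScalars φ ≅ (((Tor (ModuleCat.{u} B) k).obj (ModuleCat.of B A)) ⋙
      ModuleCat.restrictScalars φ) ⋙ tensorLeft N)) ∧
    (∀ k, n < k → ∀ X, Subsingleton (((((Tor (ModuleCat.{u} B) k).obj (ModuleCat.of B A)) ⋙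
      ModuleCat.restrictScalars φ) ⋙ tensorLeft N).obj X)) ∧
    (∀ k, n < k → ∀ X, Subsingleton ((((Ext B (ModuleCat.{u} B) k).obj (Opposite.op (ModuleCat.of B A))) ⋙
      ModuleCat.restrictScalars φ).obj X)) := by
  have hfin : Module.Finite B (ModuleCat.of B A) := Module.Finite.of_surjective (Algebra.linearMap B A) hs
  have hab : ∀ j, n < j → ∀ X, Subsingleton (Abelian.Ext.{u} (ModuleCat.of B A) X j) := fun j hj X =>
    vanish_above (ModuleCat.of B A) n d hd (fun j hj => hv j hj.ne') j hj X
  have tstep : ∀ k, KerStep ((((Tor (ModuleCat.{u} B) (k+1)).obj (ModuleCat.of B A)) ⋙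
      ModuleCat.restrictScalars φ) ⋙ tensorLeft N) ((((Tor (ModuleCat.{u} B) k).obj (ModuleCat.of B A)) ⋙
      ModuleCat.restrictScalars φ) ⋙ tensorLeft N) := fun k =>
    ((kerStep_tor (ModuleCat.of B A) k).restrict φ).tensor N
  have key : ∀ k m, m + k = n → Nonempty ((extFun (ModuleCat.of B A) m) ⋙
      ModuleCat.restrictScalars φ ≅ (((Tor (ModuleCat.{u} B) k).obj (ModuleCat.of B A)) ⋙
      ModuleCat.restrictScalars φ) ⋙ tensorLeft N) := by
    intro k
    induction k with
    | zero =>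
      rintro m rfl
      subst hN
      exact ⟨Functor.isoWhiskerRight (ewIso (ModuleCat.of B A) m (hab _ (by omega))).symm _ ≪≫ 
        (tIso φ (algebraMap B A) (fun b a => Algebra.smul_def b a) hr
          (ModuleCat.of B (Abelian.Ext.{u} (ModuleCat.of B A) (ModuleCat.of B B) m)) hE).symm ≪≫
        Functor.isoWhiskerRight (Functor.isoWhiskerRight (torZeroIso (ModuleCat.of B A)).symm _) _⟩
    | succ k ih =>
      intro m hm
      obtain ⟨e⟩ := ih (m+1) (by omega)
      refine KerStep.unique ((kerStep_ext (ModuleCat.of B A) m fun X => ?_).restrict φ) (tstep k) e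
      have := ffun_flat X
      exact ext_flat_vanish _ m (hv m (by omega)) _
  refine ⟨fun k m hm => ?_, ?_, ?_⟩
  · obtain ⟨e⟩ := key k m hm
    exact ⟨Functor.isoWhiskerRight (extIso (ModuleCat.of B A) m) _ ≪≫ e⟩
  · let Z : ModuleCat.{u} B ⥤ ModuleCat.{u} B := (Functor.const _).obj (ModuleCat.of B PUnit)
    have hZ : ∀ X, Subsingleton (Z.obj X) := fun X => inferInstanceAs (Subsingleton PUnit)
    have hZ' : ∀ X, Subsingleton ((Z ⋙ ModuleCat.restrictScalars φ).obj X) := hZ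
    intro k
    induction k with
    | zero => intro h; omega
    | succ k ih =>
      intro h
      rcases Nat.lt_or_ge n k with hk | hk
      · have h0 := ih hk
        obtain ⟨e⟩ := KerStep.unique (tstep k) (KerStep.of_zero hZ' (fun X => by
          have := h0 ((omega B).obj X)
          exact Function.injective_of_subsingleton _)) (Iso.refl _)
        exact fun X => subsingleton_of_iso e X (hZ' X)
      · obtain rfl : n = k := by omega
        obtain ⟨e0⟩ := key n 0 (by omega)
        obtain ⟨e⟩ := KerStep.unique (tstep n) ((kerStep_ext_zero (ModuleCat.of B A) hZ).restrict φ) e0.symm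
        exact fun X => subsingleton_of_iso e X (hZ' X)
  · intro k hk X
    exact subsingleton_of_iso (Functor.isoWhiskerRight (extIso (ModuleCat.of B A) k) (ModuleCat.restrictScalars φ)) X (hab k hk X)

end P6
end VdB

/-- **Van den Bergh duality for ring retractions, part 2.**
Let `φ : A →+* B`, `ψ : B →+* A` be homomorphisms of commutative noetherian rings with
`ψ ∘ φ = id` (a ring retraction).  Assume `B` is flat as an `A`-module via `φ`, the
surjection `ψ` is a local complete intersection, `A` is a perfect `B`-module via `ψ`, and
`A` is nonzero with connected spectrum.  Then there are `n : ℕ` and an invertible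
`A`-module `N̄` such that for every `B`-module `X` and every integer `i` there is an
isomorphism of `A`-modules `Ext^i_B(A, X) ≅ N̄ ⊗[A] Tor^B_{n-i}(A, X)`, natural in `X`
(with `Ext` and `Tor` in negative degrees interpreted as zero). -/
theorem vdb_duality_retraction_ext_tor
    {A B : Type u} [CommRing A] [CommRing B]
    [IsNoetherianRing A] [IsNoetherianRing B]
    (φ : A →+* B) (ψ : B →+* A) (hretract : ψ.comp φ = RingHom.id A)
    (hflat : letI := φ.toModule; Module.Flat A B)
    (hsurj : Function.Surjective ψ)
    (hlci : ψ.IsLocalCompleteIntersection)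
    (hperf : letI := ψ.toModule; Module.IsPerfect B A)
    (hnt : Nontrivial A)
    (hconn : ConnectedSpace (PrimeSpectrum A)) :
    ∃ (n : ℕ) (N : Type u) (_ : AddCommGroup N) (_ : Module A N),
      Module.IsInvertible A N ∧
      ∀ i : ℤ, Nonempty
        (extRetractFunctor φ ψ i ≅
          torRetractFunctor φ ψ ((n : ℤ) - i) ⋙ tensorLeft (ModuleCat.of A N)) := by
  have hr : ∀ a, ψ (φ a) = a := fun a => RingHom.congr_fun hretract a
  obtain ⟨d, hp⟩ := hperf
  letI : Algebra B A := ψ.toAlgebra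
  have hd : ∀ j, d < j → ∀ X, Subsingleton (Abelian.Ext.{u} (ModuleCat.of B A) X j) :=
    fun j hj X => VdB.perfect_vanish d A hp j hj X
  obtain ⟨hE, n, hv, hinv⟩ := VdB.ext_glob (A := A) (B := B) hsurj φ hr
    (fun q hq => hlci q hq) d hd
  let N : ModuleCat.{u} A := (ModuleCat.restrictScalars φ).obj
    (ModuleCat.of B (Abelian.Ext.{u} (ModuleCat.of B A) (ModuleCat.of B B) n))
  haveI : Module.Invertible A N := hinv
  haveI : Module.Flat A N := inferInstance
  obtain ⟨h1, h2, h3⟩ := VdB.assemble (A := A) (B := B) hsurj φ hr d hd n (hE n) hv N rfl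
  refine ⟨n, N, inferInstance, inferInstance, ⟨Module.Dual A N, inferInstance, inferInstance,
    ⟨(TensorProduct.comm A N (Module.Dual A N)).trans (Module.Invertible.linearEquiv A N)⟩⟩, ?_⟩
  intro i
  have hP : ∀ X : ModuleCat.{u} B, Subsingleton
      (((Functor.const (ModuleCat.{u} B)).obj (ModuleCat.of A PUnit.{u+1})).obj X) :=
    fun X => inferInstanceAs (Subsingleton PUnit)
  have hPN : ∀ X : ModuleCat.{u} B, Subsingleton
      ((((Functor.const (ModuleCat.{u} B)).obj (ModuleCat.of A PUnit.{u+1})) ⋙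
        tensorLeft (ModuleCat.of A N)).obj X) := fun X =>
    inferInstanceAs (Subsingleton (TensorProduct A N PUnit.{u+1}))
  unfold extRetractFunctor torRetractFunctor
  rcases lt_or_ge i 0 with hi | hi
  · rw [if_neg (by omega), if_pos (by omega)]
    exact VdB.iso_of_zero hP (h2 _ (by omega))
  · rw [if_pos hi]
    rcases le_or_gt i n with hin | hin
    · rw [if_pos (by omega)]
      exact h1 _ _ (by omega)
    · rw [if_neg (by omega)]
      exact VdB.iso_of_zero (h3 _ (by omega)) hPN
end
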